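/- arXiv:1511.06967 — 2 statements merged into one kernel-verified Lean document; each statement's English description precedes it below -/
import Mathlib

section
/- Let (A, m) be a Henselian local ring, f₁,...,f_r ∈ A[Y₁,...,Y_n] with r ≤ n, and ŷ ∈ Â^n with f(ŷ) = 0 such that some r×r minor M of the Jacobian matrix (∂f_i/∂Y_j) evaluated at ŷ is a unit in Â. If ŷ can be approximated modulo mÂ by an element of A^n at which M is a unit, then there exists y ∈ A^n with f(y) = 0 and y ≡ ŷ mod m Â. -/
open IsLocalRing

/-- The `m`-adic completion of a local ring. -/
noncomputable abbrev AdicCompl (A : Type*) [CommRing A] [IsLocalRing A] :=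
  AdicCompletion (maximalIdeal A) A


lemma etale_away_jac {A : Type*} [CommRing A] {r : ℕ} (g : Fin r → MvPolynomial (Fin r) A) :
    Algebra.Etale A (Localization.Away (Ideal.Quotient.mk (Ideal.span (Set.range g))
      (Matrix.det (Matrix.of fun i j : Fin r => MvPolynomial.pderiv j (g i))))) := by
  set J := Ideal.Quotient.mk (Ideal.span (Set.range g))
      (Matrix.det (Matrix.of fun i j : Fin r => MvPolynomial.pderiv j (g i))) with hJ
  let P : Algebra.PreSubmersivePresentation A (MvPolynomial (Fin r) A ⧸ Ideal.span (Set.range g))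
    (Fin r) (Fin r) := Algebra.PreSubmersivePresentation.naive id Function.injective_id
  let L := Algebra.PreSubmersivePresentation.localizationAway (Localization.Away J) J
  have hP : P.jacobian = J := by
    rw [Algebra.PreSubmersivePresentation.jacobian_eq_jacobiMatrix_det, hJ,
      ← Matrix.det_transpose]
    have : P.jacobiMatrix.transpose =
        (Matrix.of fun i j : Fin r => MvPolynomial.pderiv j (g i)) := by
      ext1 i j
      rw [Matrix.transpose_apply]
      exact Algebra.PreSubmersivePresentation.jacobiMatrix_apply P j i
    rw [this]
    rw [Algebra.Generators.algebraMap_apply]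
    have h : MvPolynomial.aeval (R := A) P.val = Ideal.Quotient.mkₐ A (Ideal.span (Set.range g)) := by
      ext i
      simp [P]
    rw [h]; rfl
  let Q : Algebra.SubmersivePresentation A (Localization.Away J) (Unit ⊕ Fin r) (Unit ⊕ Fin r) :=
    { L.comp P with
      jacobian_isUnit := by
        change IsUnit (L.comp P).jacobian
        rw [Algebra.PreSubmersivePresentation.comp_jacobian_eq_jacobian_smul_jacobian, hP,
          Algebra.PreSubmersivePresentation.localizationAway_jacobian, Algebra.smul_def]
        exact (IsLocalization.Away.algebraMap_isUnit J).mul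
          (IsLocalization.Away.algebraMap_isUnit J) }
  rw [Algebra.Etale.iff_isStandardSmoothOfRelativeDimension_zero]
  exact Q.isStandardSmoothOfRelativeDimension (by simp [Algebra.Presentation.dimension])

lemma hensel_etale {A : Type*} [CommRing A] [IsLocalRing A] [HenselianLocalRing A]
    {T : Type*} [CommRing T] [Algebra A T] [Algebra.Etale A T]
    (φ : T →ₐ[A] ResidueField A) :
    ∃ ψ : T →ₐ[A] A, ∀ t, residue A (ψ t) = φ t := by
  let Q := RingHom.ker φ
  have : Q.IsPrime := RingHom.ker_isPrime φ
  have : Algebra.IsEtaleAt A Q :=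
    Algebra.FormallyEtale.comp A T (Localization.AtPrime Q)
  obtain ⟨f, hfQ, hf⟩ := Algebra.IsEtaleAt.exists_isStandardEtale (R := A) Q
  obtain ⟨P⟩ := hf.nonempty_standardEtalePresentation
  have hfu : IsUnit (φ f) := isUnit_iff_ne_zero.mpr fun h => hfQ h
  let φ' : Localization.Away f →ₐ[A] ResidueField A :=
    IsLocalization.Away.liftAlgHom f (f := φ) hfu
  have hφ' : ∀ t, φ' (algebraMap T _ t) = φ t := fun t => by simp [φ']
  have hx := P.hasMap.map φ'
  obtain ⟨a₀, ha₀⟩ := residue_surjective (φ' P.x)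
  have key : ∀ p : Polynomial A, residue A (p.eval a₀) = Polynomial.aeval (φ' P.x) p := by
    intro p
    rw [← ha₀, ← ResidueField.algebraMap_eq, Polynomial.aeval_algebraMap_apply,
      Polynomial.coe_aeval_eq_eval]
  obtain ⟨a, ha, haa⟩ := HenselianLocalRing.is_henselian P.f P.monic_f a₀
    (by rw [← residue_eq_zero_iff, key]; exact hx.1)
    (by
      by_contra h
      have h2 := (residue_eq_zero_iff _).mpr ((mem_maximalIdeal _).mpr h)
      rw [key] at h2
      exact hx.isUnit_derivative_f.ne_zero h2)
  have har : residue A a = φ' P.x := by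
    rw [← ha₀, ← sub_eq_zero, ← map_sub]; exact (residue_eq_zero_iff _).mpr haa
  have hm : P.HasMap a := by
    refine ⟨by rw [Polynomial.coe_aeval_eq_eval]; exact ha, ?_⟩
    by_contra h
    have h2 := (residue_eq_zero_iff _).mpr ((mem_maximalIdeal _).mpr h)
    rw [← ResidueField.algebraMap_eq, ← Polynomial.aeval_algebraMap_apply,
      ResidueField.algebraMap_eq, har] at h2
    exact hx.2.ne_zero h2
  have hcomp : (Algebra.ofId A (ResidueField A)).comp (P.lift a hm) =
      φ'.comp P.equivRing.symm.toAlgHom := by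
    apply StandardEtalePair.hom_ext
    simp
    exact har
  refine ⟨((P.lift a hm).comp P.equivRing.toAlgHom).comp
    (IsScalarTower.toAlgHom A T (Localization.Away f)), fun t => ?_⟩
  have := DFunLike.congr_fun hcomp (P.equivRing (algebraMap T _ t))
  simp [hφ'] at this
  exact this

lemma pderiv_aeval_subst {A : Type*} [CommRing A] {n r : ℕ} (ρ : Fin r → Fin n)
    (s : Fin n → MvPolynomial (Fin r) A)
    (hs : ∀ j k, MvPolynomial.pderiv j (s k) = if k = ρ j then 1 else 0) (j : Fin r)
    (p : MvPolynomial (Fin n) A) :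
    MvPolynomial.pderiv j (MvPolynomial.aeval s p) =
      MvPolynomial.aeval s (MvPolynomial.pderiv (ρ j) p) := by
  induction p using MvPolynomial.induction_on with
  | C a => simp [MvPolynomial.algebraMap_eq]
  | add p q hp hq => simp only [map_add, hp, hq]
  | mul_X p k hp =>
    simp only [map_mul, Derivation.leibniz, hp, MvPolynomial.aeval_X, hs, MvPolynomial.pderiv_X,
      smul_eq_mul, map_add, Pi.single_apply]
    split_ifs <;> simp

/-- Implicit Function Theorem step over a Henselian local ring: if `f₁,…,f_r` (`r ≤ n`) have
a formal solution `ŷ ∈ Â^n` at which some `r×r` minor `M` of the Jacobian is a unit, and `ŷ`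
can be approximated modulo `mÂ` by an element of `A^n` at which `M` is a unit, then there
exists `y ∈ A^n` with `f(y) = 0` and `y ≡ ŷ mod m Â`. -/
theorem henselian_implicit_function (A : Type*) [CommRing A] [IsLocalRing A]
    [IsNoetherianRing A] [HenselianLocalRing A]
    (n r : ℕ) (hr : r ≤ n) (f : Fin r → MvPolynomial (Fin n) A)
    (ρ : Fin r → Fin n) (hρ : Function.Injective ρ)
    (yh : Fin n → AdicCompl A) (hsol : ∀ i, MvPolynomial.aeval yh (f i) = 0)
    (hM : IsUnit (MvPolynomial.aeval yh
      (Matrix.det (Matrix.of fun i j : Fin r => MvPolynomial.pderiv (ρ j) (f i)))))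
    (happrox : ∃ y₀ : Fin n → A,
      (∀ j, algebraMap A (AdicCompl A) (y₀ j) - yh j ∈
        Ideal.map (algebraMap A (AdicCompl A)) (maximalIdeal A)) ∧
      IsUnit (MvPolynomial.aeval y₀
        (Matrix.det (Matrix.of fun i j : Fin r => MvPolynomial.pderiv (ρ j) (f i))))) :
    ∃ y : Fin n → A, (∀ i, MvPolynomial.aeval y (f i) = 0) ∧
      ∀ j, algebraMap A (AdicCompl A) (y j) - yh j ∈
        Ideal.map (algebraMap A (AdicCompl A)) (maximalIdeal A) := by
  classical
  obtain ⟨y₀, hy₀, hu⟩ := happrox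
  -- the reduction map from the completion to the residue field
  let e : AdicCompl A →ₐ[A] ResidueField A :=
    (Ideal.Quotient.factorₐ A (I := maximalIdeal A ^ 1) (J := maximalIdeal A) (by simp)).comp
      (AdicCompletion.evalₐ (maximalIdeal A) 1)
  have he : ∀ z ∈ Ideal.map (algebraMap A (AdicCompl A)) (maximalIdeal A), e z = 0 := by
    intro z hz
    have hle : Ideal.map (algebraMap A (AdicCompl A)) (maximalIdeal A) ≤ RingHom.ker e := by
      rw [Ideal.map_le_iff_le_comap]
      intro a ha
      rw [Ideal.mem_comap, RingHom.mem_ker, AlgHom.commutes, ResidueField.algebraMap_eq]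
      exact (residue_eq_zero_iff a).mpr ha
    exact hle hz
  have hey : ∀ j, e (yh j) = residue A (y₀ j) := by
    intro j
    have h := he _ (hy₀ j)
    rw [map_sub, AlgHom.commutes, ResidueField.algebraMap_eq, sub_eq_zero] at h
    exact h.symm
  have hres : ∀ p : MvPolynomial (Fin n) A,
      MvPolynomial.aeval (fun j => residue A (y₀ j)) p = residue A (MvPolynomial.aeval y₀ p) := by
    intro p
    exact MvPolynomial.aeval_algebraMap_apply (ResidueField A) y₀ p
  have hf0 : ∀ i, MvPolynomial.aeval (fun j => residue A (y₀ j)) (f i) = 0 := by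
    intro i
    have h := congrArg e (hsol i)
    rw [map_zero, ← AlgHom.comp_apply, MvPolynomial.comp_aeval] at h
    simpa only [hey] using h
  -- substitute the approximation for the variables outside the minor
  let s : Fin n → MvPolynomial (Fin r) A := fun k =>
    if h : ∃ i, ρ i = k then MvPolynomial.X h.choose else MvPolynomial.C (y₀ k)
  have hsρ : ∀ i, s (ρ i) = MvPolynomial.X i := by
    intro i
    have h : ∃ i', ρ i' = ρ i := ⟨i, rfl⟩
    simp only [s, dif_pos h, hρ h.choose_spec]
  have hsn : ∀ k, (¬ ∃ i, ρ i = k) → s k = MvPolynomial.C (y₀ k) := by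
    intro k h
    simp only [s, dif_neg h]
  have hsd : ∀ j k, MvPolynomial.pderiv j (s k) = if k = ρ j then 1 else 0 := by
    intro j k
    by_cases h : ∃ i, ρ i = k
    · obtain ⟨i, rfl⟩ := h
      rw [hsρ, MvPolynomial.pderiv_X, Pi.single_apply]
      simp only [hρ.eq_iff]
    · rw [hsn k h, MvPolynomial.pderiv_C, if_neg]
      rintro rfl
      exact h ⟨j, rfl⟩
  let g : Fin r → MvPolynomial (Fin r) A := fun i => MvPolynomial.aeval s (f i)
  let D := Matrix.det (Matrix.of fun i j : Fin r => MvPolynomial.pderiv j (g i))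
  have hD : D = MvPolynomial.aeval s
      (Matrix.det (Matrix.of fun i j : Fin r => MvPolynomial.pderiv (ρ j) (f i))) := by
    rw [AlgHom.map_det]
    refine congrArg Matrix.det ?_
    ext1 i j
    exact pderiv_aeval_subst ρ s hsd j (f i)
  let ev : MvPolynomial (Fin r) A →ₐ[A] ResidueField A :=
    MvPolynomial.aeval (fun j => residue A (y₀ (ρ j)))
  have hev : ∀ p : MvPolynomial (Fin n) A, ev (MvPolynomial.aeval s p) =
      MvPolynomial.aeval (fun j => residue A (y₀ j)) p := by
    intro p
    rw [← AlgHom.comp_apply, MvPolynomial.comp_aeval]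
    congr 2
    funext k
    by_cases h : ∃ i, ρ i = k
    · obtain ⟨i, rfl⟩ := h
      simp only [hsρ, ev, MvPolynomial.aeval_X]
    · simp only [hsn k h, ev, MvPolynomial.aeval_C, ResidueField.algebraMap_eq]
  let I : Ideal (MvPolynomial (Fin r) A) := Ideal.span (Set.range g)
  have hI : ∀ a ∈ I, ev a = 0 := by
    intro a ha
    have hle : I ≤ RingHom.ker ev := by
      rw [Ideal.span_le]
      rintro _ ⟨i, rfl⟩
      exact (hev (f i)).trans (hf0 i)
    exact hle ha
  let φ₀ : (MvPolynomial (Fin r) A ⧸ I) →ₐ[A] ResidueField A := Ideal.Quotient.liftₐ I ev hI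
  have hφ₀ : ∀ p, φ₀ (Ideal.Quotient.mk I p) = ev p := fun p => rfl
  have hDu : IsUnit (φ₀ (Ideal.Quotient.mk I D)) := by
    rw [hφ₀, hD, hev, hres]
    exact hu.map (residue A)
  have : Algebra.Etale A (Localization.Away (Ideal.Quotient.mk I D)) := etale_away_jac g
  let φ : Localization.Away (Ideal.Quotient.mk I D) →ₐ[A] ResidueField A :=
    IsLocalization.Away.liftAlgHom (Ideal.Quotient.mk I D) (f := φ₀) hDu
  obtain ⟨ψ, hψ⟩ := hensel_etale φ
  let π : MvPolynomial (Fin r) A →ₐ[A] A :=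
    (ψ.comp (IsScalarTower.toAlgHom A (MvPolynomial (Fin r) A ⧸ I) _)).comp
      (Ideal.Quotient.mkₐ A I)
  have hπ : ∀ p, residue A (π p) = ev p := by
    intro p
    refine (hψ _).trans ?_
    rw [← hφ₀]
    simp [φ]
  have hπg : ∀ i, π (g i) = 0 := by
    intro i
    have h0 : Ideal.Quotient.mkₐ A I (g i) = 0 :=
      Ideal.Quotient.eq_zero_iff_mem.mpr (Ideal.subset_span ⟨i, rfl⟩)
    simp only [π, AlgHom.comp_apply, h0, map_zero]
  have hys : ∀ k, π (s k) - y₀ k ∈ maximalIdeal A := by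
    intro k
    rw [← residue_eq_zero_iff, map_sub, hπ, sub_eq_zero]
    have h := hev (MvPolynomial.X k)
    simpa only [MvPolynomial.aeval_X] using h
  refine ⟨fun k => π (s k), fun i => ?_, fun j => ?_⟩
  · have h := hπg i
    simp only [g] at h
    rwa [← AlgHom.comp_apply, MvPolynomial.comp_aeval] at h
  · have h := Ideal.add_mem _ (Ideal.mem_map_of_mem (algebraMap A (AdicCompl A)) (hys j)) (hy₀ j)
    rwa [map_sub, sub_add_sub_cancel] at h
end

section
/- Let R be a regular local ring containing a field, and assume R is a filtered inductive limit of regular local rings R_i each essentially of finite type over the prime field. Then every finitely generated projective module over the polynomial ring R[T₁,...,T_n] is free. -/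
open IsLocalRing

universe u v

/-- A regular local ring: a Noetherian local ring whose maximal ideal can be generated by
`d` elements, where `d` is the Krull dimension. -/
def IsRegularLocal (R : Type*) [CommRing R] [IsLocalRing R] : Prop :=
  IsNoetherianRing R ∧ ∃ s : Finset R,
    Ideal.span (s : Set R) = maximalIdeal R ∧ (s.card : WithBot ℕ∞) = ringKrullDim R

set_option linter.unusedSectionVars false

namespace BQ

section Matrices

variable {R S : Type*} [CommRing R] [CommRing S]
variable {m n l : Type*} [Fintype m] [Fintype n] [Fintype l]
  [DecidableEq m] [DecidableEq n] [DecidableEq l]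

/-- Murray–von Neumann equivalence of square matrices. -/
def MvN (E : Matrix m m R) (F : Matrix n n R) : Prop :=
  ∃ (U : Matrix m n R) (V : Matrix n m R), U * V = E ∧ V * U = F

/-- A matrix whose image is free. -/
def Spl (E : Matrix m m R) : Prop :=
  ∃ (r : ℕ) (U : Matrix m (Fin r) R) (V : Matrix (Fin r) m R), U * V = E ∧ V * U = 1

theorem MvN.symm {E : Matrix m m R} {F : Matrix n n R} (h : MvN E F) : MvN F E := by
  obtain ⟨U, V, h1, h2⟩ := h
  exact ⟨V, U, h2, h1⟩

theorem MvN.refl {E : Matrix m m R} (h : E * E = E) : MvN E E := ⟨E, E, h, h⟩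

/-- normalised form -/
theorem MvN.norm {E : Matrix m m R} {F : Matrix n n R} (h : MvN E F) (hE : E * E = E)
    (hF : F * F = F) : ∃ (U : Matrix m n R) (V : Matrix n m R), U * V = E ∧ V * U = F ∧
      E * U = U ∧ U * F = U ∧ F * V = V ∧ V * E = V := by
  obtain ⟨U, V, h1, h2⟩ := h
  refine ⟨E * U * F, F * V * E, ?_, ?_, ?_, ?_, ?_, ?_⟩
  · calc E * U * F * (F * V * E) = E * U * (F * F) * V * E := by simp only [Matrix.mul_assoc]
      _ = E * (U * V) * (U * V) * E := by rw [hF, ← h2]; simp only [Matrix.mul_assoc]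
      _ = E := by simp only [h1, hE]
  · calc F * V * E * (E * U * F) = F * V * (E * E) * U * F := by simp only [Matrix.mul_assoc]
      _ = F * (V * U) * (V * U) * F := by rw [hE, ← h1]; simp only [Matrix.mul_assoc]
      _ = F := by simp only [h2, hF]
  · simp only [← Matrix.mul_assoc, hE]
  · simp only [Matrix.mul_assoc, hF]
  · simp only [← Matrix.mul_assoc, hF]
  · simp only [Matrix.mul_assoc, hE]

theorem MvN.trans {E : Matrix m m R} {F : Matrix n n R} {G : Matrix l l R}
    (h : MvN E F) (h' : MvN F G) (hE : E * E = E) (hF : F * F = F) (hG : G * G = G) :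
    MvN E G := by
  obtain ⟨U, V, h1, h2, h3, h4, h5, h6⟩ := h.norm hE hF
  obtain ⟨W, Z, g1, g2, g3, g4, g5, g6⟩ := h'.norm hF hG
  refine ⟨U * W, Z * V, ?_, ?_⟩
  · calc U * W * (Z * V) = U * (W * Z) * V := by simp only [Matrix.mul_assoc]
      _ = E := by rw [g1, h4, h1]
  · calc Z * V * (U * W) = Z * (V * U) * W := by simp only [Matrix.mul_assoc]
      _ = G := by rw [h2, g6, g2]

theorem MvN.map {E : Matrix m m R} {F : Matrix n n R} (h : MvN E F) (f : R →+* S) :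
    MvN (E.map f) (F.map f) := by
  obtain ⟨U, V, rfl, rfl⟩ := h
  exact ⟨U.map f, V.map f, Matrix.map_mul.symm, Matrix.map_mul.symm⟩

theorem Spl.map {E : Matrix m m R} (h : Spl E) (f : R →+* S) : Spl (E.map f) := by
  obtain ⟨r, U, V, rfl, h2⟩ := h
  refine ⟨r, U.map f, V.map f, Matrix.map_mul.symm, ?_⟩
  rw [← Matrix.map_mul, h2]; simp

theorem Spl.mvN {E : Matrix m m R} (h : Spl E) :
    ∃ r : ℕ, MvN E (1 : Matrix (Fin r) (Fin r) R) := by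
  obtain ⟨r, U, V, h⟩ := h
  exact ⟨r, U, V, h⟩

theorem MvN.spl {E : Matrix m m R} {F : Matrix n n R} (h : MvN E F) (hE : E * E = E)
    (hF : F * F = F) (h' : Spl F) : Spl E := by
  obtain ⟨r, h'⟩ := h'.mvN
  obtain ⟨U, V, h1, h2⟩ := h.trans h' hE hF (by simp)
  exact ⟨r, U, V, h1, h2⟩

theorem spl_of_fintype (k : Type*) [Fintype k] [DecidableEq k] {E : Matrix m m R}
    {U : Matrix m k R} {V : Matrix k m R} (h : U * V = E) (h' : V * U = 1) : Spl E := by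
  let e := Fintype.equivFin k
  refine ⟨Fintype.card k, U.submatrix id e.symm, V.submatrix e.symm id, ?_, ?_⟩
  · rw [Matrix.submatrix_mul_equiv, h]; simp
  · have := Matrix.submatrix_mul_equiv V U e.symm (Equiv.refl m) e.symm
    simp only [Equiv.coe_refl] at this
    rw [this, h']; simp

theorem map_idem {E : Matrix m m R} (h : E * E = E) (f : R →+* S) :
    E.map f * E.map f = E.map f := by rw [← Matrix.map_mul, h]

/-- projective-free rings: all idempotent matrices split -/
def PF (R : Type*) [CommRing R] : Prop :=
  ∀ (m : ℕ) (E : Matrix (Fin m) (Fin m) R), E * E = E → Spl E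

theorem mvN_reindex (e : m ≃ n) {E : Matrix m m R} (hE : E * E = E) :
    MvN E (E.submatrix e.symm e.symm) := by
  refine ⟨E.submatrix id e.symm, E.submatrix e.symm id, ?_, ?_⟩
  · rw [Matrix.submatrix_mul_equiv, hE]; simp
  · have := Matrix.submatrix_mul_equiv E E e.symm (Equiv.refl m) e.symm
    simp only [Equiv.coe_refl] at this
    rw [this, hE]

theorem PF.spl (h : PF R) {E : Matrix m m R} (hE : E * E = E) : Spl E := by
  let e := Fintype.equivFin m
  have hE' : E.submatrix e.symm e.symm * E.submatrix e.symm e.symm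
    = E.submatrix e.symm e.symm := by rw [Matrix.submatrix_mul_equiv, hE]
  exact (mvN_reindex e hE).spl hE hE' (h _ _ hE')

theorem PF.of_equiv (h : PF R) (e : R ≃+* S) : PF S := by
  intro m E hE
  have := (h m (E.map e.symm.toRingHom) (map_idem hE _)).map e.toRingHom
  have h2 : (E.map e.symm.toRingHom).map e.toRingHom = E := by
    ext i j; simp
  rwa [h2] at this

/-- Over a projective-free ring all finitely generated projective modules are free. -/
theorem PF.free (h : PF R) (P : Type*) [AddCommGroup P] [Module R P] [Module.Finite R P]
    [Module.Projective R P] : Module.Free R P := by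
  obtain ⟨k, f, hf⟩ := Module.Finite.exists_fin' R P
  obtain ⟨g, hg⟩ := Module.projective_lifting_property f LinearMap.id hf
  have hfg : ∀ x, f (g x) = x := fun x => by
    have := LinearMap.congr_fun hg x; simpa using this
  let E : Matrix (Fin k) (Fin k) R := LinearMap.toMatrix' (g ∘ₗ f)
  have hE : E * E = E := by
    rw [← LinearMap.toMatrix'_comp]
    congr 1
    ext x : 1
    ext; simp [hfg]
  obtain ⟨r, U, V, h1, h2⟩ := h k E hE
  have h3 : U.toLin' ∘ₗ V.toLin' = g ∘ₗ f := by
    rw [← Matrix.toLin'_mul, h1]; simp [E]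
  have h4 : V.toLin' ∘ₗ U.toLin' = LinearMap.id := by
    rw [← Matrix.toLin'_mul, h2]; simp
  have h3' : ∀ x, U.toLin' (V.toLin' x) = g (f x) := fun x => LinearMap.congr_fun h3 x
  have h4' : ∀ x, V.toLin' (U.toLin' x) = x := fun x => LinearMap.congr_fun h4 x
  refine Module.Free.of_equiv (LinearEquiv.ofLinearMap (f ∘ₗ U.toLin') (V.toLin' ∘ₗ g) ?_ ?_ :
    (Fin r → R) ≃ₗ[R] P)
  · ext x; simp only [LinearMap.comp_apply, h3', hfg, LinearMap.id_apply]
  · refine LinearMap.ext fun x => ?_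
    simp only [LinearMap.comp_apply, LinearMap.id_apply]
    rw [← h3', h4', h4']

theorem PF.of_free (h : ∀ (k : ℕ) (P : Submodule R (Fin k → R)) [Module.Finite R P]
    [Module.Projective R P], Module.Free R P) : PF R := by
  rcases subsingleton_or_nontrivial R with hR | hR
  · intro m E hE
    exact ⟨0, 0, 0, Subsingleton.elim _ _, Subsingleton.elim _ _⟩
  intro k E hE
  let f := E.toLin'
  have hff : ∀ x, f (f x) = f x := fun x => by
    have := congrArg (fun M => Matrix.toLin' M x) hE
    simpa [Matrix.toLin'_mul, f] using this
  let P := LinearMap.range f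
  have : Module.Finite R P := inferInstance
  have hp : Module.Projective R P := by
    refine Module.Projective.of_split P.subtype f.rangeRestrict ?_
    ext ⟨x, y, rfl⟩ : 2
    simp [hff]
  have := h k P
  let b := Module.finBasis R P
  let e := b.equivFun
  refine ⟨Module.finrank R P, LinearMap.toMatrix' (P.subtype ∘ₗ e.symm.toLinearMap),
    LinearMap.toMatrix' (e.toLinearMap ∘ₗ f.rangeRestrict), ?_, ?_⟩
  · rw [← LinearMap.toMatrix'_comp]
    have : (P.subtype ∘ₗ e.symm.toLinearMap) ∘ₗ e.toLinearMap ∘ₗ f.rangeRestrict = f := by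
      refine LinearMap.ext fun x => ?_
      simp
    rw [this]; simp [f]
  · rw [← LinearMap.toMatrix'_comp]
    have : (e.toLinearMap ∘ₗ f.rangeRestrict) ∘ₗ (P.subtype ∘ₗ e.symm.toLinearMap)
        = LinearMap.id := by
      refine LinearMap.ext fun x => ?_
      have h5 : f.rangeRestrict (P.subtype (e.symm x)) = e.symm x := by
        obtain ⟨y, hy⟩ := (e.symm x).2
        apply Subtype.ext
        change f (e.symm x : _) = (e.symm x : _)
        rw [← hy, hff]
      simp only [LinearMap.comp_apply, LinearEquiv.coe_coe, LinearMap.id_apply, h5]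
      simp
    rw [this]; simp

theorem PF.of_isLocalRing [IsLocalRing R] : PF R :=
  PF.of_free fun _ _ _ _ => Module.free_of_flat_of_isLocalRing

theorem PF.of_pid [IsDomain R] [IsPrincipalIdealRing R] : PF R :=
  PF.of_free fun _ _ _ _ => inferInstance

end Matrices


section Patching

open MvPolynomial

variable {R L : Type*} [CommRing R] [CommRing L] [Algebra R L] {σ : Type*}

/-- scaling the second set of variables by `s` -/
noncomputable def scl (s : R) : MvPolynomial (σ ⊕ σ) R →ₐ[R] MvPolynomial (σ ⊕ σ) R :=
  aeval (Sum.elim (fun i => X (Sum.inl i)) (fun i => C s * X (Sum.inr i)))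

/-- the ideal of `R` of Quillen -/
theorem scl_sub_zero (s : R) (p : MvPolynomial (σ ⊕ σ) R) :
    ∃ q, scl s p - scl 0 p = C s * q := by
  let I : Ideal (MvPolynomial (σ ⊕ σ) R) := Ideal.span {C s}
  have h : (Ideal.Quotient.mkₐ R I).comp (scl s) = (Ideal.Quotient.mkₐ R I).comp (scl 0) := by
    apply MvPolynomial.algHom_ext
    rintro (i | i)
    · simp [scl]
    · simp only [scl, AlgHom.comp_apply, aeval_X, Sum.elim_inr, map_zero, zero_mul]
      refine Ideal.Quotient.eq_zero_iff_mem.mpr ?_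
      exact Ideal.mul_mem_right _ _ (Ideal.subset_span rfl)
  have h2 := AlgHom.congr_fun h p
  have h3 := Ideal.Quotient.eq.mp h2
  obtain ⟨q, hq⟩ := Ideal.mem_span_singleton.mp h3
  exact ⟨q, hq⟩

theorem map_scl (s : R) (p : MvPolynomial (σ ⊕ σ) R) :
    map (algebraMap R L) (scl s p) = scl (algebraMap R L s) (map (algebraMap R L) p) := by
  have : (map (algebraMap R L)).comp (scl s : MvPolynomial (σ ⊕ σ) R →ₐ[R] _).toRingHom
    = (scl (algebraMap R L s)).toRingHom.comp (map (algebraMap R L)) := by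
    apply MvPolynomial.ringHom_ext
    · intro r; simp [scl]
    · rintro (i | i) <;> simp [scl]
  exact RingHom.congr_fun this p

theorem scl_denom (M : Submonoid R) [IsLocalization M L] (f : MvPolynomial (σ ⊕ σ) L) :
    ∃ s ∈ M, ∀ s', s ∣ s' → scl (algebraMap R L s') f - scl 0 f ∈
      (map (σ := σ ⊕ σ) (algebraMap R L)).range := by
  induction f using MvPolynomial.monomial_add_induction_on with
  | C a =>
    refine ⟨1, M.one_mem, fun s' _ => ?_⟩
    simp [scl, algHom_C]
  | monomial_add a b f ha hb hf =>
    obtain ⟨s, hs, hs'⟩ := hf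
    obtain ⟨⟨x, d⟩, hd⟩ := IsLocalization.surj M b
    simp only at hd
    refine ⟨s * d, M.mul_mem hs d.2, fun s' h' => ?_⟩
    have h1 := hs' s' ((dvd_mul_right _ _).trans h')
    have h2 : scl (algebraMap R L s') (monomial a b) - scl 0 (monomial a b) ∈
      (map (σ := σ ⊕ σ) (algebraMap R L)).range := by
      obtain ⟨t, rfl⟩ := (dvd_mul_left _ _).trans h'
      obtain ⟨q, hq⟩ := scl_sub_zero (d * t) (monomial a (1 : R))
      have e : monomial a b = C b * map (algebraMap R L) (monomial a (1 : R)) := by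
        simp [C_mul_monomial]
      refine ⟨C x * C t * q, ?_⟩
      have hq' := congrArg (map (algebraMap R L)) hq
      rw [map_sub, map_scl, map_scl, map_mul (MvPolynomial.map _) (C _) q, map_C, map_zero] at hq'
      rw [e, map_mul (scl _), map_mul (scl _), algHom_C, algHom_C, ← mul_sub, hq',
        map_mul (MvPolynomial.map _), map_mul (MvPolynomial.map _), map_C, map_C, ← hd]
      simp only [algebraMap_eq, map_mul]
      ring
    have := (map (σ := σ ⊕ σ) (algebraMap R L)).range.add_mem h2 h1
    convert this using 1
    simp only [map_add]; ring

variable {m : ℕ}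

/-- evaluation at `u + s v` -/
noncomputable def evs (s : R) : MvPolynomial σ R →ₐ[R] MvPolynomial (σ ⊕ σ) R :=
  aeval (fun i => X (Sum.inl i) + C s * X (Sum.inr i))

theorem evs_zero_eq (p : MvPolynomial σ R) : evs 0 p = rename Sum.inl p := by
  have : (evs (0 : R) : MvPolynomial σ R →ₐ[R] _) = rename Sum.inl := by
    apply MvPolynomial.algHom_ext; intro i; simp [evs]
  rw [this]

theorem scl_evs (s : R) (p : MvPolynomial σ R) : scl s (evs 1 p) = evs s p := by
  have : (scl s).comp (evs (1 : R) : MvPolynomial σ R →ₐ[R] _) = evs s := by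
    apply MvPolynomial.algHom_ext; intro i; simp [evs, scl]
  exact AlgHom.congr_fun this p

theorem scl_evs_zero (s : R) (p : MvPolynomial σ R) : scl s (evs 0 p) = evs 0 p := by
  have : (scl s).comp (evs (0 : R) : MvPolynomial σ R →ₐ[R] _) = evs 0 := by
    apply MvPolynomial.algHom_ext; intro i; simp [evs, scl]
  exact AlgHom.congr_fun this p

theorem map_evs (s : R) (p : MvPolynomial σ R) :
    map (algebraMap R L) (evs s p) = evs (algebraMap R L s) (map (algebraMap R L) p) := by
  have : (map (algebraMap R L)).comp (evs s : MvPolynomial σ R →ₐ[R] _).toRingHom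
    = (evs (algebraMap R L s)).toRingHom.comp (map (algebraMap R L)) := by
    apply MvPolynomial.ringHom_ext
    · intro r; simp [evs]
    · intro i; simp [evs]
  exact RingHom.congr_fun this p

/-- membership predicate for Quillen's ideal -/
def QJ (E : Matrix (Fin m) (Fin m) (MvPolynomial σ R)) (s : R) : Prop :=
  MvN (E.map (evs s)) (E.map (evs 0))

theorem QJ.eval {E : Matrix (Fin m) (Fin m) (MvPolynomial σ R)} {s : R} (h : QJ E s)
    {S : Type*} [CommRing S] [Algebra R S] (a b : σ → S) :
    MvN (E.map (aeval (fun i => a i + algebraMap R S s * b i))) (E.map (aeval a)) := by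
  have := MvN.map h (aeval (R := R) (Sum.elim a b)).toRingHom
  convert this using 1
  · ext i j
    have : (aeval (fun i => a i + algebraMap R S s * b i) : MvPolynomial σ R →ₐ[R] S) =
      (aeval (R := R) (Sum.elim a b)).comp (evs s) := by
      apply MvPolynomial.algHom_ext; intro i; simp [evs]
    simp [this]
  · ext i j
    have : (aeval a : MvPolynomial σ R →ₐ[R] S) =
      (aeval (R := R) (Sum.elim a b)).comp (evs 0) := by
      apply MvPolynomial.algHom_ext; intro i; simp [evs]
    simp [this]

theorem map_idem' {S : Type*} [CommRing S] [Algebra R S]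
    {E : Matrix (Fin m) (Fin m) (MvPolynomial σ R)} (hE : E * E = E)
    (f : MvPolynomial σ R →ₐ[R] S) : E.map f * E.map f = E.map f :=
  map_idem hE f.toRingHom

/-- Quillen's ideal -/
def QI (E : Matrix (Fin m) (Fin m) (MvPolynomial σ R)) (hE : E * E = E) : Ideal R where
  carrier := {s | QJ E s}
  zero_mem' := MvN.refl (map_idem' hE _)
  add_mem' := by
    intro s t hs ht
    have h1 := ht.eval (S := MvPolynomial (σ ⊕ σ) R)
      (fun i => X (Sum.inl i) + C s * X (Sum.inr i)) (fun i => X (Sum.inr i))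
    have h2 := h1.trans hs (map_idem' hE _) (map_idem' hE _) (map_idem' hE _)
    change MvN _ _
    convert h2 using 4
    simp [evs, add_assoc, add_mul]
  smul_mem' := by
    intro r s hs
    have h1 := hs.eval (S := MvPolynomial (σ ⊕ σ) R)
      (fun i => X (Sum.inl i)) (fun i => C r * X (Sum.inr i))
    change MvN _ _
    convert h1 using 4
    · simp only [evs, smul_eq_mul, map_mul, MvPolynomial.algebraMap_eq]
      congr 1; funext i; ring
    · simp [evs]

theorem exists_mem_QJ (M : Submonoid R) (hM : M ≤ nonZeroDivisors R) [IsLocalization M L]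
    {E : Matrix (Fin m) (Fin m) (MvPolynomial σ R)}
    (h : Spl (E.map (map (algebraMap R L)))) : ∃ s ∈ M, QJ E s := by
  obtain ⟨r, A, B, hAB, hBA⟩ := h
  have hinj : Function.Injective (map (σ := σ ⊕ σ) (algebraMap R L)) :=
    map_injective _ (IsLocalization.injective L hM)
  let P : Matrix (Fin m) (Fin m) (MvPolynomial (σ ⊕ σ) L) := A.map (evs 1) * B.map (evs 0)
  let Q : Matrix (Fin m) (Fin m) (MvPolynomial (σ ⊕ σ) L) := A.map (evs 0) * B.map (evs 1)
  have hmul : ∀ {a b c : ℕ} (f : MvPolynomial σ L →ₐ[L] MvPolynomial (σ ⊕ σ) L)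
      (U : Matrix (Fin a) (Fin b) (MvPolynomial σ L)) (V : Matrix (Fin b) (Fin c) _),
      U.map f * V.map f = (U * V).map f := fun f U V => by
    exact (Matrix.map_mul (f := f.toRingHom)).symm
  have hBA' : ∀ s : L, B.map (evs s) * A.map (evs s) = 1 := fun s => by
    rw [hmul, hBA]; simp
  have hAB' : ∀ s : R, A.map (evs (algebraMap R L s)) * B.map (evs (algebraMap R L s)) =
      (E.map (evs s)).map (map (algebraMap R L)) := fun s => by
    rw [hmul, hAB]; ext i j; simp [map_evs]
  have hsP : ∀ s : L, P.map (scl s) = A.map (evs s) * B.map (evs 0) := fun s => by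
    have : P.map (scl s) = (A.map (evs 1)).map (scl s) * (B.map (evs 0)).map (scl s) :=
      Matrix.map_mul (f := (scl s).toRingHom)
    rw [this]; congr 1 <;> ext i j
    · simp [scl_evs]
    · simp [scl_evs_zero]
  have hsQ : ∀ s : L, Q.map (scl s) = A.map (evs 0) * B.map (evs s) := fun s => by
    have : Q.map (scl s) = (A.map (evs 0)).map (scl s) * (B.map (evs 1)).map (scl s) :=
      Matrix.map_mul (f := (scl s).toRingHom)
    rw [this]; congr 1 <;> ext i j
    · simp [scl_evs_zero]
    · simp [scl_evs]
  choose s hs hs' using fun i j => scl_denom (R := R) M (P i j)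
  choose t ht ht' using fun i j => scl_denom (R := R) M (Q i j)
  let w : R := (∏ i, ∏ j, s i j) * (∏ i, ∏ j, t i j)
  have hw : w ∈ M := M.mul_mem (M.prod_mem fun i _ => M.prod_mem fun j _ => hs i j)
    (M.prod_mem fun i _ => M.prod_mem fun j _ => ht i j)
  have h0 := hAB' 0
  rw [map_zero] at h0
  have hPr : ∀ i j, ∃ p, map (algebraMap R L) p = P.map (scl (algebraMap R L w)) i j := fun i j => by
    have h1 := hs' i j w ((Finset.dvd_prod_of_mem (fun j => s i j) (Finset.mem_univ j)).trans
      ((Finset.dvd_prod_of_mem (fun i => ∏ j, s i j) (Finset.mem_univ i)).trans (dvd_mul_right _ _)))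
    have h2 : scl 0 (P i j) ∈ (map (σ := σ ⊕ σ) (algebraMap R L)).range := by
      change P.map (scl 0) i j ∈ _
      rw [hsP, h0]; exact ⟨_, rfl⟩
    obtain ⟨p, hp⟩ := (map (σ := σ ⊕ σ) (algebraMap R L)).range.add_mem h1 h2
    exact ⟨p, by simpa using hp⟩
  have hQr : ∀ i j, ∃ p, map (algebraMap R L) p = Q.map (scl (algebraMap R L w)) i j := fun i j => by
    have h1 := ht' i j w ((Finset.dvd_prod_of_mem (fun j => t i j) (Finset.mem_univ j)).trans
      ((Finset.dvd_prod_of_mem (fun i => ∏ j, t i j) (Finset.mem_univ i)).trans (dvd_mul_left _ _)))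
    have h2 : scl 0 (Q i j) ∈ (map (σ := σ ⊕ σ) (algebraMap R L)).range := by
      change Q.map (scl 0) i j ∈ _
      rw [hsQ, h0]; exact ⟨_, rfl⟩
    obtain ⟨p, hp⟩ := (map (σ := σ ⊕ σ) (algebraMap R L)).range.add_mem h1 h2
    exact ⟨p, by simpa using hp⟩
  choose P' hP' using hPr
  choose Q' hQ' using hQr
  have hP'' : (Matrix.of P').map (map (algebraMap R L)) = P.map (scl (algebraMap R L w)) := by
    ext1 i j; exact hP' i j
  have hQ'' : (Matrix.of Q').map (map (algebraMap R L)) = Q.map (scl (algebraMap R L w)) := by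
    ext1 i j; exact hQ' i j
  refine ⟨w, hw, Matrix.of P', Matrix.of Q', ?_, ?_⟩
  · apply Matrix.map_injective hinj
    beta_reduce
    rw [Matrix.map_mul, hP'', hQ'', hsP, hsQ, ← hAB']
    calc _ = A.map (evs (algebraMap R L w)) * (B.map (evs 0) * A.map (evs 0)) *
          B.map (evs (algebraMap R L w)) := by simp only [Matrix.mul_assoc]
      _ = _ := by rw [hBA', Matrix.mul_one]
  · apply Matrix.map_injective hinj
    beta_reduce
    rw [Matrix.map_mul, hP'', hQ'', hsP, hsQ, ← h0]
    calc _ = A.map (evs 0) * (B.map (evs (algebraMap R L w)) * A.map (evs (algebraMap R L w))) *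
          B.map (evs 0) := by simp only [Matrix.mul_assoc]
      _ = _ := by rw [hBA', Matrix.mul_one]

/-- consequence of membership -/
theorem QJ.mvN_of_isUnit {E : Matrix (Fin m) (Fin m) (MvPolynomial σ R)} {s : R} (h : QJ E s)
    (hs : IsUnit (algebraMap R L s)) :
    MvN (E.map (map (algebraMap R L))) (E.map (C.comp ((algebraMap R L).comp constantCoeff))) := by
  obtain ⟨t, ht⟩ := hs.exists_right_inv
  have := h.eval (S := MvPolynomial σ L) 0 (fun i => C t * X i)
  convert this using 1
  · ext1 i j
    simp only [Matrix.map_apply]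
    have : (aeval (fun i => (0 : σ → MvPolynomial σ L) i + algebraMap R (MvPolynomial σ L) s *
      (C t * X i)) : MvPolynomial σ R →ₐ[R] MvPolynomial σ L).toRingHom = map (algebraMap R L) := by
      apply MvPolynomial.ringHom_ext
      · intro r; simp [MvPolynomial.algebraMap_apply]
      · intro i; simp [MvPolynomial.algebraMap_apply, ← mul_assoc, ← C_mul, ht]
    exact (RingHom.congr_fun this _).symm
  · ext1 i j
    simp only [Matrix.map_apply]
    have : (aeval (0 : σ → MvPolynomial σ L) : MvPolynomial σ R →ₐ[R] MvPolynomial σ L).toRingHom =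
       (C.comp ((algebraMap R L).comp constantCoeff)) := by
      apply MvPolynomial.ringHom_ext
      · intro r; simp [MvPolynomial.algebraMap_apply]
      · intro i; simp
    exact (RingHom.congr_fun this _).symm

theorem QI_mem {E : Matrix (Fin m) (Fin m) (MvPolynomial σ R)} {hE : E * E = E} {s : R} :
    s ∈ QI E hE ↔ QJ E s := Iff.rfl

/-- Quillen patching over a domain. -/
theorem quillen_patching [IsDomain R]
    {E : Matrix (Fin m) (Fin m) (MvPolynomial σ R)} (hE : E * E = E)
    (h : ∀ (p : Ideal R) [p.IsMaximal],
      Spl (E.map (map (algebraMap R (Localization.AtPrime p)))))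
    (h0 : Spl (E.map (constantCoeff (R := R) (σ := σ)))) : Spl E := by
  have h1 : QI E hE = ⊤ := by
    by_contra hne
    obtain ⟨p, hp, hle⟩ := Ideal.exists_le_maximal _ hne
    obtain ⟨s, hs, hs'⟩ := exists_mem_QJ (L := Localization.AtPrime p) p.primeCompl
      (Ideal.primeCompl_le_nonZeroDivisors p) (h p)
    exact hs (hle hs')
  have h2 : QJ E (1 : R) := by
    rw [← QI_mem (hE := hE), h1]; trivial
  have h3 := h2.mvN_of_isUnit (L := R) (by simp)
  have h4 : E.map (map (algebraMap R R)) = E := by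
    ext1 i j; simp [MvPolynomial.map_id]
  rw [h4] at h3
  refine h3.spl hE (map_idem hE _) ?_
  have := h0.map (C (R := R) (σ := σ))
  convert this using 1
  ext1 i j; simp

end Patching


section Horrocks

open Polynomial

/-- the weak gcd property needed for rank one modules -/
def GCDP (S : Type*) [CommRing S] : Prop :=
  ∀ (m : ℕ) (u : Fin m → S), u ≠ 0 → ∃ (c : S) (u' : Fin m → S), c ≠ 0 ∧ (∀ i, u i = c * u' i) ∧
    ∀ e v : S, (∀ i, e ∣ u' i * v) → e ∣ v

theorem GCDP.of_isLocalization {D S : Type*} [CommRing D] [IsDomain D] [UniqueFactorizationMonoid D]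
    [CommRing S] [IsDomain S] [Algebra D S] (M : Submonoid D) (hM : M ≤ nonZeroDivisors D)
    [IsLocalization M S] : GCDP S := by
  classical
  intro m u hu
  obtain ⟨_⟩ : Nonempty (NormalizedGCDMonoid D) := inferInstance
  have hinj := IsLocalization.injective S hM
  obtain ⟨s, hs⟩ := IsLocalization.exist_integer_multiples M Finset.univ u
  choose w hw using fun i => hs i (Finset.mem_univ i)
  obtain ⟨i0, hi0⟩ : ∃ i, u i ≠ 0 := by
    by_contra! h; exact hu (funext h)
  have hsu : IsUnit (algebraMap D S s) := IsLocalization.map_units S s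
  obtain ⟨u', hu', hg⟩ := Finset.extract_gcd w (s := Finset.univ) ⟨i0, Finset.mem_univ _⟩
  obtain ⟨t, ht⟩ := hsu.exists_left_inv
  have hcu : ∀ i, u i = t * algebraMap D S (Finset.univ.gcd w) * algebraMap D S (u' i) := by
    intro i
    rw [mul_assoc, ← map_mul, ← hu' i (Finset.mem_univ i), hw i, Algebra.smul_def, ← mul_assoc, ht,
      one_mul]
  refine ⟨t * algebraMap D S (Finset.univ.gcd w), fun i => algebraMap D S (u' i), ?_, hcu, ?_⟩
  · intro h0; apply hi0; rw [hcu, h0, zero_mul]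
  · intro e v h
    choose z hz using h
    obtain ⟨d, hd⟩ := IsLocalization.exist_integer_multiples M (Finset.univ : Finset (Fin m)) z
    choose z' hz' using fun i => hd i (Finset.mem_univ i)
    obtain ⟨⟨e1, d1⟩, he1⟩ := IsLocalization.surj M e
    obtain ⟨⟨v1, d2⟩, hv1⟩ := IsLocalization.surj M v
    simp only at he1 hv1
    have key : ∀ i, e1 * (d2 * z' i) = u' i * (d * d1 * v1) := by
      intro i
      apply hinj
      simp only [map_mul, ← he1, ← hv1, hz', Algebra.smul_def]
      linear_combination (-(algebraMap D S d) * (algebraMap D S d1) * (algebraMap D S d2)) * hz i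
    have : e1 ∣ d * d1 * v1 := by
      have h1 : e1 ∣ Finset.univ.gcd (fun i => u' i * (d * d1 * v1)) :=
        Finset.dvd_gcd fun i _ => ⟨_, (key i).symm⟩
      have h2 := h1.trans (Finset.gcd_mul_right' Finset.univ u' (d * d1 * v1)).dvd
      rwa [hg, one_mul] at h2
    obtain ⟨y, hy⟩ := this
    have hy' := congrArg (algebraMap D S) hy
    simp only [map_mul, ← he1, ← hv1] at hy'
    obtain ⟨a, ha⟩ := (IsLocalization.map_units S d).exists_left_inv
    obtain ⟨b, hb⟩ := (IsLocalization.map_units S d1).exists_left_inv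
    obtain ⟨c, hc⟩ := (IsLocalization.map_units S d2).exists_left_inv
    refine ⟨c * a * algebraMap D S y, ?_⟩
    have : v = (a * algebraMap D S d) * (b * algebraMap D S d1) * (c * algebraMap D S d2) * v := by
      rw [ha, hb, hc]; ring
    rw [this]
    linear_combination a * b * c * hy' + e * a * c * algebraMap D S y * hb

variable {S : Type*} [CommRing S]

theorem mul_split {m l : Type*} [Fintype l] [Fintype m] {n : ℕ}
    (U : Matrix m (Fin (n+1)) S) (W : Matrix (Fin (n+1)) l S) :
    U * W = U.submatrix id (fun _ : Unit => 0) * W.submatrix (fun _ : Unit => 0) id +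
      U.submatrix id Fin.succ * W.submatrix Fin.succ id := by
  ext i j; simp [Matrix.mul_apply, Fin.sum_univ_succ]

/-- glue a split rank one piece -/
theorem spl_add {m : ℕ} {E : Matrix (Fin m) (Fin m) S} 
    {p : Matrix (Fin m) Unit S} {ρ : Matrix Unit (Fin m) S} (h : ρ * p = 1)
    (h1 : E * p = p) (h2 : ρ * E = ρ) (hs : Spl (E - p * ρ)) : Spl E := by
  obtain ⟨r, A, B, hAB, hBA⟩ := hs
  have hA : A = (E - p * ρ) * A := by rw [← hAB, Matrix.mul_assoc, hBA, Matrix.mul_one]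
  have hB : B = B * (E - p * ρ) := by rw [← hAB, ← Matrix.mul_assoc, hBA, Matrix.one_mul]
  have hρA : ρ * A = 0 := by
    rw [hA, ← Matrix.mul_assoc, Matrix.mul_sub, h2, ← Matrix.mul_assoc, h, Matrix.one_mul, sub_self,
      Matrix.zero_mul]
  have hBp : B * p = 0 := by
    rw [hB, Matrix.mul_assoc, Matrix.sub_mul, h1, Matrix.mul_assoc, h, Matrix.mul_one, sub_self,
      Matrix.mul_zero]
  refine spl_of_fintype (Unit ⊕ Fin r) (U := Matrix.fromCols p A) (V := Matrix.fromRows ρ B) ?_ ?_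
  · rw [Matrix.fromCols_mul_fromRows, hAB]; abel
  · rw [Matrix.fromRows_mul_fromCols, h, hρA, hBp, hBA, Matrix.fromBlocks_one]

/-- A submodule-free PID lemma. -/
theorem exists_unimod {D : Type*} [CommRing D] [IsDomain D] [IsPrincipalIdealRing D] {n : ℕ}
    (w : Fin (n+2) → D) : ∃ ρ p : Fin (n+2) → D, ρ ⬝ᵥ p = 1 ∧ ρ ⬝ᵥ w = 0 := by
  classical
  obtain ⟨a, b, g, x, y, h0, h1, hxy⟩ : ∃ a b g x y : D, w 0 = g * a ∧ w 1 = g * b ∧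
      x * a + y * b = 1 := by
    let I : Ideal D := Ideal.span {w 0, w 1}
    obtain ⟨g, hg⟩ := (IsPrincipalIdealRing.principal I).principal
    change I = Ideal.span {g} at hg
    have hw0 : w 0 ∈ I := Ideal.subset_span (by simp)
    have hw1 : w 1 ∈ I := Ideal.subset_span (by simp)
    have hgI : g ∈ I := by rw [hg]; exact Ideal.subset_span rfl
    rw [hg, Ideal.mem_span_singleton] at hw0 hw1
    obtain ⟨a, ha⟩ := hw0
    obtain ⟨b, hb⟩ := hw1
    obtain ⟨x, y, hxy⟩ := Ideal.mem_span_pair.mp hgI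
    by_cases hg0 : g = 0
    · exact ⟨1, 0, 0, 1, 0, by simp [ha, hg0], by simp [hb, hg0], by simp⟩
    · refine ⟨a, b, g, x, y, ha, hb, ?_⟩
      apply mul_left_cancel₀ hg0
      linear_combination hxy - x * ha - y * hb
  have key : ∀ (c d : D) (v : Fin (n+2) → D),
      (fun i : Fin (n+2) => if i = 0 then c else if i = 1 then d else 0) ⬝ᵥ v =
      c * v 0 + d * v 1 := by
    intro c d v
    simp only [dotProduct, Fin.sum_univ_succ]
    have : ∀ i : Fin n, ((i.succ.succ : Fin (n+2)) = 1) = False := fun i => by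
      simp [Fin.ext_iff]
    simp [this]
  refine ⟨fun i => if i = 0 then b else if i = 1 then -a else 0,
    fun i => if i = 0 then y else if i = 1 then -x else 0, ?_, ?_⟩
  · rw [key]; simp; linear_combination hxy
  · rw [key, h0, h1]; ring

theorem eq_top_of_monic {R : Type*} [CommRing R] [IsLocalRing R] (I : Ideal R[X])
    (g : R[X]) (hg : g.Monic) (hgI : g ∈ I)
    (h : I.map (mapRingHom (residue R)) = ⊤) : I = ⊤ := by
  by_contra hne
  obtain ⟨P, hP, hle⟩ := Ideal.exists_le_maximal _ hne
  have hIntegral : (algebraMap R (R[X] ⧸ P)).IsIntegral := by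
    have hX : (algebraMap R (R[X] ⧸ P)).IsIntegralElem (Ideal.Quotient.mk P X) := by
      refine ⟨g, hg, ?_⟩
      have : eval₂ (algebraMap R (R[X] ⧸ P)) (Ideal.Quotient.mk P X) g = Ideal.Quotient.mk P g := by
        conv_rhs => rw [← Polynomial.eval₂_C_X (p := g)]
        rw [Polynomial.hom_eval₂]; rfl
      rw [this]
      exact Ideal.Quotient.eq_zero_iff_mem.mpr (hle hgI)
    intro y
    obtain ⟨q, rfl⟩ := Ideal.Quotient.mk_surjective y
    induction q using Polynomial.induction_on' with
    | add p q hp hq => rw [map_add]; exact RingHom.IsIntegralElem.add _ hp hq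
    | monomial n a =>
      rw [← C_mul_X_pow_eq_monomial, map_mul, map_pow]
      refine RingHom.IsIntegralElem.mul _ ?_ ?_
      · exact RingHom.isIntegralElem_map _
      · exact IsIntegral.pow (R := R) hX n
  have hmax : (P.comap (C : R →+* R[X])).IsMaximal := by
    have : (RingHom.ker (algebraMap R (R[X] ⧸ P))).IsMaximal := by
      have : (⊥ : Ideal (R[X] ⧸ P)).IsMaximal := Ideal.bot_quotient_isMaximal_iff P |>.mpr hP
      exact Ideal.isMaximal_comap_of_isIntegral_of_isMaximal' _ hIntegral ⊥
    convert this using 1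
    ext x
    rw [Ideal.mem_comap, RingHom.mem_ker]
    exact Ideal.Quotient.eq_zero_iff_mem.symm
  have hm := IsLocalRing.eq_maximalIdeal hmax
  have hker : RingHom.ker (mapRingHom (residue R)) ≤ P := by
    rw [Polynomial.ker_mapRingHom, IsLocalRing.ker_residue, ← hm]
    exact Ideal.map_comap_le
  have h2 : P.map (mapRingHom (residue R)) = ⊤ := top_le_iff.mp (h ▸ Ideal.map_mono hle)
  have hsurj : Function.Surjective (mapRingHom (residue R)) :=
    Polynomial.map_surjective _ residue_surjective
  have h3 := Ideal.comap_map_of_surjective _ hsurj P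
  rw [h2, Ideal.comap_top, ← RingHom.ker_eq_comap_bot, sup_eq_left.mpr hker] at h3
  exact hP.ne_top h3.symm

theorem horrocks {R : Type*} [CommRing R] [IsDomain R] [IsLocalRing R] (hG : GCDP R[X]) (r : ℕ) :
    ∀ (m : ℕ) (E : Matrix (Fin m) (Fin m) R[X]) (_ : E * E = E) (f : R[X]) (_ : f.Monic)
      (U : Matrix (Fin m) (Fin r) R[X]) (V : Matrix (Fin r) (Fin m) R[X]),
      U * V = f • E → V * U = f • 1 → E * U = U → V * E = V → Spl E := by
  induction r with
  | zero =>
    intro m E hE f hf U V hUV hVU hEU hVE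
    have : f • E = 0 := by rw [← hUV]; ext i j; simp [Matrix.mul_apply]
    have : E = 0 := (smul_eq_zero.mp this).resolve_left hf.ne_zero
    exact ⟨0, 0, 0, by simp [this], Subsingleton.elim _ _⟩
  | succ r ih =>
  rcases r with _ | r
  · intro m E hE f hf U V hUV hVU hEU hVE
    have h1 : ∑ i, V 0 i * U i 0 = f := by
      have := congrFun (congrFun hVU 0) 0
      simpa [Matrix.mul_apply] using this
    have h2 : ∀ i j, U i 0 * V 0 j = f * E i j := by
      intro i j
      have := congrFun (congrFun hUV i) j
      simpa [Matrix.mul_apply] using this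
    obtain ⟨c, u, hc, hu, hgcd⟩ := hG m (fun i => U i 0) (by
      intro h0
      apply hf.ne_zero
      rw [← h1]
      exact Finset.sum_eq_zero fun i _ => by rw [congrFun h0 i]; simp)
    have he : f = c * ∑ i, V 0 i * u i := by
      rw [← h1, Finset.mul_sum]
      exact Finset.sum_congr rfl fun i _ => by rw [hu]; ring
    set e := ∑ i, V 0 i * u i with he'
    have he0 : e ≠ 0 := fun h => hf.ne_zero (by rw [he, h, mul_zero])
    have h3 : ∀ i j, u i * V 0 j = e * E i j := by
      intro i j
      apply mul_left_cancel₀ hc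
      rw [← mul_assoc, ← mul_assoc, ← hu, ← he, h2]
    choose w hw using fun j => hgcd e (V 0 j) (fun i => ⟨_, h3 i j⟩)
    refine ⟨1, Matrix.of fun i _ => u i, Matrix.of fun _ j => w j, ?_, ?_⟩
    · ext1 i j
      apply mul_left_cancel₀ he0
      rw [← h3, hw]
      simp [Matrix.mul_apply]; ring
    · ext1 i j
      rw [Subsingleton.elim i j]
      apply mul_left_cancel₀ he0
      simp only [Matrix.mul_apply, Matrix.one_apply_eq, mul_one, Finset.mul_sum]
      conv_rhs => rw [he']
      exact Finset.sum_congr rfl fun i _ => by rw [hw, mul_assoc]; rfl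
  intro m E hE f hf U V hUV hVU hEU hVE
  -- reduction modulo the maximal ideal
  let π : R[X] →+* (ResidueField R)[X] := mapRingHom (residue R)
  have hπ : Function.Surjective π := Polynomial.map_surjective _ residue_surjective
  have hfπ : π f ≠ 0 := (hf.map (residue R)).ne_zero
  obtain ⟨r', A, B, hAB, hBA⟩ := PF.of_pid (R := (ResidueField R)[X]) m (E.map π) (map_idem hE π)
  have hr' : r + 2 ≤ r' := by
    have h1 : (V.map π * A) * (B * U.map π) = π f • 1 := by
      calc _ = V.map π * (A * B) * U.map π := by simp only [Matrix.mul_assoc]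
        _ = (V * E * U).map π := by rw [hAB, Matrix.map_mul, Matrix.map_mul]
        _ = (f • (1 : Matrix (Fin (r+2)) (Fin (r+2)) R[X])).map π := by rw [hVE, hVU]
        _ = _ := by
          ext1 i j
          simp only [Matrix.map_apply, Matrix.smul_apply, smul_eq_mul, map_mul, Matrix.one_apply]
          split_ifs <;> simp
    have hinj : Function.Injective (Matrix.mulVecLin (B * U.map π)) := ?_
    · have := card_le_of_injective (ResidueField R)[X] _ hinj
      simpa only [Fintype.card_fin] using this
    rw [← LinearMap.ker_eq_bot, LinearMap.ker_eq_bot']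
    intro x hx
    have h2 : ((V.map π * A) * (B * U.map π)).mulVec x = 0 := by
      rw [← Matrix.mulVec_mulVec]
      rw [Matrix.mulVecLin_apply] at hx
      rw [hx, Matrix.mulVec_zero]
    rw [h1, Matrix.smul_mulVec, Matrix.one_mulVec] at h2
    exact (smul_eq_zero.mp h2).resolve_left hfπ
  obtain ⟨n, rfl⟩ := Nat.exists_eq_add_of_le' hr'
  set U0 : Matrix (Fin m) Unit R[X] := U.submatrix id (fun _ => 0) with hU0
  set V0 : Matrix Unit (Fin m) R[X] := V.submatrix (fun _ => 0) id with hV0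
  set U1 : Matrix (Fin m) (Fin (r+1)) R[X] := U.submatrix id Fin.succ with hU1
  set V1 : Matrix (Fin (r+1)) (Fin m) R[X] := V.submatrix Fin.succ id with hV1
  have eU0 : E * U0 = U0 := by
    ext1 i j; exact congrFun (congrFun hEU i) 0
  have eU1 : E * U1 = U1 := by
    ext1 i j; exact congrFun (congrFun hEU i) j.succ
  have eV0 : V0 * E = V0 := by
    ext1 i j; exact congrFun (congrFun hVE 0) j
  have eV1 : V1 * E = V1 := by
    ext1 i j; exact congrFun (congrFun hVE i.succ) j
  have e00 : V0 * U0 = f • 1 := by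
    ext1 i j
    have := congrFun (congrFun hVU 0) 0
    simpa [Matrix.mul_apply, hU0, hV0] using this
  have e01 : V0 * U1 = 0 := by
    ext1 i j
    have := congrFun (congrFun hVU 0) j.succ
    rw [Matrix.smul_apply, Matrix.one_apply_ne (Fin.succ_ne_zero j).symm, smul_zero] at this
    exact this
  have e11 : V1 * U1 = f • 1 := by
    ext1 i j
    have := congrFun (congrFun hVU i.succ) j.succ
    simpa [Matrix.mul_apply, Matrix.one_apply, hU1, hV1] using this
  have eUV : U0 * V0 + U1 * V1 = f • E := by rw [← hUV]; exact (mul_split U V).symm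
  -- the unimodular vector
  obtain ⟨ρ', p', h1, h2⟩ := exists_unimod (fun i => (B * U0.map π) i ())
  let p1 : Matrix (Fin m) Unit (ResidueField R)[X] := A * Matrix.of (fun i _ => p' i)
  let ρ1 : Matrix Unit (Fin m) (ResidueField R)[X] := Matrix.of (fun _ i => ρ' i) * B
  have hρp : ρ1 * p1 = 1 := by
    calc _ = Matrix.of (fun _ i => ρ' i) * (B * A) * Matrix.of (fun i _ => p' i) := by
          simp only [ρ1, p1, Matrix.mul_assoc]
      _ = 1 := by
          rw [hBA, Matrix.mul_one]; ext1 i j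
          simpa [Matrix.mul_apply, dotProduct] using h1
  have hρU : ρ1 * U0.map π = 0 := by
    simp only [ρ1]
    rw [Matrix.mul_assoc]; ext1 i j
    simpa [Matrix.mul_apply, dotProduct] using h2
  have hEp : E.map π * p1 = p1 := by
    simp only [p1]
    rw [← hAB, Matrix.mul_assoc, ← Matrix.mul_assoc B, hBA, Matrix.one_mul]
  choose p2 hp2 using fun i => hπ (p1 i ())
  let p3 : Matrix (Fin m) Unit R[X] := E * Matrix.of (fun i _ => p2 i)
  have hEp3 : E * p3 = p3 := by simp only [p3]; rw [← Matrix.mul_assoc, hE]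
  have hp3 : p3.map π = p1 := by
    simp only [p3]
    rw [Matrix.map_mul]
    conv_rhs => rw [← hEp]
    congr 1
    ext1 i j; exact hp2 i
  set q := (V0 * p3) () () with hq
  let N := q.natDegree + 1
  let p : Matrix (Fin m) Unit R[X] := p3 + (X ^ N : R[X]) • U0
  set g := q + X ^ N * f with hg
  have hgm : g.Monic := by
    rw [hg, add_comm]
    apply (Polynomial.Monic.mul (monic_X_pow N) hf).add_of_left
    rw [Polynomial.Monic.degree_mul hf, degree_X_pow]
    refine lt_of_le_of_lt degree_le_natDegree ?_
    have : (0 : WithBot ℕ) ≤ f.degree := zero_le_degree_iff.mpr hf.ne_zero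
    refine lt_of_lt_of_le (b := (N : WithBot ℕ)) (by exact_mod_cast Nat.lt_succ_self _) ?_
    exact le_add_of_nonneg_right this
  have hEpp : E * p = p := by
    simp only [p]
    rw [Matrix.mul_add, hEp3, Matrix.mul_smul, eU0]
  have hV0p : V0 * p = g • 1 := by
    simp only [p]
    rw [Matrix.mul_add, Matrix.mul_smul, e00]
    ext1 i j
    simp [hg, hq]
  have hρpp : ρ1 * p.map π = 1 := by
    have : p.map π = p1 + π (X ^ N) • U0.map π := by
      rw [← hp3]; ext1 i j; simp [p]
    rw [this, Matrix.mul_add, hρp, Matrix.mul_smul, hρU, smul_zero, add_zero]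
  have htop : Ideal.span (Set.range fun i => p i ()) = ⊤ := by
    apply eq_top_of_monic _ g hgm
    · have : g = ∑ i, V0 () i * p i () := by
        have := congrFun (congrFun hV0p ()) ()
        simpa [Matrix.mul_apply] using this.symm
      rw [this]
      exact Ideal.sum_mem _ fun i _ => Ideal.mul_mem_left _ _ (Ideal.subset_span ⟨i, rfl⟩)
    · rw [Ideal.eq_top_iff_one]
      have : (1 : (ResidueField R)[X]) = ∑ i, ρ1 () i * π (p i ()) := by
        have := congrFun (congrFun hρpp ()) ()
        simpa [Matrix.mul_apply] using this.symm
      rw [this]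
      exact Ideal.sum_mem _ fun i _ => Ideal.mul_mem_left _ _
        (Ideal.mem_map_of_mem _ (Ideal.subset_span ⟨i, rfl⟩))
  obtain ⟨ρ0, hρ0⟩ := (Ideal.mem_span_range_iff_exists_fun).mp
    ((Ideal.eq_top_iff_one _).mp htop)
  let ρ : Matrix Unit (Fin m) R[X] := Matrix.of (fun _ i => ρ0 i) * E
  have hρE : ρ * E = ρ := by simp only [ρ]; rw [Matrix.mul_assoc, hE]
  have hρ : ρ * p = 1 := by
    simp only [ρ]
    rw [Matrix.mul_assoc, hEpp]; ext1 i j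
    simpa [Matrix.mul_apply] using hρ0
  refine spl_add hρ hEpp hρE ?_
  have hV'p : (g • V1 - V1 * p * V0) * p = 0 := by
    rw [Matrix.sub_mul, Matrix.mul_assoc _ V0, hV0p]; simp
  have hpp : p * ρ * (p * ρ) = p * ρ := by
    rw [Matrix.mul_assoc, ← Matrix.mul_assoc ρ, hρ, Matrix.one_mul]
  have hEpr : E * (p * ρ) = p * ρ := by rw [← Matrix.mul_assoc, hEpp]
  have hprE : p * ρ * E = p * ρ := by rw [Matrix.mul_assoc, hρE]
  refine ih m (E - p * ρ) ?_ (f * g) (hf.mul hgm) (U1 - p * ρ * U1) (g • V1 - V1 * p * V0) ?_ ?_ ?_ ?_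
  · rw [Matrix.sub_mul, Matrix.mul_sub, Matrix.mul_sub, hE, hEpr, hprE, hpp]; simp
  · have k1 : U1 * (g • V1 - V1 * p * V0) = (f * g) • E - f • (p * V0) := by
      have k2 : U1 * V1 = f • E - U0 * V0 := by rw [← eUV]; abel
      have k3 : U1 * (V1 * p * V0) = f • (p * V0) - g • (U0 * V0) := by
        calc _ = (U1 * V1) * p * V0 := by simp only [Matrix.mul_assoc]
          _ = f • (E * p * V0) - U0 * (V0 * p) * V0 := by
            rw [k2]; simp only [Matrix.sub_mul, Matrix.smul_mul, Matrix.mul_assoc]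
          _ = _ := by rw [hEpp, hV0p]; simp
      rw [Matrix.mul_sub, Matrix.mul_smul, k2, k3, smul_sub, smul_smul, mul_comm g f]; abel
    have k4 : U1 - p * ρ * U1 = (1 - p * ρ) * U1 := by rw [Matrix.sub_mul, Matrix.one_mul]
    have k5 : (1 - p * ρ) * (p * V0) = 0 := by
      rw [Matrix.sub_mul, Matrix.one_mul, Matrix.mul_assoc p, ← Matrix.mul_assoc ρ, hρ,
        Matrix.one_mul, sub_self]
    rw [k4, Matrix.mul_assoc, k1, Matrix.mul_sub, Matrix.mul_smul, Matrix.mul_smul, k5, smul_zero,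
      sub_zero, Matrix.sub_mul, Matrix.one_mul, hprE]
  · rw [Matrix.mul_sub, Matrix.mul_assoc p, ← Matrix.mul_assoc _ p, hV'p, Matrix.zero_mul, sub_zero,
      Matrix.sub_mul, Matrix.mul_assoc _ V0, e01, Matrix.smul_mul, e11]
    simp [smul_smul, mul_comm]
  · rw [Matrix.sub_mul, Matrix.mul_sub, Matrix.mul_sub, eU1, ← Matrix.mul_assoc E, hEpr,
      ← Matrix.mul_assoc (p * ρ), hpp]; simp
  · rw [Matrix.mul_sub, ← Matrix.mul_assoc _ p, hV'p, Matrix.zero_mul, sub_zero, Matrix.sub_mul,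
      Matrix.smul_mul, eV1, Matrix.mul_assoc _ V0, eV0]

end Horrocks

section QuillenSuslin

open MvPolynomial

theorem clear_denoms {D L : Type*} [CommRing D] [CommRing L] [Algebra D L] (M : Submonoid D)
    [IsLocalization M L] {a b σ : Type*} [Fintype a] [Fintype b]
    (A : Matrix a b (MvPolynomial σ L)) :
    ∃ d ∈ M, ∃ A' : Matrix a b (MvPolynomial σ D),
      A'.map (map (algebraMap D L)) = (C (algebraMap D L d) : MvPolynomial σ L) • A := by
  classical
  let : Algebra (MvPolynomial σ D) (MvPolynomial σ L) := MvPolynomial.algebraMvPolynomial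
  obtain ⟨⟨_, d, hd, rfl⟩, hs⟩ := IsLocalization.exist_integer_multiples (M.map (C (σ := σ)))
    (Finset.univ) (fun x : a × b => A x.1 x.2)
  choose A' hA' using fun i j => hs (i, j) (Finset.mem_univ _)
  refine ⟨d, hd, Matrix.of A', ?_⟩
  ext1 i j
  have := hA' i j
  simp only [Algebra.smul_def] at this
  change map (algebraMap D L) (A' i j) = _
  change map (algebraMap D L) (A' i j) = map (algebraMap D L) (C d) * _ at this
  rw [this]
  simp

theorem gcdp_atPrime {R : Type u} [CommRing R] [IsDomain R] [UniqueFactorizationMonoid R]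
    (p : Ideal R) [p.IsPrime] : GCDP (Polynomial (Localization.AtPrime p)) := by
  let Rp := Localization.AtPrime p
  let : Algebra (Polynomial R) (Polynomial Rp) := (Polynomial.mapRingHom (algebraMap R Rp)).toAlgebra
  have := Polynomial.isLocalization p.primeCompl Rp
  refine GCDP.of_isLocalization (D := Polynomial R) (p.primeCompl.map (Polynomial.C : R →+* _)) ?_
  rintro _ ⟨a, ha, rfl⟩
  apply mem_nonZeroDivisors_of_ne_zero
  rw [Polynomial.C_ne_zero]
  rintro rfl
  exact ha p.zero_mem

theorem horrocks_global {R : Type u} [CommRing R] [IsDomain R] [UniqueFactorizationMonoid R]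
    (hR : PF R) {m r : ℕ} (E : Matrix (Fin m) (Fin m) (Polynomial R)) (hE : E * E = E)
    (F : Polynomial R) (hFm : F.Monic) (U : Matrix (Fin m) (Fin r) (Polynomial R))
    (V : Matrix (Fin r) (Fin m) (Polynomial R))
    (g1 : U * V = F • E) (g2 : V * U = F • 1) (g3 : E * U = U) (g4 : V * E = V) : Spl E := by
  let ε (T : Type u) [CommRing T] : MvPolynomial Unit T ≃+* Polynomial T :=
    (uniqueAlgEquiv T Unit).toRingEquiv
  have hback2 : (E.map (ε R).symm.toRingHom).map (ε R).toRingHom = E := by ext1 i j; simp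
  rw [← hback2]
  apply Spl.map
  apply quillen_patching (map_idem hE _)
  · intro p hp
    let Rp := Localization.AtPrime p
    let μ : Polynomial R →+* Polynomial Rp := Polynomial.mapRingHom (algebraMap R Rp)
    have hs : Spl (E.map μ) := by
      refine horrocks (gcdp_atPrime p) r m (E.map μ) (map_idem hE μ) (μ F) (hFm.map _) (U.map μ)
        (V.map μ) ?_ ?_ ?_ ?_
      · rw [← Matrix.map_mul, g1]; ext1 i j; simp
      · rw [← Matrix.map_mul, g2]; ext1 i j; simp [Matrix.one_apply]; split_ifs <;> simp
      · rw [← Matrix.map_mul, g3]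
      · rw [← Matrix.map_mul, g4]
    have := hs.map (ε Rp).symm.toRingHom
    convert this using 1
    ext1 i j
    simp only [Matrix.map_apply]
    have h : (map (algebraMap R Rp)).comp (ε R).symm.toRingHom = (ε Rp).symm.toRingHom.comp μ := by
      apply Polynomial.ringHom_ext
      · intro a; simp [ε, μ]
      · simp [ε, μ]
    exact RingHom.congr_fun h _
  · exact hR m _ (map_idem (map_idem hE _) _)

/-- the step of the induction -/
theorem qs_step {K : Type u} [Field K] (n : ℕ)
    (ih : ∀ (K : Type u) [Field K], PF (MvPolynomial (Fin n) K)) :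
    PF (Polynomial (MvPolynomial (Fin n) K)) := by
  intro m E hE
  set R := MvPolynomial (Fin n) K with hR
  -- change of coordinates
  let φ : Polynomial R ≃+* MvPolynomial (Fin n) (Polynomial K) :=
    ((optionEquivLeft K (Fin n)).symm.trans (optionEquivRight K (Fin n))).toRingEquiv
  have hφ : ∀ p : Polynomial K, φ.symm (C p) = p.map (C : K →+* R) := by
    intro p
    have : φ.symm.toRingHom.comp (C : Polynomial K →+* MvPolynomial (Fin n) (Polynomial K)) =
        Polynomial.mapRingHom (C : K →+* R) := by
      apply Polynomial.ringHom_ext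
      · intro a
        simp only [RingHom.comp_apply, RingEquiv.toRingHom_eq_coe, RingHom.coe_coe, Polynomial.coe_mapRingHom,
          Polynomial.map_C]
        rw [RingEquiv.symm_apply_eq]
        change _ = optionEquivRight K (Fin n) ((optionEquivLeft K (Fin n)).symm (Polynomial.C (C a)))
        rw [optionEquivLeft_symm_C_C, optionEquivRight_C]
      · simp only [RingHom.comp_apply, RingEquiv.toRingHom_eq_coe, RingHom.coe_coe, Polynomial.coe_mapRingHom,
          Polynomial.map_X]
        rw [RingEquiv.symm_apply_eq]
        change _ = optionEquivRight K (Fin n) ((optionEquivLeft K (Fin n)).symm Polynomial.X)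
        rw [optionEquivLeft_symm_X, optionEquivRight_X_none]
    exact RingHom.congr_fun this p
  let L := FractionRing (Polynomial K)
  let ψ : MvPolynomial (Fin n) (Polynomial K) →+* MvPolynomial (Fin n) L :=
    map (algebraMap (Polynomial K) L)
  have hψ : Function.Injective ψ := map_injective _ (IsFractionRing.injective _ _)
  obtain ⟨r, A, B, hAB, hBA⟩ := ih L m ((E.map φ.toRingHom).map ψ)
    (map_idem (map_idem hE φ.toRingHom) ψ)
  obtain ⟨c, hc, A', hA'⟩ := clear_denoms (nonZeroDivisors (Polynomial K)) A
  obtain ⟨d, hd, B', hB'⟩ := clear_denoms (nonZeroDivisors (Polynomial K)) B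
  have hcd : c * d ≠ 0 := mul_ne_zero (nonZeroDivisors.ne_zero hc) (nonZeroDivisors.ne_zero hd)
  -- make it monic
  let l : K := (c * d).leadingCoeff⁻¹
  have hl : l ≠ 0 := inv_ne_zero (Polynomial.leadingCoeff_ne_zero.mpr hcd)
  have hmon : (Polynomial.C l * (c * d)).Monic := by
    rw [mul_comm]
    exact Polynomial.monic_mul_leadingCoeff_inv hcd
  set f := Polynomial.C l * (c * d) with hf
  let A'' := (C (Polynomial.C l) : MvPolynomial (Fin n) (Polynomial K)) • A'
  have hA'' : A''.map ψ = (ψ (C (Polynomial.C l * c))) • A := by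
    have : A''.map ψ = ψ (C (Polynomial.C l)) • A'.map ψ := by
      ext1 i j; simp [A'']
    rw [this, hA', smul_smul]; simp [ψ]
  have hB'' : B'.map ψ = (ψ (C d)) • B := by rw [hB']; simp [ψ]
  have e1 : A'' * B' = (C f : MvPolynomial (Fin n) (Polynomial K)) • E.map φ.toRingHom := by
    apply Matrix.map_injective hψ
    beta_reduce
    have : ((C f : MvPolynomial (Fin n) (Polynomial K)) • E.map φ.toRingHom).map ψ =
      ψ (C f) • (E.map φ.toRingHom).map ψ := by ext1 i j; simp
    rw [this, Matrix.map_mul, hA'', hB'', ← hAB, Matrix.smul_mul, Matrix.mul_smul, smul_smul,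
      ← map_mul, ← map_mul, hf, mul_assoc]
  have e2 : B' * A'' = (C f : MvPolynomial (Fin n) (Polynomial K)) • 1 := by
    apply Matrix.map_injective hψ
    beta_reduce
    have : ((C f : MvPolynomial (Fin n) (Polynomial K)) • (1 : Matrix (Fin r) (Fin r) _)).map ψ =
      ψ (C f) • 1 := by ext1 i j; simp [Matrix.one_apply]; split_ifs <;> simp
    rw [this, Matrix.map_mul, hA'', hB'', Matrix.smul_mul, Matrix.mul_smul, smul_smul, hBA,
      ← map_mul, ← map_mul, hf]
    congr 3; ring
  have e3 : E.map φ.toRingHom * A'' = A'' := by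
    apply Matrix.map_injective hψ
    beta_reduce
    rw [Matrix.map_mul, hA'', Matrix.mul_smul, ← hAB, Matrix.mul_assoc, hBA, Matrix.mul_one]
  have e4 : B' * E.map φ.toRingHom = B' := by
    apply Matrix.map_injective hψ
    beta_reduce
    rw [Matrix.map_mul, hB'', Matrix.smul_mul, ← hAB, ← Matrix.mul_assoc, hBA, Matrix.one_mul]
  -- back to `R[X]`
  have hback : (E.map φ.toRingHom).map φ.symm.toRingHom = E := by ext1 i j; simp
  set U := A''.map φ.symm.toRingHom with hU
  set V := B'.map φ.symm.toRingHom with hV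
  set F : Polynomial R := f.map C with hF
  have hFm : F.Monic := hmon.map _
  have g1 : U * V = F • E := by
    rw [hU, hV, ← Matrix.map_mul, e1, hF, ← hφ]
    ext1 i j; simp
  have g2 : V * U = F • 1 := by
    rw [hU, hV, ← Matrix.map_mul, e2, hF, ← hφ]
    ext1 i j; simp [Matrix.one_apply]; split_ifs <;> simp
  have g3 : E * U = U := by
    conv_lhs => rw [hU, ← hback, ← Matrix.map_mul, e3]
  have g4 : V * E = V := by
    conv_lhs => rw [hV, ← hback, ← Matrix.map_mul, e4]
  exact horrocks_global (ih K) E hE F hFm U V g1 g2 g3 g4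

theorem quillen_suslin (n : ℕ) : ∀ (K : Type u) [Field K], PF (MvPolynomial (Fin n) K) := by
  induction n with
  | zero =>
    intro K _
    exact (PF.of_isLocalRing (R := K)).of_equiv (isEmptyAlgEquiv K (Fin 0)).symm.toRingEquiv
  | succ n ih =>
    intro K _
    exact (qs_step n ih).of_equiv (finSuccEquiv K n).symm.toRingEquiv

theorem quillen_suslin' (σ : Type*) [Finite σ] (K : Type u) [Field K] : PF (MvPolynomial σ K) := by
  obtain ⟨n, ⟨e⟩⟩ := Finite.exists_equiv_fin σ
  exact (quillen_suslin n K).of_equiv (renameEquiv K e.symm).toRingEquiv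

end QuillenSuslin

section LindelPatch

/-- units approximable by `𝓑`-units -/
def Good {S : Type*} [CommRing S] (𝓐 𝓑 : Subring S) (h : S) {n : Type*} [Fintype n] [DecidableEq n]
    (X X' : Matrix n n S) : Prop :=
  X * X' = 1 ∧ X' * X = 1 ∧ ∀ M : ℕ, ∃ Y ∈ 𝓑.matrix (n := n), ∃ Y' ∈ 𝓑.matrix (n := n),
    Y * Y' = 1 ∧ Y' * Y = 1 ∧ ∃ a ∈ 𝓐.matrix (n := n), ∃ b ∈ 𝓐.matrix (n := n),
      X * Y' = 1 + h ^ M • a ∧ Y * X' = 1 + h ^ M • b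

variable {S : Type*} [CommRing S] {𝓐 𝓑 : Subring S} {h : S} {n : Type*} [Fintype n] [DecidableEq n]

theorem smul_mem_matrix {c : S} (hc : c ∈ 𝓐) {a : Matrix n n S} (ha : a ∈ 𝓐.matrix (n := n)) :
    c • a ∈ 𝓐.matrix (n := n) := fun i j => 𝓐.mul_mem hc (ha i j)

theorem exists_denom (hA : h ∈ 𝓐) (hden : ∀ x, ∃ k : ℕ, h ^ k * x ∈ 𝓐) (X : Matrix n n S) :
    ∃ k : ℕ, h ^ k • X ∈ 𝓐.matrix (n := n) := by
  choose k hk using hden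
  let K := ∑ i, ∑ j, k (X i j)
  refine ⟨K, fun i j => ?_⟩
  have hle : k (X i j) ≤ K :=
    (Finset.single_le_sum (f := fun j => k (X i j)) (fun _ _ => Nat.zero_le _)
      (Finset.mem_univ j)).trans
    (Finset.single_le_sum (f := fun i => ∑ j, k (X i j)) (fun _ _ => Nat.zero_le _)
      (Finset.mem_univ i))
  obtain ⟨d, hd⟩ := Nat.exists_eq_add_of_le' hle
  rw [Matrix.smul_apply, hd, pow_add, smul_eq_mul, mul_assoc]
  exact 𝓐.mul_mem (𝓐.pow_mem hA _) (hk _)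

theorem Good.mul (hA : h ∈ 𝓐) (hden : ∀ x, ∃ k : ℕ, h ^ k * x ∈ 𝓐) {X X' Z Z' : Matrix n n S}
    (hX : Good 𝓐 𝓑 h X X') (hZ : Good 𝓐 𝓑 h Z Z') : Good 𝓐 𝓑 h (X * Z) (Z' * X') := by
  obtain ⟨x1, x2, hX⟩ := hX
  obtain ⟨z1, z2, hZ⟩ := hZ
  refine ⟨?_, ?_, fun M => ?_⟩
  · rw [Matrix.mul_assoc, ← Matrix.mul_assoc Z, z1, Matrix.one_mul, x1]
  · rw [Matrix.mul_assoc, ← Matrix.mul_assoc X', x2, Matrix.one_mul, z2]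
  obtain ⟨k, hk⟩ := exists_denom hA hden X
  obtain ⟨k', hk'⟩ := exists_denom hA hden X'
  obtain ⟨Y, hY, Y', hY', y1, y2, a, ha, b, hb, e1, e2⟩ := hX M
  obtain ⟨W, hW, W', hW', w1, w2, c, hc, d, hd, f1, f2⟩ := hZ (M + k + k')
  refine ⟨Y * W, Subring.mul_mem _ hY hW, W' * Y', Subring.mul_mem _ hW' hY', ?_, ?_, ?_⟩
  · rw [Matrix.mul_assoc, ← Matrix.mul_assoc W, w1, Matrix.one_mul, y1]
  · rw [Matrix.mul_assoc, ← Matrix.mul_assoc Y', y2, Matrix.one_mul, w2]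
  have key : ∀ t : Matrix n n S, X * (1 + h ^ (M + k + k') • t) * X' =
      1 + h ^ M • ((h ^ k • X) * t * (h ^ k' • X')) := by
    intro t
    rw [Matrix.mul_add, Matrix.add_mul, Matrix.mul_one, x1]
    simp only [Matrix.smul_mul, Matrix.mul_smul, smul_smul, pow_add]
    congr 2; ring
  have hmM : h ^ M ∈ 𝓐 := 𝓐.pow_mem hA M
  have prodlem : ∀ s t : Matrix n n S, (1 + h ^ M • s) * (1 + h ^ M • t) =
      1 + h ^ M • (s + t + h ^ M • (s * t)) := by
    intro s t
    simp only [Matrix.mul_add, Matrix.add_mul, Matrix.mul_one, Matrix.one_mul, Matrix.smul_mul,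
      Matrix.mul_smul, smul_add]
    abel
  have hc' := Subring.mul_mem _ (Subring.mul_mem _ hk hc) hk'
  have hd' := Subring.mul_mem _ (Subring.mul_mem _ hk hd) hk'
  refine ⟨((h ^ k • X) * c * (h ^ k' • X')) + a + h ^ M • (((h ^ k • X) * c * (h ^ k' • X')) * a),
    ?_, b + ((h ^ k • X) * d * (h ^ k' • X')) + h ^ M • (b * ((h ^ k • X) * d * (h ^ k' • X'))),
    ?_, ?_, ?_⟩
  rotate_left 2
  · calc X * Z * (W' * Y') = (X * (Z * W') * X') * (X * Y') := by
          simp only [Matrix.mul_assoc]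
          rw [← Matrix.mul_assoc X', x2, Matrix.one_mul]
      _ = _ := by rw [f1, key, e1, prodlem]
  · calc Y * W * (Z' * X') = (Y * X') * (X * (W * Z') * X') := by
          simp only [Matrix.mul_assoc]
          rw [← Matrix.mul_assoc X' X, x2, Matrix.one_mul]
      _ = _ := by rw [f2, key, e2, prodlem]
  · exact Subring.add_mem _ (Subring.add_mem _ hc' ha) (smul_mem_matrix hmM (Subring.mul_mem _ hc' ha))
  · exact Subring.add_mem _ (Subring.add_mem _ hb hd') (smul_mem_matrix hmM (Subring.mul_mem _ hb hd'))

theorem approx_matrix (happ : ∀ (x : S) (M : ℕ), ∃ y ∈ 𝓑, ∃ a ∈ 𝓐, x = y + h ^ M * a)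
    (X : Matrix n n S) (M : ℕ) : ∃ Y ∈ 𝓑.matrix (n := n), ∃ a ∈ 𝓐.matrix (n := n),
      X = Y + h ^ M • a := by
  choose y hy a ha hx using happ
  exact ⟨Matrix.of fun i j => y (X i j) M, fun i j => hy _ _, Matrix.of fun i j => a (X i j) M,
    fun i j => ha _ _, by ext i j; exact hx _ _⟩

theorem fromBlocks_mem {a b c d : Matrix n n S} (ha : a ∈ 𝓐.matrix (n := n))
    (hb : b ∈ 𝓐.matrix (n := n)) (hc : c ∈ 𝓐.matrix (n := n)) (hd : d ∈ 𝓐.matrix (n := n)) :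
    Matrix.fromBlocks a b c d ∈ 𝓐.matrix (n := n ⊕ n) := by
  rintro (i | i) (j | j)
  exacts [ha i j, hb i j, hc i j, hd i j]

theorem good_e12 (happ : ∀ (x : S) (M : ℕ), ∃ y ∈ 𝓑, ∃ a ∈ 𝓐, x = y + h ^ M * a)
    (x : Matrix n n S) :
    Good 𝓐 𝓑 h (Matrix.fromBlocks 1 x 0 1) (Matrix.fromBlocks 1 (-x) 0 1) := by
  have key : ∀ x y : Matrix n n S, (Matrix.fromBlocks 1 x 0 1 : Matrix (n ⊕ n) (n ⊕ n) S) * Matrix.fromBlocks 1 y 0 1 =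
      Matrix.fromBlocks 1 (x + y) 0 1 := by
    intro x y; simp [Matrix.fromBlocks_multiply, add_comm]
  refine ⟨by rw [key]; simp, by rw [key]; simp, fun M => ?_⟩
  obtain ⟨y, hy, a, ha, rfl⟩ := approx_matrix happ x M
  refine ⟨Matrix.fromBlocks 1 y 0 1, fromBlocks_mem (Subring.one_mem _) hy (Subring.zero_mem _)
    (Subring.one_mem _), Matrix.fromBlocks 1 (-y) 0 1, fromBlocks_mem (Subring.one_mem _)
    (Subring.neg_mem _ hy) (Subring.zero_mem _) (Subring.one_mem _), by rw [key]; simp,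
    by rw [key]; simp, Matrix.fromBlocks 0 a 0 0, fromBlocks_mem (Subring.zero_mem _) ha
    (Subring.zero_mem _) (Subring.zero_mem _), Matrix.fromBlocks 0 (-a) 0 0,
    fromBlocks_mem (Subring.zero_mem _) (Subring.neg_mem _ ha)
    (Subring.zero_mem _) (Subring.zero_mem _), ?_, ?_⟩
  · rw [key, ← Matrix.fromBlocks_one, Matrix.fromBlocks_smul, Matrix.fromBlocks_add]; simp
  · rw [key, ← Matrix.fromBlocks_one, Matrix.fromBlocks_smul, Matrix.fromBlocks_add]; simp

theorem good_e21 (happ : ∀ (x : S) (M : ℕ), ∃ y ∈ 𝓑, ∃ a ∈ 𝓐, x = y + h ^ M * a)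
    (x : Matrix n n S) :
    Good 𝓐 𝓑 h (Matrix.fromBlocks 1 0 x 1) (Matrix.fromBlocks 1 0 (-x) 1) := by
  have key : ∀ x y : Matrix n n S, (Matrix.fromBlocks 1 0 x 1 : Matrix (n ⊕ n) (n ⊕ n) S) * Matrix.fromBlocks 1 0 y 1 =
      Matrix.fromBlocks 1 0 (x + y) 1 := by
    intro x y; simp [Matrix.fromBlocks_multiply]
  refine ⟨by rw [key]; simp, by rw [key]; simp, fun M => ?_⟩
  obtain ⟨y, hy, a, ha, rfl⟩ := approx_matrix happ x M
  refine ⟨Matrix.fromBlocks 1 0 y 1, fromBlocks_mem (Subring.one_mem _) (Subring.zero_mem _) hy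
    (Subring.one_mem _), Matrix.fromBlocks 1 0 (-y) 1, fromBlocks_mem (Subring.one_mem _)
    (Subring.zero_mem _) (Subring.neg_mem _ hy) (Subring.one_mem _), by rw [key]; simp,
    by rw [key]; simp, Matrix.fromBlocks 0 0 a 0, fromBlocks_mem (Subring.zero_mem _)
    (Subring.zero_mem _) ha (Subring.zero_mem _), Matrix.fromBlocks 0 0 (-a) 0,
    fromBlocks_mem (Subring.zero_mem _) (Subring.zero_mem _) (Subring.neg_mem _ ha)
    (Subring.zero_mem _), ?_, ?_⟩
  · rw [key, ← Matrix.fromBlocks_one, Matrix.fromBlocks_smul, Matrix.fromBlocks_add]; simp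
  · rw [key, ← Matrix.fromBlocks_one, Matrix.fromBlocks_smul, Matrix.fromBlocks_add]; simp

theorem good_w : Good 𝓐 𝓑 h (Matrix.fromBlocks 0 (-1) 1 0 : Matrix (n ⊕ n) (n ⊕ n) S)
    (Matrix.fromBlocks 0 1 (-1) 0) := by
  have e1 : (Matrix.fromBlocks 0 (-1) 1 0 : Matrix (n ⊕ n) (n ⊕ n) S) *
    (Matrix.fromBlocks 0 1 (-1) 0) = 1 := by simp [Matrix.fromBlocks_multiply]
  have e2 : (Matrix.fromBlocks 0 1 (-1) 0 : Matrix (n ⊕ n) (n ⊕ n) S) *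
    (Matrix.fromBlocks 0 (-1) 1 0) = 1 := by simp [Matrix.fromBlocks_multiply]
  refine ⟨e1, e2, fun M => ⟨_, ?_, _, ?_, e1, e2, 0, Subring.zero_mem _, 0, Subring.zero_mem _,
    by simpa using e1, by simpa using e1⟩⟩
  · exact fromBlocks_mem (Subring.zero_mem _) (Subring.neg_mem _ (Subring.one_mem _))
      (Subring.one_mem _) (Subring.zero_mem _)
  · exact fromBlocks_mem (Subring.zero_mem _) (Subring.one_mem _)
      (Subring.neg_mem _ (Subring.one_mem _)) (Subring.zero_mem _)

theorem good_diag (hA : h ∈ 𝓐) (hden : ∀ x, ∃ k : ℕ, h ^ k * x ∈ 𝓐)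
    (happ : ∀ (x : S) (M : ℕ), ∃ y ∈ 𝓑, ∃ a ∈ 𝓐, x = y + h ^ M * a)
    (τ : Matrix n n S) (hτ : τ * τ = 1) :
    Good 𝓐 𝓑 h (Matrix.fromBlocks τ 0 0 τ) (Matrix.fromBlocks τ 0 0 τ) := by
  have := (((good_e12 happ τ).mul hA hden (good_e21 happ (-τ))).mul hA hden
    (good_e12 happ τ)).mul hA hden good_w
  convert this using 1
  · simp [Matrix.fromBlocks_multiply, hτ]
  · simp [Matrix.fromBlocks_multiply, hτ]

/-- Lindel's patching, abstract form. -/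
theorem lindel_abs (hA : h ∈ 𝓐) (hden : ∀ x, ∃ k : ℕ, h ^ k * x ∈ 𝓐)
    (happ : ∀ (x : S) (M : ℕ), ∃ y ∈ 𝓑, ∃ a ∈ 𝓐, x = y + h ^ M * a)
    {m : ℕ} {E : Matrix (Fin m) (Fin m) S} (hEA : ∀ i j, E i j ∈ 𝓐) (hE : E * E = E) (hs : Spl E) :
    ∃ (N : ℕ) (F : Matrix (Fin N) (Fin N) S) (U : Matrix (Fin m) (Fin N) S)
      (V : Matrix (Fin N) (Fin m) S), F * F = F ∧ U * V = E ∧ V * U = F ∧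
      (∀ i j, F i j ∈ 𝓐 ⊓ 𝓑) ∧ (∀ i j, U i j ∈ 𝓐) ∧ (∀ i j, V i j ∈ 𝓐) := by
  obtain ⟨r, U, V, hUV, hVU⟩ := hs
  have hEU : E * U = U := by rw [← hUV, Matrix.mul_assoc, hVU, Matrix.mul_one]
  have hVE : V * E = V := by rw [← hUV, ← Matrix.mul_assoc, hVU, Matrix.one_mul]
  let τ : Matrix (Fin m ⊕ Fin r) (Fin m ⊕ Fin r) S := Matrix.fromBlocks (1 - E) U V 0
  have hτ : τ * τ = 1 := by
    simp only [τ]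
    rw [Matrix.fromBlocks_multiply, ← Matrix.fromBlocks_one]
    congr 1
    · rw [Matrix.sub_mul, Matrix.mul_sub, Matrix.mul_sub, hE, hUV]; simp
    · rw [Matrix.sub_mul, hEU]; simp
    · rw [Matrix.mul_sub, hVE]; simp
    · simp [hVU]
  obtain ⟨d1, d2, hd⟩ := good_diag (n := Fin m ⊕ Fin r) hA hden happ τ hτ
  set δ := Matrix.fromBlocks τ 0 0 τ with hδ
  obtain ⟨Y, hY, Y', hY', y1, y2, a, ha, b, hb, e1, e2⟩ := hd 0
  let E0 : Matrix (Fin m ⊕ Fin r) (Fin m ⊕ Fin r) S := Matrix.fromBlocks E 0 0 0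
  let P0 : Matrix (Fin m ⊕ Fin r) (Fin m ⊕ Fin r) S := Matrix.fromBlocks 0 0 0 1
  let E1 : Matrix ((Fin m ⊕ Fin r) ⊕ (Fin m ⊕ Fin r)) ((Fin m ⊕ Fin r) ⊕ (Fin m ⊕ Fin r)) S := Matrix.fromBlocks E0 0 0 0
  let P1 : Matrix ((Fin m ⊕ Fin r) ⊕ (Fin m ⊕ Fin r)) ((Fin m ⊕ Fin r) ⊕ (Fin m ⊕ Fin r)) S := Matrix.fromBlocks P0 0 0 0
  have h0 : τ * E0 * τ = P0 := by
    simp only [τ, E0, P0]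
    rw [Matrix.fromBlocks_multiply, Matrix.fromBlocks_multiply]
    have : (1 - E) * E = 0 := by rw [Matrix.sub_mul, hE]; simp
    rw [this, hVE]
    simp [Matrix.mul_sub, hVE, hVU]
  have h1 : δ * E1 * δ = P1 := by
    simp only [hδ, E1, P1]
    rw [Matrix.fromBlocks_multiply, Matrix.fromBlocks_multiply, ← h0]; simp
  have hP1 : P1 ∈ 𝓑.matrix (n := ((Fin m ⊕ Fin r) ⊕ (Fin m ⊕ Fin r))) := by
    refine fromBlocks_mem ?_ (Subring.zero_mem _) (Subring.zero_mem _) (Subring.zero_mem _)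
    rintro (i | i) (j | j)
    · exact 𝓑.zero_mem
    · exact 𝓑.zero_mem
    · exact 𝓑.zero_mem
    · simp only [P0, Matrix.fromBlocks_apply₂₂, Matrix.one_apply]
      split_ifs
      exacts [𝓑.one_mem, 𝓑.zero_mem]
  have hE1 : E1 ∈ 𝓐.matrix (n := ((Fin m ⊕ Fin r) ⊕ (Fin m ⊕ Fin r))) := by
    refine fromBlocks_mem ?_ (Subring.zero_mem _) (Subring.zero_mem _) (Subring.zero_mem _)
    rintro (i | i) (j | j)
    · exact hEA i j
    all_goals exact 𝓐.zero_mem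
  have hα : δ * Y' ∈ 𝓐.matrix (n := ((Fin m ⊕ Fin r) ⊕ (Fin m ⊕ Fin r))) := by
    rw [e1, pow_zero, one_smul]; exact Subring.add_mem _ (Subring.one_mem _) ha
  have hβ : Y * δ ∈ 𝓐.matrix (n := ((Fin m ⊕ Fin r) ⊕ (Fin m ⊕ Fin r))) := by
    rw [e2, pow_zero, one_smul]; exact Subring.add_mem _ (Subring.one_mem _) hb
  have hαβ : (δ * Y') * (Y * δ) = 1 := by
    rw [Matrix.mul_assoc, ← Matrix.mul_assoc Y', y2, Matrix.one_mul, d1]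
  have hF : (Y * δ) * E1 * (δ * Y') = Y * P1 * Y' := by
    rw [← h1]; simp only [Matrix.mul_assoc]
  have hE1E1 : E1 * E1 = E1 := by
    simp only [E1, E0]
    rw [Matrix.fromBlocks_multiply, Matrix.fromBlocks_multiply]; simp [hE]
  let J : Matrix (Fin m) ((Fin m ⊕ Fin r) ⊕ (Fin m ⊕ Fin r)) S := (1 : Matrix ((Fin m ⊕ Fin r) ⊕ (Fin m ⊕ Fin r)) ((Fin m ⊕ Fin r) ⊕ (Fin m ⊕ Fin r)) S).submatrix (fun i => Sum.inl (Sum.inl i)) id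
  let J' : Matrix ((Fin m ⊕ Fin r) ⊕ (Fin m ⊕ Fin r)) (Fin m) S := (1 : Matrix ((Fin m ⊕ Fin r) ⊕ (Fin m ⊕ Fin r)) ((Fin m ⊕ Fin r) ⊕ (Fin m ⊕ Fin r)) S).submatrix id (fun i => Sum.inl (Sum.inl i))
  have hJE : J * E1 * J' = E := by
    ext1 i j
    simp [J, J', Matrix.mul_apply, Matrix.one_apply, E1, E0]
  have hJ'J : E1 * J' * J * E1 = E1 := by
    have : J' * J = Matrix.fromBlocks (Matrix.fromBlocks 1 0 0 0) 0 0 0 := by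
      ext1 i j
      rcases i with (i | i) | i <;> rcases j with (j | j) | j <;>
        simp [J, J', Matrix.mul_apply, Matrix.one_apply, eq_comm]
    rw [Matrix.mul_assoc E1, this]
    simp only [E1, E0]
    simp [Matrix.fromBlocks_multiply, hE]
  let U2 : Matrix (Fin m) ((Fin m ⊕ Fin r) ⊕ (Fin m ⊕ Fin r)) S := J * (E1 * (δ * Y'))
  let V2 : Matrix ((Fin m ⊕ Fin r) ⊕ (Fin m ⊕ Fin r)) (Fin m) S := (Y * δ) * E1 * J'
  have hUV2 : U2 * V2 = E := by
    calc _ = J * (E1 * ((δ * Y') * (Y * δ)) * E1) * J' := by simp only [U2, V2, Matrix.mul_assoc]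
      _ = E := by rw [hαβ, Matrix.mul_one, hE1E1, hJE]
  have hVU2 : V2 * U2 = (Y * δ) * E1 * (δ * Y') := by
    calc _ = (Y * δ) * (E1 * J' * J * E1) * (δ * Y') := by simp only [U2, V2, Matrix.mul_assoc]
      _ = _ := by rw [hJ'J]
  have hFA := Subring.mul_mem _ (Subring.mul_mem _ hβ hE1) hα
  have hFB := Subring.mul_mem _ (Subring.mul_mem _ hY hP1) hY'
  have hFF : ((Y * δ) * E1 * (δ * Y')) * ((Y * δ) * E1 * (δ * Y')) = (Y * δ) * E1 * (δ * Y') := by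
    calc _ = (Y * δ) * (E1 * ((δ * Y') * (Y * δ)) * E1) * (δ * Y') := by
          simp only [Matrix.mul_assoc]
      _ = _ := by rw [hαβ, Matrix.mul_one, hE1E1]
  have hUm : ∀ i j, U2 i j ∈ 𝓐 := by
    intro i j
    have : U2 = (E1 * (δ * Y')).submatrix (fun i => Sum.inl (Sum.inl i)) id := by
      ext1 i j; simp [U2, J, Matrix.mul_apply, Matrix.one_apply]
    rw [this]
    exact Subring.mul_mem _ hE1 hα _ _
  have hVm : ∀ i j, V2 i j ∈ 𝓐 := by
    intro i j
    have : V2 = ((Y * δ) * E1).submatrix id (fun i => Sum.inl (Sum.inl i)) := by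
      ext1 i j; simp only [V2, J']; rw [Matrix.mul_apply]; simp [Matrix.one_apply]
    rw [this]
    exact Subring.mul_mem _ hβ hE1 _ _
  let e := Fintype.equivFin ((Fin m ⊕ Fin r) ⊕ (Fin m ⊕ Fin r))
  refine ⟨Fintype.card ((Fin m ⊕ Fin r) ⊕ (Fin m ⊕ Fin r)), ((Y * δ) * E1 * (δ * Y')).submatrix e.symm e.symm, U2.submatrix id e.symm,
    V2.submatrix e.symm id, ?_, ?_, ?_, ?_, ?_, ?_⟩
  · rw [Matrix.submatrix_mul_equiv, hFF]
  · rw [Matrix.submatrix_mul_equiv, hUV2]; simp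
  · rw [← Matrix.submatrix_mul _ _ _ _ _ Function.bijective_id, hVU2]
  · intro i j
    exact ⟨hFA _ _, by rw [hF]; exact hFB _ _⟩
  · intro i j; exact hUm _ _
  · intro i j; exact hVm _ _

end LindelPatch

section LindelPatch2

open MvPolynomial

theorem lindel_abs2 {B A S : Type*} [CommRing B] [CommRing A] [CommRing S] (j : B →+* A)
    (φ : A →+* S) (h : B) (hj : Function.Injective j) (hφ : Function.Injective φ)
    (hu : IsUnit (φ (j h))) (hden : ∀ x : S, ∃ (k : ℕ) (a : A), φ (j h) ^ k * x = φ a)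
    (h1 : ∀ a : A, ∃ (b : B) (a' : A), a = j b + j h * a')
    (h2 : ∀ (b : B) (a : A), j b = j h * a → h ∣ b) (hB : PF B)
    {m : ℕ} {E : Matrix (Fin m) (Fin m) A} (hE : E * E = E) (hs : Spl (E.map φ)) : Spl E := by
  let 𝓑 : Subring S :=
    { carrier := {x | ∃ (k : ℕ) (b : B), φ (j h) ^ k * x = φ (j b)}
      mul_mem' := by
        rintro x y ⟨k, b, hb⟩ ⟨k', b', hb'⟩
        refine ⟨k + k', b * b', ?_⟩
        rw [map_mul, map_mul, ← hb, ← hb']; ring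
      one_mem' := ⟨0, 1, by simp⟩
      add_mem' := by
        rintro x y ⟨k, b, hb⟩ ⟨k', b', hb'⟩
        refine ⟨k + k', h ^ k' * b + h ^ k * b', ?_⟩
        simp only [map_add, map_mul, map_pow]
        rw [← hb, ← hb']; ring
      zero_mem' := ⟨0, 0, by simp⟩
      neg_mem' := by
        rintro x ⟨k, b, hb⟩
        exact ⟨k, -b, by rw [map_neg, map_neg, ← hb]; ring⟩ }
  have h1' : ∀ (M : ℕ) (a : A), ∃ (b : B) (a' : A), a = j b + j h ^ M * a' := by
    intro M
    induction M with
    | zero => exact fun a => ⟨0, a, by simp⟩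
    | succ M ih =>
      intro a
      obtain ⟨b, a', ha⟩ := ih a
      obtain ⟨b', a'', ha'⟩ := h1 a'
      refine ⟨b + h ^ M * b', a'', ?_⟩
      rw [ha, ha']; simp; ring
  have h2' : ∀ (M : ℕ) (b : B) (a : A), j b = j h ^ M * a → ∃ b', a = j b' := by
    intro M
    induction M with
    | zero => exact fun b a hb => ⟨b, by simpa using hb.symm⟩
    | succ M ih =>
      intro b a hb
      obtain ⟨b', rfl⟩ := h2 b (j h ^ M * a) (by rw [hb]; ring)
      refine ih b' a ?_
      apply hφ
      apply hu.mul_left_cancel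
      rw [← map_mul, ← map_mul, ← map_mul, hb]; ring_nf
  obtain ⟨N, F, U, V, hF, hUV, hVU, hFm, hUm, hVm⟩ :=
    lindel_abs (𝓐 := φ.range) (𝓑 := 𝓑) (h := φ (j h)) ⟨_, rfl⟩
      (fun x => by obtain ⟨k, a, ha⟩ := hden x; exact ⟨k, a, ha.symm⟩)
      (by
        intro x M
        obtain ⟨k, a, ha⟩ := hden x
        obtain ⟨b, a', hba⟩ := h1' (M + k) a
        obtain ⟨u, hu'⟩ := (hu.pow k).exists_left_inv
        refine ⟨u * φ (j b), ⟨k, b, ?_⟩, φ a', ⟨_, rfl⟩, ?_⟩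
        · rw [← mul_assoc, mul_comm _ u, hu', one_mul]
        · calc x = u * (φ (j h) ^ k * x) := by rw [← mul_assoc, hu', one_mul]
            _ = _ := by
              rw [ha, hba, map_add, map_mul, map_pow, pow_add, mul_add]
              congr 1
              calc u * (φ (j h) ^ M * φ (j h) ^ k * φ a') =
                  (u * φ (j h) ^ k) * (φ (j h) ^ M * φ a') := by ring
                _ = _ := by rw [hu', one_mul])
      (E := E.map φ) (fun i j => ⟨_, rfl⟩) (map_idem hE φ) hs
  have hFB : ∀ i i', ∃ b, φ (j b) = F i i' := by
    intro i i'
    obtain ⟨⟨a, ha⟩, ⟨k, b, hb⟩⟩ := hFm i i'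
    rw [← ha] at hb
    obtain ⟨b', rfl⟩ := h2' k b a (hφ (by rw [map_mul, map_pow, hb]))
    exact ⟨b', ha⟩
  choose F0 hF0 using hFB
  choose U0 hU0 using hUm
  choose V0 hV0 using hVm
  have eF : F = ((Matrix.of F0).map j).map φ := by ext a b; exact (hF0 a b).symm
  have eU : U = (Matrix.of U0).map φ := by ext a b; exact (hU0 a b).symm
  have eV : V = (Matrix.of V0).map φ := by ext a b; exact (hV0 a b).symm
  subst eF eU eV
  rw [← Matrix.map_mul] at hF hUV hVU
  have hF' := Matrix.map_injective hφ hF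
  have hUV' := Matrix.map_injective hφ hUV
  have hVU' := Matrix.map_injective hφ hVU
  rw [← Matrix.map_mul] at hF'
  have hF'' := Matrix.map_injective hj hF'
  exact MvN.spl ⟨_, _, hUV', hVU'⟩ hE (map_idem hF'' j) ((hB _ _ hF'').map j)

/-- Lindel's patching. -/
theorem lindel_patch {B A L : Type*} [CommRing B] [CommRing A] [IsDomain A] [CommRing L]
    [Algebra B A] [Algebra A L] (h : B) (hj : Function.Injective (algebraMap B A)) (hh : h ≠ 0)
    [IsLocalization.Away (algebraMap B A h) L]
    (h1 : ∀ a : A, ∃ (b : B) (a' : A), a = algebraMap B A b + algebraMap B A h * a')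
    (h2 : ∀ (b : B) (a : A), algebraMap B A b = algebraMap B A h * a → h ∣ b)
    {τ : Type*} (hB : PF (MvPolynomial τ B))
    {m : ℕ} {E : Matrix (Fin m) (Fin m) (MvPolynomial τ A)} (hE : E * E = E)
    (hs : Spl (E.map (map (algebraMap A L)))) : Spl E := by
  classical
  have hne : algebraMap B A h ≠ 0 := fun h0 => hh (hj (by rw [h0, map_zero]))
  have hinj : Function.Injective (algebraMap A L) :=
    IsLocalization.injective L (powers_le_nonZeroDivisors_of_noZeroDivisors hne)
  refine lindel_abs2 (map (algebraMap B A)) (map (algebraMap A L)) (C h)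
    (map_injective _ hj) (map_injective _ hinj) ?_ ?_ ?_ ?_ hB hE hs
  · rw [map_C, map_C]
    exact (IsLocalization.Away.algebraMap_isUnit (algebraMap B A h)).map C
  · intro x
    obtain ⟨_, ⟨k, rfl⟩, A', hA'⟩ := clear_denoms (Submonoid.powers (algebraMap B A h))
      (Matrix.of fun (_ _ : Unit) => x : Matrix Unit Unit (MvPolynomial τ L))
    refine ⟨k, A' () (), ?_⟩
    have := congrFun (congrFun hA' ()) ()
    simp at this
    simp [this]
  · intro a
    choose b a' hab using h1
    refine ⟨∑ s ∈ a.support, monomial s (b (a.coeff s)), ∑ s ∈ a.support, monomial s (a' (a.coeff s)), ?_⟩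
    rw [map_sum, Finset.mul_sum, ← Finset.sum_add_distrib]
    conv_lhs => rw [a.as_sum]
    refine Finset.sum_congr rfl fun s _ => ?_
    rw [map_monomial, map_C, C_mul_monomial, ← map_add, ← hab]
  · intro b a hb
    rw [C_dvd_iff_dvd_coeff]
    intro s
    apply h2 _ (a.coeff s)
    have := congrArg (coeff s) hb
    rwa [coeff_map, map_C, coeff_C_mul] at this

end LindelPatch2

section Scaling

open MvPolynomial

theorem scale_denom {D L τ : Type*} [CommRing D] [CommRing L] [Algebra D L] (M : Submonoid D)
    [IsLocalization M L] (f : MvPolynomial τ L) :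
    ∃ s ∈ M, ∀ s', s ∣ s' → aeval (fun i => C (algebraMap D L s') * X i) f - C (constantCoeff f) ∈
      (map (σ := τ) (algebraMap D L)).range := by
  obtain ⟨s, hs, h⟩ := scl_denom M (rename (Sum.inr : τ → τ ⊕ τ) f)
  refine ⟨s, hs, fun s' hs' => ?_⟩
  obtain ⟨g, hg⟩ := h s' hs'
  let ε : MvPolynomial (τ ⊕ τ) L →ₐ[L] MvPolynomial τ L := aeval (Sum.elim (fun _ => 0) X)
  let ε' : MvPolynomial (τ ⊕ τ) D →ₐ[D] MvPolynomial τ D := aeval (Sum.elim (fun _ => 0) X)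
  refine ⟨ε' g, ?_⟩
  have e1 : map (algebraMap D L) (ε' g) = ε (map (algebraMap D L) g) := by
    have : (map (algebraMap D L)).comp ε'.toRingHom = ε.toRingHom.comp (map (algebraMap D L)) := by
      apply MvPolynomial.ringHom_ext
      · intro r; simp [ε, ε', algHom_C]
      · rintro (i | i) <;> simp [ε, ε']
    exact congrArg (fun q => q g) this
  have e2 : ∀ t : L, ε (scl t (rename Sum.inr f)) = aeval (fun i => C t * X i) f := by
    intro t
    have : (ε.comp (scl t)).comp (rename Sum.inr) =
      (aeval (fun i => C t * X i) : MvPolynomial τ L →ₐ[L] MvPolynomial τ L) := by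
      ext i; simp [ε, scl]
    exact congrArg (fun q => q f) this
  have e3 : aeval (fun i => C (0 : L) * X i : τ → MvPolynomial τ L) f = C (constantCoeff f) := by
    have h0 : (fun i => C (0 : L) * X i : τ → MvPolynomial τ L) = fun _ => 0 := by
      funext i; simp
    rw [h0, aeval_zero', algebraMap_eq]
  rw [e1, hg, map_sub, e2, e2, e3]

theorem PF.scaling {D L τ : Type*} [CommRing D] [CommRing L] [Algebra D L] (M : Submonoid D)
    [IsLocalization M L] (hinj : Function.Injective (algebraMap D L)) (hL : PF L)
    (hD : PF (MvPolynomial τ D)) : PF (MvPolynomial τ L) := by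
  classical
  intro m E hE
  have hE0 := map_idem hE (constantCoeff (R := L) (σ := τ))
  set E0 := E.map (constantCoeff (R := L) (σ := τ)) with hE0d
  obtain ⟨r, U, V, hUV, hVU⟩ := hL m E0 hE0
  have hEU : E0 * U = U := by rw [← hUV, Matrix.mul_assoc, hVU, Matrix.mul_one]
  have hVE : V * E0 = V := by rw [← hUV, ← Matrix.mul_assoc, hVU, Matrix.one_mul]
  let Z : Matrix (Fin m) (Fin r ⊕ Fin m) L := Matrix.fromCols U (1 - E0)
  let Z' : Matrix (Fin r ⊕ Fin m) (Fin m) L := Matrix.fromRows V (1 - E0)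
  have hZZ : Z * Z' = 1 := by
    simp only [Z, Z']
    rw [Matrix.fromCols_mul_fromRows, hUV, Matrix.sub_mul, Matrix.mul_sub, Matrix.mul_sub, hE0]; simp
  have hG0 : Z' * E0 * Z = Matrix.fromBlocks 1 0 0 0 := by
    simp only [Z, Z']
    rw [Matrix.fromRows_mul, Matrix.fromRows_mul_fromCols, hVE, hVU, Matrix.mul_sub, hVE,
      Matrix.sub_mul, hE0]; simp
  let c : L →+* MvPolynomial τ L := C
  let G := Z'.map c * E * Z.map c
  have hZZc : Z.map c * Z'.map c = 1 := by rw [← Matrix.map_mul, hZZ]; simp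
  have hEG : MvN E G := by
    refine ⟨E * Z.map c, Z'.map c * E, ?_, ?_⟩
    · rw [Matrix.mul_assoc, ← Matrix.mul_assoc (Z.map c), hZZc, Matrix.one_mul, hE]
    · rw [Matrix.mul_assoc, ← Matrix.mul_assoc E, hE, ← Matrix.mul_assoc]
  have hG : G * G = G := by
    calc _ = Z'.map c * (E * (Z.map c * Z'.map c) * E) * Z.map c := by
          simp only [G, Matrix.mul_assoc]
      _ = _ := by rw [hZZc, Matrix.mul_one, hE]
  have hGc : G.map (constantCoeff (R := L) (σ := τ)) = Matrix.fromBlocks 1 0 0 0 := by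
    simp only [G]
    rw [Matrix.map_mul, Matrix.map_mul, ← hG0]
    congr 2
    · ext i j; simp [c]
    · ext i j; simp [c]
  have : ∀ i j, ∃ s ∈ M, ∀ s', s ∣ s' → aeval (fun i => C (algebraMap D L s') * X i) (G i j)
      - C (constantCoeff (G i j)) ∈ (map (σ := τ) (algebraMap D L)).range :=
    fun i j => scale_denom M (G i j)
  choose s hs hsG using this
  let s0 := ∏ i, ∏ j, s i j
  have hs0 : s0 ∈ M := Submonoid.prod_mem _ fun i _ => Submonoid.prod_mem _ fun j _ => hs i j
  have hdvd : ∀ i j, s i j ∣ s0 := fun i j =>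
    (Finset.dvd_prod_of_mem (fun j => s i j) (Finset.mem_univ j)).trans
      (Finset.dvd_prod_of_mem (fun i => ∏ j, s i j) (Finset.mem_univ i))
  let u := algebraMap D L s0
  obtain ⟨w, hw⟩ := (IsLocalization.map_units L ⟨s0, hs0⟩).exists_right_inv
  let sc : L → (MvPolynomial τ L →ₐ[L] MvPolynomial τ L) := fun t => aeval (fun i => C t * X i)
  have hr : ∀ i j, ∃ g, map (algebraMap D L) g = sc u (G i j) := by
    intro i j
    obtain ⟨g, hg⟩ := hsG i j s0 (hdvd i j)
    have h2 : ∃ g', map (algebraMap D L) g' = C (σ := τ) (constantCoeff (G i j)) := by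
      have := congrFun (congrFun hGc i) j
      rw [Matrix.map_apply] at this
      rw [this]
      rcases i with i | i <;> rcases j with j | j
      · simp only [Matrix.fromBlocks_apply₁₁, Matrix.one_apply]
        split_ifs
        exacts [⟨1, by simp⟩, ⟨0, by simp⟩]
      all_goals exact ⟨0, by simp⟩
    obtain ⟨g', hg'⟩ := h2
    exact ⟨g + g', by rw [map_add, hg, hg']; simp [sc, u]⟩
  choose g hg using hr
  have eg : (Matrix.of g).map (map (algebraMap D L)) = G.map (sc u).toRingHom := by
    ext1 i j; exact hg i j
  have hgg : Matrix.of g * Matrix.of g = Matrix.of g := by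
    apply Matrix.map_injective (map_injective (σ := τ) _ hinj)
    change (Matrix.of g * Matrix.of g).map _ = (Matrix.of g).map _
    rw [Matrix.map_mul, eg, map_idem hG]
  have hsp : Spl (G.map (sc u).toRingHom) := eg ▸ (hD.spl hgg).map _
  have hsp2 := hsp.map (sc w).toRingHom
  have hcomp : (G.map (sc u).toRingHom).map (sc w).toRingHom = G := by
    have : (sc w).comp (sc u) = AlgHom.id L _ := by
      ext1 i
      simp only [sc, AlgHom.comp_apply, aeval_X, map_mul, algHom_C, AlgHom.id_apply, algebraMap_eq]
      rw [← mul_assoc, ← C_mul]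
      simp only at hw
      rw [show u * w = 1 from hw]; simp
    ext1 i j
    exact congrArg (fun q => q (G i j)) this
  rw [hcomp] at hsp2
  exact hEG.spl hE hG hsp2

end Scaling

section Induction

open MvPolynomial

theorem pf_loc_poly {k : Type u} [Field k] {σ τ : Type} [Finite σ] [Finite τ]
    (q : Ideal (MvPolynomial σ k)) [q.IsPrime] :
    PF (MvPolynomial τ (Localization.AtPrime q)) := by
  refine PF.scaling q.primeCompl (IsLocalization.injective _ q.primeCompl_le_nonZeroDivisors)
    PF.of_isLocalRing ?_
  exact (quillen_suslin' (τ ⊕ σ) k).of_equiv (sumAlgEquiv k τ σ).toRingEquiv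

/-- Output of the structure theorem (Lindel / Nashier): `A` is an étale neighbourhood of a
localization of a polynomial ring. -/
def LindelData (k : Type u) [Field k] (A : Type u) [CommRing A] [IsLocalRing A] : Prop :=
  ∃ (σ : Type) (_ : Finite σ) (q : Ideal (MvPolynomial σ k)) (_ : q.IsPrime)
    (_ : Algebra (Localization.AtPrime q) A) (h : Localization.AtPrime q),
    Function.Injective (algebraMap (Localization.AtPrime q) A) ∧
    algebraMap (Localization.AtPrime q) A h ∈ maximalIdeal A ∧
    (∀ a : A, ∃ b a', a = algebraMap (Localization.AtPrime q) A b +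
      algebraMap (Localization.AtPrime q) A h * a') ∧
    (∀ b a, algebraMap (Localization.AtPrime q) A b =
      algebraMap (Localization.AtPrime q) A h * a → h ∣ b)

theorem pf_of_struct {k : Type u} [Field k]
    (hstruct : ∀ (A : Type u) [CommRing A] [IsDomain A] [IsLocalRing A] [Algebra k A]
      [Algebra.EssFiniteType k A] [Algebra.FormallySmooth k A], ¬ IsField A → LindelData k A)
    (n : ℕ) : ∀ (A : Type u) [CommRing A] [IsDomain A] [IsLocalRing A] [Algebra k A]
      [Algebra.EssFiniteType k A] [Algebra.FormallySmooth k A],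
      (maximalIdeal A).height < n → ∀ (τ : Type) [Finite τ], PF (MvPolynomial τ A) := by
  induction n with
  | zero => intro A _ _ _ _ _ _ h; simp at h
  | succ n ih =>
  intro A _ _ _ _ _ _ hn τ _
  by_cases hA : IsField A
  · letI := hA.toField
    exact quillen_suslin' τ A
  obtain ⟨σ, _, q, _, alg, h, hinj, hm, h1, h2⟩ := hstruct A hA
  by_cases hh : h = 0
  · have hb : Function.Bijective (algebraMap (Localization.AtPrime q) A) := by
      refine ⟨hinj, fun a => ?_⟩
      obtain ⟨b, a', hb⟩ := h1 a
      exact ⟨b, by rw [hb, hh]; simp⟩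
    exact (pf_loc_poly (τ := τ) q).of_equiv (mapEquiv τ (RingEquiv.ofBijective _ hb))
  intro m E hE
  have hrad : maximalIdeal A ≤ (QI E hE).radical := by
    rw [Ideal.radical_eq_sInf]
    refine le_sInf ?_
    rintro p ⟨hp, hpp⟩
    by_contra hlt
    have hpm : p < maximalIdeal A :=
      lt_of_le_of_ne (IsLocalRing.le_maximalIdeal hpp.ne_top) (fun he => hlt (he ▸ le_rfl))
    have hht : (maximalIdeal (Localization.AtPrime p)).height < n := by
      have e1 := IsLocalRing.maximalIdeal_height_eq_ringKrullDim (R := Localization.AtPrime p)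
      rw [IsLocalization.AtPrime.ringKrullDim_eq_height p (Localization.AtPrime p)] at e1
      have e2 : (maximalIdeal (Localization.AtPrime p)).height = p.height := by exact_mod_cast e1
      rw [e2]
      have e3 : (maximalIdeal A).height ≤ n := ENat.lt_coe_add_one_iff.mp (by exact_mod_cast hn)
      have : (maximalIdeal A).FiniteHeight :=
        ⟨Or.inr (ne_top_of_le_ne_top (ENat.coe_ne_top n) e3)⟩
      have : p.FiniteHeight := ⟨Or.inr (ne_top_of_le_ne_top (ENat.coe_ne_top n)
        ((Ideal.height_mono hpm.le).trans e3))⟩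
      exact (Ideal.height_strict_mono_of_isPrime_of_isPrime hpm).trans_le e3
    haveI : Algebra.EssFiniteType A (Localization.AtPrime p) :=
      Algebra.EssFiniteType.of_isLocalization _ p.primeCompl
    haveI : Algebra.EssFiniteType k (Localization.AtPrime p) := Algebra.EssFiniteType.comp k A _
    haveI : Algebra.FormallySmooth A (Localization.AtPrime p) :=
      Algebra.FormallySmooth.of_isLocalization p.primeCompl
    haveI : Algebra.FormallySmooth k (Localization.AtPrime p) := Algebra.FormallySmooth.comp k A _
    haveI : IsDomain (Localization.AtPrime p) := inferInstance
    obtain ⟨s, hs, hsQ⟩ := exists_mem_QJ p.primeCompl p.primeCompl_le_nonZeroDivisors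
      (L := Localization.AtPrime p) (E := E) (ih _ hht τ _ _ (map_idem hE _))
    exact hs (hp hsQ)
  obtain ⟨N, hN⟩ := hrad hm
  let L := Localization.Away (algebraMap (Localization.AtPrime q) A h)
  have hQ : QJ E (algebraMap (Localization.AtPrime q) A h ^ N) := hN
  have hmv := hQ.mvN_of_isUnit (L := L) (by
    rw [map_pow]
    exact (IsLocalization.Away.algebraMap_isUnit (S := L) (algebraMap _ A h)).pow N)
  refine lindel_patch (L := L) h hinj hh h1 h2 (pf_loc_poly q) hE ?_
  refine hmv.spl (map_idem hE _) (map_idem hE _) ?_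
  have := (PF.of_isLocalRing m _ (map_idem hE (constantCoeff (R := A) (σ := τ)))).map
    ((C (σ := τ)).comp (algebraMap A L))
  have he : E.map (C.comp ((algebraMap A L).comp (constantCoeff (R := A) (σ := τ)))) =
      (E.map (constantCoeff (R := A) (σ := τ))).map ((C (σ := τ)).comp (algebraMap A L)) := by
    ext1 i j; rfl
  exact he ▸ this

end Induction

section LocalEtale

open Polynomial

/-- Structure of essentially étale local algebras, first form. -/
theorem exists_std_etale {B A : Type*} [CommRing B] [CommRing A] [IsNoetherianRing B]
    [IsLocalRing A] [Algebra B A] [Algebra.EssFiniteType B A] [Algebra.FormallyEtale B A] :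
    Module.Flat B A ∧ ∃ (t : A) (F : B[X]), aeval t F = 0 ∧ IsUnit (aeval t (derivative F)) ∧
      ∀ a : A, ∃ u s : B[X], IsUnit (aeval t s) ∧ aeval t s * a = aeval t u := by
  let A0 := Algebra.EssFiniteType.subalgebra B A
  let P : Ideal A0 := (maximalIdeal A).comap (algebraMap A0 A)
  have hPle : Algebra.EssFiniteType.submonoid B A ≤ P.primeCompl := by
    intro x hx hxP
    exact hxP hx
  have hPu : ∀ r ∈ P.primeCompl, IsUnit (algebraMap A0 A r) := by
    intro r hr
    by_contra h
    exact hr h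
  haveI : IsLocalization P.primeCompl A :=
    IsLocalization.of_le (Algebra.EssFiniteType.submonoid B A) _ hPle hPu
  haveI : Algebra.FiniteType B A0 := inferInstance
  haveI : Algebra.FinitePresentation B A0 := Algebra.FinitePresentation.of_finiteType.mp inferInstance
  haveI : Algebra.IsEtaleAt B P := by
    refine Algebra.FormallyEtale.of_equiv (A := A) ?_
    exact ((IsLocalization.algEquiv P.primeCompl A (Localization.AtPrime P)).restrictScalars B)
  obtain ⟨f, hf, hstd⟩ := Algebra.IsEtaleAt.exists_isStandardEtale (R := B) P
  let A1 := Localization.Away f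
  have hfu : IsUnit (algebraMap A0 A f) := hPu f hf
  letI : Algebra A1 A := (IsLocalization.Away.lift f hfu).toAlgebra
  haveI : IsScalarTower A0 A1 A := IsScalarTower.of_algebraMap_eq fun x => by
    exact (IsLocalization.Away.lift_eq f hfu x).symm
  haveI : IsScalarTower B A1 A := IsScalarTower.of_algebraMap_eq fun x => by
    rw [IsScalarTower.algebraMap_apply B A0 A, IsScalarTower.algebraMap_apply A0 A1 A,
      ← IsScalarTower.algebraMap_apply B A0 A1]
  have hloc : IsLocalization (P.primeCompl.map (algebraMap A0 A1)) A :=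
    IsLocalization.isLocalization_of_submonoid_le A1 A (Submonoid.powers f) P.primeCompl
      (Submonoid.powers_le.mpr hf)
  haveI : Module.Flat A1 A := IsLocalization.flat A (P.primeCompl.map (algebraMap A0 A1))
  haveI : Algebra.Smooth B A1 := inferInstance
  refine ⟨Module.Flat.trans B A1 A, ?_⟩
  obtain ⟨Q⟩ := hstd.nonempty_standardEtalePresentation
  let φ : A1 →ₐ[B] A := IsScalarTower.toAlgHom B A1 A
  have hmap : Q.P.HasMap (φ Q.x) := Q.hasMap.map φ
  refine ⟨φ Q.x, Q.f, hmap.1, hmap.isUnit_derivative_f, fun a => ?_⟩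
  obtain ⟨⟨x, ⟨_, y, hy, rfl⟩⟩, hxy⟩ := IsLocalization.surj (P.primeCompl.map (algebraMap A0 A1)) a
  obtain ⟨p, n, hp⟩ := Q.exists_mul_aeval_x_g_pow_eq_aeval_x x
  obtain ⟨s, n', hs⟩ := Q.exists_mul_aeval_x_g_pow_eq_aeval_x (algebraMap A0 A1 y)
  have hgu : IsUnit (aeval (φ Q.x) Q.g) := hmap.2
  have hp' := congrArg φ hp
  have hs' := congrArg φ hs
  rw [map_mul, map_pow, ← Polynomial.aeval_algHom_apply, ← Polynomial.aeval_algHom_apply] at hp' hs'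
  have hyu : IsUnit (φ (algebraMap A0 A1 y)) := by
    have := hPu y hy
    rwa [IsScalarTower.algebraMap_apply A0 A1 A] at this
  refine ⟨p * Q.g ^ n', s * Q.g ^ n, ?_, ?_⟩
  · rw [map_mul, map_pow, ← hs']
    exact (hyu.mul (hgu.pow _)).mul (hgu.pow _)
  · rw [map_mul, map_mul, map_pow, map_pow, ← hp', ← hs']
    have : a * φ (algebraMap A0 A1 y) = φ x := hxy
    rw [← this]; ring

theorem dvd_aeval_sub {B A : Type*} [CommRing B] [CommRing A] [Algebra B A] (t : A) (p : B[X]) :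
    t ∣ aeval t p - algebraMap B A (p.coeff 0) := by
  conv => rhs; rw [← divX_mul_X_add p]
  simp

theorem local_etale {B A : Type*} [CommRing B] [CommRing A] [IsNoetherianRing B] [IsLocalRing B]
    [IsLocalRing A] [Algebra B A] [IsLocalHom (algebraMap B A)]
    [Algebra.EssFiniteType B A] [Algebra.FormallyEtale B A]
    (hres : ∀ a : A, ∃ b : B, a - algebraMap B A b ∈ maximalIdeal A) :
    ∃ h : B, Function.Injective (algebraMap B A) ∧ algebraMap B A h ∈ maximalIdeal A ∧
      (∀ a : A, ∃ b a', a = algebraMap B A b + algebraMap B A h * a') ∧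
      (∀ b a, algebraMap B A b = algebraMap B A h * a → h ∣ b) := by
  obtain ⟨hflat, t0, F0, hF0, hF0', hsurj0⟩ := exists_std_etale (B := B) (A := A)
  haveI := Module.FaithfullyFlat.of_flat_of_isLocalHom (A := B) (B := A)
  obtain ⟨b0, hb0⟩ := hres t0
  set t := t0 - algebraMap B A b0 with ht
  have hc : ∀ p : B[X], aeval t (p.comp (X + C b0)) = aeval t0 p := by
    intro p; rw [aeval_comp]; simp [ht]
  let F := F0.comp (X + C b0)
  have hF : aeval t F = 0 := by rw [hc, hF0]
  have hF' : IsUnit (aeval t (derivative F)) := by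
    have : derivative F = (derivative F0).comp (X + C b0) := by
      simp [F, derivative_comp]
    rw [this, hc]; exact hF0'
  have hsurj : ∀ a : A, ∃ u s : B[X], IsUnit (aeval t s) ∧ aeval t s * a = aeval t u := by
    intro a
    obtain ⟨u, s, h1, h2⟩ := hsurj0 a
    exact ⟨u.comp (X + C b0), s.comp (X + C b0), by rwa [hc], by rwa [hc, hc]⟩
  let G := F.divX
  have hFG : F = G * X + C (F.coeff 0) := (divX_mul_X_add F).symm
  have hGt : aeval t G * t + algebraMap B A (F.coeff 0) = 0 := by
    have := hF
    rw [hFG] at this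
    simpa using this
  have hGu : IsUnit (aeval t G) := by
    have e : aeval t (derivative F) = aeval t G + aeval t (derivative G) * t := by
      conv_lhs => rw [hFG]
      simp [add_comm]
    rw [e] at hF'
    by_contra hn
    have h1 : aeval t G ∈ maximalIdeal A := hn
    exact (Ideal.add_mem _ h1 (Ideal.mul_mem_left _ _ hb0) : _ ∈ maximalIdeal A) hF'
  obtain ⟨w, hw⟩ := hGu.exists_right_inv
  have hth : t = - (algebraMap B A (F.coeff 0) * w) := by
    have e1 : algebraMap B A (F.coeff 0) = - (aeval t G * t) := by
      rw [← add_eq_zero_iff_eq_neg, add_comm]; exact hGt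
    rw [e1]
    calc t = (aeval t G * w) * t := by rw [hw, one_mul]
      _ = _ := by ring
  refine ⟨F.coeff 0, FaithfulSMul.algebraMap_injective B A, ?_, ?_, ?_⟩
  · have e1 : algebraMap B A (F.coeff 0) = - (aeval t G * t) := by
      rw [← add_eq_zero_iff_eq_neg, add_comm]; exact hGt
    rw [e1]
    exact neg_mem (Ideal.mul_mem_left _ _ hb0)
  · intro a
    obtain ⟨u, s, hs, hsa⟩ := hsurj a
    obtain ⟨cu, hu⟩ := dvd_aeval_sub t u
    obtain ⟨cs, hcs⟩ := dvd_aeval_sub t s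
    have hs0 : IsUnit (algebraMap B A (s.coeff 0)) := by
      by_contra hn
      have h1 : algebraMap B A (s.coeff 0) ∈ maximalIdeal A := hn
      have h2 : aeval t s = t * cs + algebraMap B A (s.coeff 0) := by rw [← hcs]; ring
      refine (?_ : aeval t s ∈ maximalIdeal A) hs
      rw [h2]
      exact Ideal.add_mem _ (Ideal.mul_mem_right _ _ hb0) h1
    obtain ⟨v, hv⟩ := (isUnit_of_map_unit _ _ hs0).exists_right_inv
    have hv' : algebraMap B A (s.coeff 0) * algebraMap B A v = 1 := by rw [← map_mul, hv, map_one]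
    refine ⟨v * u.coeff 0, - w * (algebraMap B A v * (cu - cs * a)), ?_⟩
    have h3 : algebraMap B A (F.coeff 0) * (-w * (algebraMap B A v * (cu - cs * a))) =
      t * (algebraMap B A v * (cu - cs * a)) := by
      conv_rhs => rw [hth]
      ring
    rw [h3, map_mul]
    linear_combination (-a) * hv' + (-a) * algebraMap B A v * hcs + algebraMap B A v * hu
      + algebraMap B A v * hsa
  · intro b a hba
    have : b ∈ ((Ideal.span {F.coeff 0}).map (algebraMap B A)).comap (algebraMap B A) := by
      rw [Ideal.mem_comap, hba, Ideal.map_span, Set.image_singleton]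
      exact Ideal.mul_mem_right _ _ (Ideal.mem_span_singleton_self _)
    rw [Ideal.comap_map_eq_self_of_faithfullyFlat] at this
    exact Ideal.mem_span_singleton.mp this

open MvPolynomial in
theorem lindelData_of_etale {k : Type u} [Field k] {A : Type u} [CommRing A] [IsLocalRing A]
    [Algebra k A] [Algebra.EssFiniteType k A] {σ : Type} [Finite σ]
    [Algebra (MvPolynomial σ k) A] [IsScalarTower k (MvPolynomial σ k) A]
    [Algebra.FormallyEtale (MvPolynomial σ k) A]
    (hres : ∀ a : A, ∃ p s : MvPolynomial σ k, algebraMap _ A s ∉ maximalIdeal A ∧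
      algebraMap _ A s * a - algebraMap _ A p ∈ maximalIdeal A) : LindelData k A := by
  let D := MvPolynomial σ k
  let q : Ideal D := (maximalIdeal A).comap (algebraMap D A)
  let B := Localization.AtPrime q
  have hu : ∀ s : q.primeCompl, IsUnit (algebraMap D A s) := by
    intro s
    by_contra h
    exact s.2 h
  letI : Algebra B A := (IsLocalization.lift (M := q.primeCompl) hu).toAlgebra
  haveI : IsScalarTower D B A := IsScalarTower.of_algebraMap_eq fun x => by
    exact (IsLocalization.lift_eq (M := q.primeCompl) hu x).symm
  haveI : IsScalarTower k B A := IsScalarTower.of_algebraMap_eq fun x => by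
    rw [IsScalarTower.algebraMap_apply k D A, IsScalarTower.algebraMap_apply D B A,
      ← IsScalarTower.algebraMap_apply k D B]
  haveI : Algebra.EssFiniteType B A := Algebra.EssFiniteType.of_comp k B A
  haveI : Algebra.FormallyEtale B A := Algebra.FormallyEtale.localization_base q.primeCompl
  haveI : IsNoetherianRing B := IsLocalization.isNoetherianRing q.primeCompl B inferInstance
  haveI : IsLocalHom (algebraMap B A) := by
    constructor
    intro b hb
    obtain ⟨⟨x, s⟩, hxs⟩ := IsLocalization.surj q.primeCompl b
    have h1 := congrArg (algebraMap B A) hxs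
    rw [map_mul, ← IsScalarTower.algebraMap_apply, ← IsScalarTower.algebraMap_apply] at h1
    have h2 : IsUnit (algebraMap D A x) := by
      rw [← h1]; exact hb.mul (hu s)
    have hx : x ∈ q.primeCompl := fun hxq => hxq h2
    have h3 := IsLocalization.map_units B (⟨x, hx⟩ : q.primeCompl)
    simp only at hxs h3
    rw [← hxs] at h3
    exact isUnit_of_mul_isUnit_left h3
  obtain ⟨h, h1, h2, h3, h4⟩ := local_etale (B := B) (A := A) (by
    intro a
    obtain ⟨p, s, hs, hsp⟩ := hres a
    have hsu := hu ⟨s, hs⟩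
    refine ⟨IsLocalization.mk' B p (⟨s, hs⟩ : q.primeCompl), ?_⟩
    have e : algebraMap D A s * algebraMap B A (IsLocalization.mk' B p (⟨s, hs⟩ : q.primeCompl)) =
        algebraMap D A p := by
      rw [IsScalarTower.algebraMap_apply D B A, IsScalarTower.algebraMap_apply D B A, ← map_mul]
      congr 1
      exact IsLocalization.mk'_spec' B p (⟨s, hs⟩ : q.primeCompl)
    have : algebraMap D A s * (a - algebraMap B A (IsLocalization.mk' B p (⟨s, hs⟩ : q.primeCompl)))
        ∈ maximalIdeal A := by rw [mul_sub, e]; exact hsp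
    exact ((maximalIdeal.isMaximal A).isPrime.mem_or_mem this).resolve_left hs)
  exact ⟨σ, inferInstance, q, inferInstance, inferInstance, h, h1, h2, h3, h4⟩

end LocalEtale

section Structure

open TensorProduct KaehlerDifferential

/-- If `Ω[A⁄k]` has basis `d(y_i)` and `A` is formally smooth, then `k[X] → A` is formally étale. -/
theorem formallyEtale_of_basis {k : Type u} [Field k] {A : Type u} [CommRing A] [Algebra k A]
    [Algebra.FormallySmooth k A] {σ : Type} [Algebra (MvPolynomial σ k) A]
    [IsScalarTower k (MvPolynomial σ k) A]
    (b : Module.Basis σ A Ω[A⁄k])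
    (hb : ∀ i, b i = D k A (algebraMap (MvPolynomial σ k) A (MvPolynomial.X i))) :
    Algebra.FormallyEtale (MvPolynomial σ k) A := by
  let D' := MvPolynomial σ k
  let b0 : Module.Basis σ A (A ⊗[D'] Ω[D'⁄k]) := (mvPolynomialBasis k σ).baseChange A
  have hb0 : ∀ i, mapBaseChange k D' A (b0 i) = b i := by
    intro i
    simp [b0, hb, Module.Basis.baseChange_apply, D']
  have heq : mapBaseChange k D' A = (b0.equiv b (Equiv.refl σ)).toLinearMap := by
    apply b0.ext
    intro i
    rw [hb0]
    simp
  have hbij : Function.Bijective (mapBaseChange k D' A) := by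
    rw [heq]; exact (b0.equiv b (Equiv.refl σ)).bijective
  refine ⟨?_, ?_⟩
  · refine ⟨fun x y => ?_⟩
    obtain ⟨x, rfl⟩ := KaehlerDifferential.map_surjective k D' A x
    obtain ⟨y, rfl⟩ := KaehlerDifferential.map_surjective k D' A y
    rw [(exact_mapBaseChange_map k D' A x).mpr (hbij.2 x),
      (exact_mapBaseChange_map k D' A y).mpr (hbij.2 y)]
  · have h0 : ∀ x : Algebra.H1Cotangent D' A, x = 0 := by
      intro x
      have h1 : Algebra.H1Cotangent.δ k D' A x = 0 := by
        apply hbij.1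
        rw [map_zero]
        exact (Algebra.H1Cotangent.exact_δ_mapBaseChange k D' A _).mpr ⟨x, rfl⟩
      obtain ⟨z, rfl⟩ := (Algebra.H1Cotangent.exact_map_δ k D' A x).mp h1
      rw [Subsingleton.elim z 0, map_zero]
    exact ⟨fun x y => by rw [h0 x, h0 y]⟩

open scoped IntermediateField.algebraAdjoinAdjoin in
/-- The differentials of a separating transcendence basis are linearly independent. -/
theorem li_D_of_sep {k : Type u} [Field k] {K : Type u} [Field K] [Algebra k K] {ι : Type u}
    {v : ι → K} (hv : AlgebraicIndependent k v)
    [Algebra.IsSeparable (IntermediateField.adjoin k (Set.range v)) K] :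
    LinearIndependent K (fun i => D k K (v i)) := by
  let S := Algebra.adjoin k (Set.range v)
  let E := IntermediateField.adjoin k (Set.range v)
  haveI : Algebra.FormallyEtale E K := Algebra.FormallyEtale.of_isSeparable _ _
  haveI : Algebra.FormallyEtale S E := .of_isLocalization (nonZeroDivisors _)
  haveI : Algebra.FormallyEtale S K := .comp _ E _
  let D' := MvPolynomial ι k
  letI : Algebra D' K := (MvPolynomial.aeval v).toAlgebra
  letI : Algebra D' S := hv.aevalEquiv.toAlgHom.toRingHom.toAlgebra
  haveI : IsScalarTower k D' K := IsScalarTower.of_algebraMap_eq fun x =>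
    ((MvPolynomial.aeval v).commutes x).symm
  haveI : IsScalarTower D' S K := IsScalarTower.of_algebraMap_eq fun x => by
    exact (hv.algebraMap_aevalEquiv x).symm
  haveI : Algebra.FormallyEtale D' S := by
    let e : D' ≃ₐ[D'] S := AlgEquiv.ofRingEquiv (f := hv.aevalEquiv.toRingEquiv) (fun x => rfl)
    exact Algebra.FormallyEtale.of_equiv e
  haveI : Algebra.FormallyEtale D' K := .comp _ S _
  let b0 : Module.Basis ι K (K ⊗[D'] Ω[D'⁄k]) := (mvPolynomialBasis k ι).baseChange K
  have h := (b0.map (tensorKaehlerEquivOfFormallyEtale k D' K)).linearIndependent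
  convert h using 1
  ext i
  have : algebraMap D' K (MvPolynomial.X i) = v i := MvPolynomial.aeval_X v i
  simp [b0, Module.Basis.baseChange_apply, D', this]

theorem exists_sep_gen (k : Type u) [Field k] [PerfectField k] (K : Type u) [Field K] [Algebra k K]
    [Algebra.EssFiniteType k K] : ∃ (s : Set K) (α : K),
      LinearIndependent K (fun i : s => D k K (i : K)) ∧
      IntermediateField.adjoin k (insert α s) = ⊤ := by
  obtain ⟨s, hs, H⟩ := exists_isTranscendenceBasis_and_isSeparable_of_perfectField k K
  have hr : Set.range ((↑) : s → K) = (s : Set K) := by simp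
  haveI : Algebra.IsSeparable (IntermediateField.adjoin k (Set.range ((↑) : s → K))) K := by
    rw [hr]; exact H
  have h1 := li_D_of_sep hs.1
  let E := IntermediateField.adjoin k (s : Set K)
  haveI : Algebra.EssFiniteType E K := Algebra.EssFiniteType.of_comp k E K
  haveI : Algebra.FormallyUnramified E K :=
    (Algebra.FormallyUnramified.iff_isSeparable E K).mpr H
  haveI : Module.Finite E K := Algebra.FormallyUnramified.finite_of_free E K
  obtain ⟨α, hα⟩ := Field.exists_primitive_element E K
  refine ⟨s, α, h1, ?_⟩
  have h2 := congrArg (IntermediateField.restrictScalars k) hα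
  rw [IntermediateField.restrictScalars_top, IntermediateField.adjoin_adjoin_left] at h2
  rw [← h2, Set.union_singleton]

theorem exists_frac_of_adjoin {k : Type u} [Field k] {K : Type u} [Field K] [Algebra k K]
    {σ : Type} (y : σ → K) (h : IntermediateField.adjoin k (Set.range y) = ⊤) (x : K) :
    ∃ p s : MvPolynomial σ k, MvPolynomial.aeval y s ≠ 0 ∧
      MvPolynomial.aeval y s * x = MvPolynomial.aeval y p := by
  have hx : x ∈ IntermediateField.adjoin k (Set.range y) := by rw [h]; trivial
  rw [IntermediateField.mem_adjoin_range_iff] at hx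
  obtain ⟨p, s, rfl⟩ := hx
  by_cases hs : MvPolynomial.aeval y s = 0
  · exact ⟨0, 1, by simp, by simp [hs]⟩
  · exact ⟨p, s, hs, by field_simp⟩

theorem structure_thm {k : Type u} [Field k] [PerfectField k] (A : Type u) [CommRing A]
    [IsLocalRing A] [Algebra k A] [Algebra.EssFiniteType k A]
    [Algebra.FormallySmooth k A] (hA : ¬ IsField A) : LindelData k A := by
  classical
  haveI : IsNoetherianRing A := Algebra.EssFiniteType.isNoetherianRing k A
  let K := ResidueField A
  haveI : Algebra.EssFiniteType k K := by
    haveI : Algebra.EssFiniteType A K :=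
      inferInstanceAs (Algebra.EssFiniteType A (A ⧸ maximalIdeal A))
    exact Algebra.EssFiniteType.comp k A K
  obtain ⟨s, α, hs, hα⟩ := exists_sep_gen k K
  let δ : A → K ⊗[A] Ω[A⁄k] := fun a => 1 ⊗ₜ D k A a
  let φ := mapBaseChange k A K
  have hφ : ∀ a, φ (δ a) = D k K (residue A a) := by
    intro a
    simp [φ, δ, K]
  have hsurj : Function.Surjective (algebraMap A K) := residue_surjective
  have hsurj2 : ∀ x : K, ∃ a, algebraMap A K a = x := hsurj
  choose l hl using hsurj2
  have hl' : ∀ x : K, residue A (l x) = x := hl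
  -- a nonzero conormal vector
  obtain ⟨x, hxm, hx0⟩ : ∃ x ∈ maximalIdeal A, δ x ≠ 0 := by
    by_contra hcon
    push Not at hcon
    have hinj := (Algebra.FormallySmooth.kerCotangentToTensor_injective_iff
      (R := k) (P := A) (A := K) hsurj).mpr inferInstance
    have hker : RingHom.ker (algebraMap A K) = maximalIdeal A := IsLocalRing.ker_residue
    have hall : ∀ x (hx : x ∈ RingHom.ker (algebraMap A K)),
        (RingHom.ker (algebraMap A K)).toCotangent ⟨x, hx⟩ = 0 := by
      intro x hx
      apply hinj
      rw [map_zero, kerCotangentToTensor_toCotangent]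
      exact hcon x (hker ▸ hx)
    have hle : maximalIdeal A ≤ maximalIdeal A • maximalIdeal A := by
      intro x hx
      have := hall x (hker.symm ▸ hx)
      rw [Ideal.toCotangent_eq_zero] at this
      have h2 : x ∈ maximalIdeal A ^ 2 := by simpa only [hker] using this
      rwa [pow_two] at h2
    have := Submodule.eq_bot_of_le_smul_of_le_jacobson_bot (maximalIdeal A) (maximalIdeal A)
      (IsNoetherian.noetherian _) hle (IsLocalRing.maximalIdeal_le_jacobson _)
    exact hA (IsLocalRing.isField_iff_maximalIdeal_eq.mpr this)
  have hφx : φ (δ x) = 0 := by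
    rw [hφ, (residue_eq_zero_iff x).mpr hxm, map_zero]
  have hu : LinearIndependent K (fun i : s => δ (l i)) := by
    refine LinearIndependent.of_comp φ ?_
    have : (φ ∘ fun i : s => δ (l i)) = fun i : s => D k K (i : K) := by
      funext i
      simp [hφ, hl']
    rw [this]; exact hs
  have hxspan : δ x ∉ Submodule.span K (Set.range fun i : s => δ (l i)) := by
    intro hmem
    obtain ⟨c, hc⟩ := (Finsupp.mem_span_range_iff_exists_finsupp).mp hmem
    have h1 := congrArg φ hc
    rw [hφx, map_finsuppSum] at h1
    have h2 : Finsupp.linearCombination K (fun i : s => D k K (i : K)) c = 0 := by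
      rw [Finsupp.linearCombination_apply, ← h1]
      refine Finsupp.sum_congr fun i _ => ?_
      rw [map_smul, hφ, hl']
    have h3 : c = 0 := hs (by rw [h2, map_zero])
    rw [h3, Finsupp.sum_zero_index] at hc
    exact hx0 hc.symm
  obtain ⟨a, haα, haspan⟩ : ∃ a, residue A a = α ∧
      δ a ∉ Submodule.span K (Set.range fun i : s => δ (l i)) := by
    by_cases h : δ (l α) ∈ Submodule.span K (Set.range fun i : s => δ (l i))
    · refine ⟨l α + x, ?_, fun h' => hxspan ?_⟩
      · rw [map_add, hl', (residue_eq_zero_iff x).mpr hxm, add_zero]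
      · have : δ x = δ (l α + x) - δ (l α) := by
          simp [δ, TensorProduct.tmul_add]
        rw [this]; exact Submodule.sub_mem _ h' h
    · exact ⟨l α, hl' α, h⟩
  have hlinj : Function.Injective l := fun p q h => by rw [← hl' p, ← hl' q, h]
  have hrange : (Set.range fun i : s => δ (l i)) = δ '' (l '' s) := by
    ext z; simp
  have hLI : LinearIndepOn K δ (insert a (l '' s)) := by
    refine LinearIndepOn.insert ?_ (by rw [← hrange]; exact haspan)
    exact LinearIndepOn.image_of_comp l δ hu
  obtain ⟨b, -, hsb, hbspan, hbLI⟩ := exists_linearIndepOn_extension hLI (Set.subset_univ _)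
  have hspan : Submodule.span K (Set.range (fun i : b => δ i)) = ⊤ := by
    rw [eq_top_iff]
    have h1 : Submodule.span K (Set.range δ) ≤ Submodule.span K (Set.range (fun i : b => δ i)) := by
      rw [Submodule.span_le, ← Set.image_univ]
      have : Set.range (fun i : b => δ i) = δ '' b := by ext z; simp
      rw [this]; exact hbspan
    refine le_trans ?_ h1
    rintro z -
    induction z using TensorProduct.induction_on with
    | zero => exact Submodule.zero_mem _
    | add p q hp hq => exact Submodule.add_mem _ hp hq
    | tmul c w =>
      have hw : w ∈ Submodule.span A (Set.range (D k A)) := by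
        rw [KaehlerDifferential.span_range_derivation]; trivial
      induction hw using Submodule.span_induction with
      | mem w hw =>
        obtain ⟨a', rfl⟩ := hw
        have : c ⊗ₜ[A] D k A a' = c • δ a' := by simp [δ, TensorProduct.smul_tmul']
        rw [this]
        exact Submodule.smul_mem _ _ (Submodule.subset_span ⟨a', rfl⟩)
      | zero => rw [TensorProduct.tmul_zero]; exact Submodule.zero_mem _
      | add p q _ _ hp hq => rw [TensorProduct.tmul_add]; exact Submodule.add_mem _ hp hq
      | smul r p _ hp =>
        rw [TensorProduct.tmul_smul]
        have : r • (c ⊗ₜ[A] p) = (algebraMap A K r) • (c ⊗ₜ[A] p) := by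
          rw [algebraMap_smul]
        rw [this]
        exact Submodule.smul_mem _ _ hp
  have hbij : Function.Bijective (Finsupp.linearCombination A (fun i : b => D k A (i : A))) := by
    apply Module.IsLocalRing.linearCombination_bijective_of_flat
    refine ⟨hbLI, ?_⟩
    rw [← LinearMap.range_eq_top, Finsupp.range_linearCombination]
    exact hspan
  let bas : Module.Basis b A Ω[A⁄k] := Module.Basis.ofRepr (LinearEquiv.ofBijective _ hbij).symm
  have hbas : ∀ i, bas i = D k A (i : A) := by
    intro i
    simp [bas]
  haveI : Finite b := Module.Finite.finite_basis bas
  obtain ⟨N, ⟨ev⟩⟩ := Finite.exists_equiv_fin b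
  let y : Fin N → A := fun i => (ev.symm i : A)
  letI : Algebra (MvPolynomial (Fin N) k) A := (MvPolynomial.aeval y).toAlgebra
  haveI : IsScalarTower k (MvPolynomial (Fin N) k) A := IsScalarTower.of_algebraMap_eq fun x =>
    ((MvPolynomial.aeval y).commutes x).symm
  have hal : ∀ p, algebraMap (MvPolynomial (Fin N) k) A p = MvPolynomial.aeval y p := fun p => rfl
  haveI : Algebra.FormallyEtale (MvPolynomial (Fin N) k) A := by
    refine formallyEtale_of_basis (bas.reindex ev) fun i => ?_
    rw [hal, MvPolynomial.aeval_X, Module.Basis.reindex_apply, hbas]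
  refine lindelData_of_etale (σ := Fin N) fun z => ?_
  have htop : IntermediateField.adjoin k (Set.range fun i => residue A (y i)) = ⊤ := by
    rw [eq_top_iff, ← hα]
    apply IntermediateField.adjoin.mono
    have hmem : ∀ w ∈ b, residue A w ∈ Set.range fun i => residue A (y i) := by
      intro w hw
      exact ⟨ev ⟨w, hw⟩, by simp [y]⟩
    intro w hw
    rcases hw with rfl | hw
    · rw [← haα]; exact hmem _ (hsb (Set.mem_insert _ _))
    · rw [← hl' w]; exact hmem _ (hsb (Set.mem_insert_of_mem _ ⟨w, hw, rfl⟩))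
  obtain ⟨p, s', hs0, hsp⟩ := exists_frac_of_adjoin _ htop (residue A z)
  have hae : ∀ p : MvPolynomial (Fin N) k, residue A (MvPolynomial.aeval y p) =
      MvPolynomial.aeval (fun i => residue A (y i)) p := by
    intro p
    exact (MvPolynomial.aeval_algebraMap_apply (B := K) y p).symm
  refine ⟨p, s', ?_, ?_⟩
  · rw [hal, ← residue_eq_zero_iff, hae]; exact hs0
  · rw [hal, hal, ← residue_eq_zero_iff, map_sub, map_mul, hae, hae, hsp, sub_self]

end Structure

section Regular

theorem map_maximalIdeal_of_surjective {R S : Type*} [CommRing R] [CommRing S] [IsLocalRing R]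
    [IsLocalRing S] (f : R →+* S) (hf : Function.Surjective f) :
    (maximalIdeal R).map f = maximalIdeal S := by
  have h1 : ((maximalIdeal S).comap f).IsMaximal := Ideal.comap_isMaximal_of_surjective f hf
  rw [← IsLocalRing.eq_maximalIdeal h1, Ideal.map_comap_of_surjective f hf]

theorem spanFinrank_quotient_le {R : Type u} [CommRing R] [IsLocalRing R] [IsNoetherianRing R]
    {s b : Set (maximalIdeal R)} (hsb : s ⊆ b) (hb : b.Finite)
    (hspan : Submodule.span (ResidueField R) ((maximalIdeal R).toCotangent '' b) = ⊤)
    {A : Type u} [CommRing A] [IsLocalRing A] (f : R →+* A) (hf : Function.Surjective f)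
    (hs : ∀ z ∈ s, f z = 0) :
    (maximalIdeal A).spanFinrank + s.ncard ≤ b.ncard := by
  rw [CotangentSpace.span_image_eq_top_iff] at hspan
  have h1 : Ideal.span (Subtype.val '' b) = maximalIdeal R := by
    have := congrArg (Submodule.map (maximalIdeal R).subtype) hspan
    rw [Submodule.map_span, Submodule.map_top, Submodule.range_subtype] at this
    exact this
  have h2 : maximalIdeal A = Ideal.span ((fun z : maximalIdeal R => f z) '' (b \ s)) := by
    have h1a : (maximalIdeal R).map f = Ideal.span (f '' (Subtype.val '' b)) :=
      (congrArg (Ideal.map f) h1).symm.trans (Ideal.map_span _ _)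
    rw [← map_maximalIdeal_of_surjective f hf, h1a]
    apply le_antisymm
    · rw [Ideal.span_le]
      rintro _ ⟨_, ⟨z, hz, rfl⟩, rfl⟩
      by_cases hzs : z ∈ s
      · rw [hs z hzs]; exact Ideal.zero_mem _
      · exact Ideal.subset_span ⟨z, ⟨hz, hzs⟩, rfl⟩
    · apply Ideal.span_mono
      rintro _ ⟨z, hz, rfl⟩
      exact ⟨z, ⟨z, hz.1, rfl⟩, rfl⟩
  have hfin : (b \ s).Finite := hb.diff
  have h3 : (maximalIdeal A).spanFinrank ≤ (b \ s).ncard := by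
    rw [h2]
    exact (Submodule.spanFinrank_span_le_ncard_of_finite (hfin.image _)).trans
      (Set.ncard_image_le hfin)
  have h4 := Set.ncard_diff_add_ncard_of_subset hsb hb
  omega

theorem cot_basis {R : Type u} [CommRing R] [IsLocalRing R] [IsNoetherianRing R]
    {s : Set (maximalIdeal R)}
    (hs : LinearIndepOn (ResidueField R) ((maximalIdeal R).toCotangent) s) :
    ∃ b : Set (maximalIdeal R), s ⊆ b ∧ b.Finite ∧
      Submodule.span (ResidueField R) ((maximalIdeal R).toCotangent '' b) = ⊤ ∧
      LinearIndepOn (ResidueField R) ((maximalIdeal R).toCotangent) b ∧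
      b.ncard = Module.finrank (ResidueField R) (CotangentSpace R) := by
  obtain ⟨b, -, hsb, hbspan, hbLI⟩ := exists_linearIndepOn_extension hs (Set.subset_univ _)
  have htop : Submodule.span (ResidueField R) ((maximalIdeal R).toCotangent '' b) = ⊤ := by
    rw [eq_top_iff]
    rintro z -
    obtain ⟨w, rfl⟩ := (maximalIdeal R).toCotangent_surjective z
    exact hbspan ⟨w, trivial, rfl⟩
  let bas : Module.Basis b (ResidueField R) (CotangentSpace R) := Module.Basis.mk hbLI (by
    rw [← htop, Set.image_eq_range])
  have hfin : Finite b := Module.Finite.finite_basis bas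
  refine ⟨b, hsb, Set.toFinite b, htop, hbLI, ?_⟩
  rw [Module.finrank_eq_nat_card_basis bas]
  rfl

theorem li_single {R : Type u} [CommRing R] [IsLocalRing R] {z : maximalIdeal R}
    (hz : (maximalIdeal R).toCotangent z ≠ 0) :
    LinearIndepOn (ResidueField R) ((maximalIdeal R).toCotangent) {z} := by
  have h := linearIndepOn_singleton_iff (R := ResidueField R) (M := CotangentSpace R)
        (v := (maximalIdeal R).toCotangent) (i := z)
  exact h.mpr hz

theorem regular_isDomain (d : ℕ) : ∀ (R : Type u) [CommRing R] [IsLocalRing R] [IsNoetherianRing R],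
    (maximalIdeal R).spanFinrank ≤ d → (d : WithBot ℕ∞) ≤ ringKrullDim R → IsDomain R := by
  induction d with
  | zero =>
    intro R _ _ _ h1 _
    have h2 : (maximalIdeal R).spanFinrank = 0 := by omega
    have h3 : maximalIdeal R = ⊥ := by
      rwa [Submodule.spanFinrank_eq_zero_iff_eq_bot (IsNoetherian.noetherian _)] at h2
    exact (IsLocalRing.isField_iff_maximalIdeal_eq.mpr h3).isDomain
  | succ d ih =>
    intro R _ _ _ h1 h2
    have hdim : (maximalIdeal R).height = ringKrullDim R :=
      IsLocalRing.maximalIdeal_height_eq_ringKrullDim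
    have hht : ((d + 1 : ℕ) : ℕ∞) ≤ (maximalIdeal R).height := by
      rw [← hdim] at h2
      exact_mod_cast h2
    have hne : ¬ maximalIdeal R ≤ maximalIdeal R ^ 2 := by
      intro hle
      have hle' : maximalIdeal R ≤ maximalIdeal R • maximalIdeal R := by
        rw [smul_eq_mul, ← pow_two]; exact hle
      have h0 := Submodule.eq_bot_of_le_smul_of_le_jacobson_bot (maximalIdeal R) (maximalIdeal R)
        (IsNoetherian.noetherian _) hle' (IsLocalRing.maximalIdeal_le_jacobson _)
      haveI := (IsLocalRing.isField_iff_maximalIdeal_eq.mpr h0).isDomain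
      rw [h0, Ideal.height_bot] at hht
      simp at hht
    have hmin : ∀ p ∈ minimalPrimes R, ¬ maximalIdeal R ≤ p := by
      intro p hp hle
      haveI : p.IsPrime := hp.1.1
      have : p = maximalIdeal R := le_antisymm (IsLocalRing.le_maximalIdeal_of_isPrime p) hle
      rw [← this, Ideal.height_eq_zero_iff.mpr hp] at hht
      simp at hht
    have hfin := minimalPrimes.finite_of_isNoetherianRing R
    obtain ⟨x, hxm, hx⟩ : ∃ x ∈ maximalIdeal R, x ∉ maximalIdeal R ^ 2 ∧
        ∀ p ∈ minimalPrimes R, x ∉ p := by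
      by_contra hcon
      push Not at hcon
      have := (Ideal.subset_union_prime' (s := hfin.toFinset) (f := id)
        (a := maximalIdeal R ^ 2) (b := maximalIdeal R ^ 2) (I := maximalIdeal R) (by
          intro p hp
          exact ((Set.Finite.mem_toFinset hfin).mp hp).1.1)).mp (by
          intro x hx
          by_cases hx2 : x ∈ maximalIdeal R ^ 2
          · exact Or.inl (Or.inl hx2)
          · obtain ⟨p, hp, hxp⟩ := hcon x hx hx2
            refine Or.inr ?_
            simp only [Set.mem_iUnion]
            exact ⟨p, by simpa using hp, hxp⟩)
      rcases this with h | h | ⟨p, hp, h⟩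
      · exact hne h
      · exact hne h
      · exact hmin p ((Set.Finite.mem_toFinset hfin).mp hp) h
    obtain ⟨hx2, hxp⟩ := hx
    let A := R ⧸ Ideal.span {x}
    have hle : Ideal.span {x} ≤ maximalIdeal R := by
      rw [Ideal.span_le]; simpa using hxm
    haveI : Nontrivial A := Ideal.Quotient.nontrivial_iff.mpr (fun h => by
      rw [h, top_le_iff] at hle
      exact (maximalIdeal.isMaximal R).ne_top hle)
    haveI : IsLocalRing A := .of_surjective' (Ideal.Quotient.mk _) Ideal.Quotient.mk_surjective
    have hLI : LinearIndepOn (ResidueField R) ((maximalIdeal R).toCotangent)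
        ({⟨x, hxm⟩} : Set (maximalIdeal R)) := by
      refine li_single fun h0 => ?_
      exact hx2 ((Ideal.toCotangent_eq_zero _ _).mp h0)
    obtain ⟨b, hsb, hbfin, hspan, -, hcard⟩ := cot_basis hLI
    have h3 := spanFinrank_quotient_le (A := A) hsb hbfin hspan (Ideal.Quotient.mk (Ideal.span {x}))
      Ideal.Quotient.mk_surjective (by
        rintro z rfl
        exact Ideal.Quotient.eq_zero_iff_mem.mpr (Ideal.mem_span_singleton_self x))
    rw [hcard, ← spanFinrank_maximalIdeal_eq_finrank_cotangentSpace, Set.ncard_singleton] at h3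
    have h4 : ringKrullDim R ≤ ringKrullDim A + 1 := by
      rw [← hdim]
      exact Ideal.height_le_ringKrullDim_quotient_add_one hxm
    have h5 : (d : WithBot ℕ∞) ≤ ringKrullDim A := by
      have h6 := h2.trans h4
      push_cast at h6
      exact (ENat.WithBot.add_le_add_one_right_iff).mp h6
    haveI : IsDomain A := ih A (by omega) h5
    haveI hpr : (Ideal.span {x}).IsPrime := (Ideal.Quotient.isDomain_iff_prime _).mp this
    obtain ⟨p, hp, hpx⟩ := Ideal.exists_minimalPrimes_le (I := ⊥) (J := Ideal.span {x}) bot_le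
    have hpm : p ∈ minimalPrimes R := hp
    haveI : p.IsPrime := hp.1.1
    have hpbot : p = ⊥ := by
      refine Submodule.eq_bot_of_le_smul_of_le_jacobson_bot (maximalIdeal R) p
        (IsNoetherian.noetherian _) ?_ (IsLocalRing.maximalIdeal_le_jacobson _)
      intro y hy
      obtain ⟨z, rfl⟩ := Ideal.mem_span_singleton'.mp (hpx hy)
      have hz : z ∈ p := (hp.1.1.mem_or_mem hy).resolve_right (hxp p hpm)
      rw [mul_comm, ← smul_eq_mul]
      exact Submodule.smul_mem_smul hxm hz
    subst hpbot
    exact IsDomain.of_bot_isPrime R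

end Regular

section SmoothReg

open TensorProduct KaehlerDifferential

theorem conormal_map {k : Type u} [Field k] [PerfectField k] (P : Type u) [CommRing P]
    [IsLocalRing P] [Algebra k P] [Algebra.EssFiniteType k P] [Algebra.FormallySmooth k P]
    (I : Ideal P) (hI : RingHom.ker (algebraMap P (ResidueField P)) = I) :
    ∃ g : I.Cotangent →ₗ[P] (ResidueField P) ⊗[P] Ω[P⁄k], Function.Injective g ∧
      ∀ z : I, g (I.toCotangent z) = 1 ⊗ₜ D k P (z : P) := by
  subst hI
  haveI : Algebra.EssFiniteType k (ResidueField P) := by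
    haveI : Algebra.EssFiniteType P (ResidueField P) :=
      inferInstanceAs (Algebra.EssFiniteType P (P ⧸ maximalIdeal P))
    exact Algebra.EssFiniteType.comp k P (ResidueField P)
  refine ⟨kerCotangentToTensor k P (ResidueField P),
    (Algebra.FormallySmooth.kerCotangentToTensor_injective_iff
      (R := k) (P := P) (A := ResidueField P) residue_surjective).mpr inferInstance, fun z => ?_⟩
  exact kerCotangentToTensor_toCotangent k P (ResidueField P) z

theorem li_conormal {k : Type u} [Field k] [PerfectField k] (P : Type u) [CommRing P]
    [IsLocalRing P] [Algebra k P] [Algebra.EssFiniteType k P] [Algebra.FormallySmooth k P]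
    {s : Set (maximalIdeal P)}
    (hs : LinearIndepOn (ResidueField P) ((maximalIdeal P).toCotangent) s) :
    LinearIndepOn (ResidueField P)
      (fun a : P => ((1 : ResidueField P) ⊗ₜ D k P a : ResidueField P ⊗[P] Ω[P⁄k]))
      (Subtype.val '' s) := by
  obtain ⟨g, hg, hgz⟩ := conormal_map (k := k) P (maximalIdeal P) IsLocalRing.ker_residue
  let g' : CotangentSpace P →ₗ[ResidueField P] (ResidueField P) ⊗[P] Ω[P⁄k] :=
    LinearMap.extendScalarsOfSurjective (S := ResidueField P) (M := CotangentSpace P)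
      residue_surjective g
  have h1 : LinearIndependent (ResidueField P)
      (fun i : s => g' ((maximalIdeal P).toCotangent i)) :=
    LinearIndependent.map' (R := ResidueField P) (M := CotangentSpace P) hs g'
      (LinearMap.ker_eq_bot.mpr hg)
  refine LinearIndepOn.image_of_comp Subtype.val _ ?_
  have h2 : (fun i : s => g' ((maximalIdeal P).toCotangent i)) =
    (fun i : s => ((1 : ResidueField P) ⊗ₜ D k P ((i : maximalIdeal P) : P) :
      ResidueField P ⊗[P] Ω[P⁄k])) := funext fun i => hgz i
  rw [h2] at h1
  exact h1

theorem exists_basis_D {k : Type u} [Field k] (P : Type u) [CommRing P]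
    [IsLocalRing P] [Algebra k P] [Algebra.EssFiniteType k P] [Algebra.FormallySmooth k P]
    {s : Set P} (hLI : LinearIndepOn (ResidueField P)
      (fun a : P => ((1 : ResidueField P) ⊗ₜ D k P a : ResidueField P ⊗[P] Ω[P⁄k])) s) :
    ∃ b : Set P, s ⊆ b ∧ ∃ bas : Module.Basis b P Ω[P⁄k], ∀ i, bas i = D k P (i : P) := by
  haveI : IsNoetherianRing P := Algebra.EssFiniteType.isNoetherianRing k P
  let K := ResidueField P
  let δ : P → K ⊗[P] Ω[P⁄k] := fun a => 1 ⊗ₜ D k P a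
  obtain ⟨b, -, hsb, hbspan, hbLI⟩ := exists_linearIndepOn_extension hLI (Set.subset_univ _)
  have hspan : Submodule.span K (Set.range (fun i : b => δ i)) = ⊤ := by
    rw [eq_top_iff]
    have h1 : Submodule.span K (Set.range δ) ≤ Submodule.span K (Set.range (fun i : b => δ i)) := by
      rw [Submodule.span_le, ← Set.image_univ]
      have : Set.range (fun i : b => δ i) = δ '' b := by ext z; simp
      rw [this]; exact hbspan
    refine le_trans ?_ h1
    rintro z -
    induction z using TensorProduct.induction_on with
    | zero => exact Submodule.zero_mem _
    | add p q hp hq => exact Submodule.add_mem _ hp hq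
    | tmul c w =>
      have hw : w ∈ Submodule.span P (Set.range (D k P)) := by
        rw [KaehlerDifferential.span_range_derivation]; trivial
      induction hw using Submodule.span_induction with
      | mem w hw =>
        obtain ⟨a', rfl⟩ := hw
        have : c ⊗ₜ[P] D k P a' = c • δ a' := by simp [δ, TensorProduct.smul_tmul']
        rw [this]
        exact Submodule.smul_mem _ _ (Submodule.subset_span ⟨a', rfl⟩)
      | zero => rw [TensorProduct.tmul_zero]; exact Submodule.zero_mem _
      | add p q _ _ hp hq => rw [TensorProduct.tmul_add]; exact Submodule.add_mem _ hp hq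
      | smul r p _ hp =>
        rw [TensorProduct.tmul_smul]
        have : r • (c ⊗ₜ[P] p) = (algebraMap P K r) • (c ⊗ₜ[P] p) := by
          rw [algebraMap_smul]
        rw [this]
        exact Submodule.smul_mem _ _ hp
  have hbij : Function.Bijective (Finsupp.linearCombination P (fun i : b => D k P (i : P))) := by
    apply Module.IsLocalRing.linearCombination_bijective_of_flat
    refine ⟨hbLI, ?_⟩
    rw [← LinearMap.range_eq_top, Finsupp.range_linearCombination]
    exact hspan
  let bas : Module.Basis b P Ω[P⁄k] := Module.Basis.ofRepr (LinearEquiv.ofBijective _ hbij).symm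
  exact ⟨b, hsb, bas, fun i => by simp [bas]⟩

theorem exists_lift_cotangent {P A : Type u} [CommRing P] [CommRing A] [Algebra P A]
    (hsurj : Function.Surjective (algebraMap P A)) {M : Type u} [AddCommGroup M] [Module P M]
    (g : M →ₗ[P] (RingHom.ker (algebraMap P A)).Cotangent) :
    ∃ l : A ⊗[P] M →ₗ[P] (RingHom.ker (algebraMap P A)).Cotangent,
      ∀ w, l (1 ⊗ₜ w) = g w := by
  let E := RingHom.quotientKerEquivOfSurjective hsurj
  letI : Module A (RingHom.ker (algebraMap P A)).Cotangent :=
    Module.compHom _ (E.symm : A →+* P ⧸ RingHom.ker (algebraMap P A))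
  haveI : IsScalarTower P A (RingHom.ker (algebraMap P A)).Cotangent := by
    refine IsScalarTower.of_algebraMap_smul fun r x => ?_
    have h1 : E.symm (algebraMap P A r) = Ideal.Quotient.mk _ r := by
      rw [RingEquiv.symm_apply_eq]
      rfl
    have h2 : algebraMap P A r • x = (E.symm (algebraMap P A r)) • x := rfl
    rw [h2, h1]
    exact algebraMap_smul (P ⧸ RingHom.ker (algebraMap P A)) r x
  exact ⟨(g.liftBaseChange A).restrictScalars P, fun w => by simp⟩

theorem formallySmooth_of_regular_ker {k : Type u} [Field k] [PerfectField k] (P A : Type u)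
    [CommRing P] [IsLocalRing P] [Algebra k P] [Algebra.EssFiniteType k P]
    [Algebra.FormallySmooth k P] [CommRing A] [Algebra k A] [Algebra P A] [IsScalarTower k P A]
    (hsurj : Function.Surjective (algebraMap P A)) {s : Set (maximalIdeal P)}
    (hs : LinearIndepOn (ResidueField P) ((maximalIdeal P).toCotangent) s)
    (hker : RingHom.ker (algebraMap P A) = Ideal.span (Subtype.val '' s)) :
    Algebra.FormallySmooth k A := by
  classical
  obtain ⟨b, hsb, bas, hbas⟩ := exists_basis_D P (li_conormal (k := k) P hs)
  have hsJ : ∀ z ∈ Subtype.val '' s, z ∈ RingHom.ker (algebraMap P A) := fun z hz => by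
    rw [hker]; exact Ideal.subset_span hz
  let l0 : Ω[P⁄k] →ₗ[P] (RingHom.ker (algebraMap P A)).Cotangent :=
    bas.constr P (fun i : b => if h : (i : P) ∈ Subtype.val '' s then
      (RingHom.ker (algebraMap P A)).toCotangent ⟨i, hsJ _ h⟩ else 0)
  have hl0 : ∀ z (hz : z ∈ Subtype.val '' s), l0 (D k P z) =
      (RingHom.ker (algebraMap P A)).toCotangent ⟨z, hsJ _ hz⟩ := by
    intro z hz
    have h1 := hbas ⟨z, hsb hz⟩
    have h2 : l0 (bas ⟨z, hsb hz⟩) = _ := bas.constr_basis P _ ⟨z, hsb hz⟩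
    rw [h1] at h2
    rw [h2, dif_pos hz]
  obtain ⟨l, hl⟩ := exists_lift_cotangent hsurj l0
  refine (Algebra.FormallySmooth.iff_split_injection (P := P) hsurj).mpr ⟨l, ?_⟩
  have key : ∀ z (hz : z ∈ Ideal.span (Subtype.val '' s))
      (hz2 : z ∈ RingHom.ker (algebraMap P A)),
      l (kerCotangentToTensor k P A ((RingHom.ker (algebraMap P A)).toCotangent ⟨z, hz2⟩)) =
      (RingHom.ker (algebraMap P A)).toCotangent ⟨z, hz2⟩ := by
    intro z hz
    induction hz using Submodule.span_induction with
    | mem z hz =>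
      intro hz2
      rw [kerCotangentToTensor_toCotangent, hl, hl0 z hz]
    | zero =>
      intro hz2
      have : (⟨0, hz2⟩ : RingHom.ker (algebraMap P A)) = 0 := rfl
      rw [this, map_zero, map_zero, map_zero]
    | add x y hx hy ihx ihy =>
      intro hz2
      have hx' : x ∈ RingHom.ker (algebraMap P A) := by rw [hker]; exact hx
      have hy' : y ∈ RingHom.ker (algebraMap P A) := by rw [hker]; exact hy
      have : (⟨x + y, hz2⟩ : RingHom.ker (algebraMap P A)) = ⟨x, hx'⟩ + ⟨y, hy'⟩ := rfl
      rw [this, map_add, map_add, map_add, ihx, ihy]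
    | smul r x hx ihx =>
      intro hz2
      have hx' : x ∈ RingHom.ker (algebraMap P A) := by rw [hker]; exact hx
      have : (⟨r • x, hz2⟩ : RingHom.ker (algebraMap P A)) = r • ⟨x, hx'⟩ := rfl
      rw [this, map_smul, map_smul, map_smul, ihx]
  apply LinearMap.ext
  intro w
  obtain ⟨⟨z, hz⟩, rfl⟩ := (RingHom.ker (algebraMap P A)).toCotangent_surjective w
  exact key z (hker ▸ hz) hz

theorem exists_regular_ker {P A : Type u} [CommRing P] [IsLocalRing P] [IsNoetherianRing P]
    [CommRing A] [IsLocalRing A] (f : P →+* A) (hf : Function.Surjective f) (t : Finset A)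
    (ht : Ideal.span (t : Set A) = maximalIdeal A) (hdim : (t.card : WithBot ℕ∞) = ringKrullDim A) :
    ∃ s : Set (maximalIdeal P),
      LinearIndepOn (ResidueField P) ((maximalIdeal P).toCotangent) s ∧
      RingHom.ker f = Ideal.span (Subtype.val '' s) := by
  classical
  let T : Set (maximalIdeal P) := {z | f z = 0}
  obtain ⟨s, hsT, -, hTspan, hs⟩ := exists_linearIndepOn_extension
    (K := ResidueField P) (V := CotangentSpace P) (v := (maximalIdeal P).toCotangent)
    (s := ∅) (t := T) (linearIndepOn_empty _ _) (Set.empty_subset _)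
  refine ⟨s, hs, ?_⟩
  obtain ⟨b, hsb, hbfin, hbspan, -, hbcard⟩ := cot_basis hs
  have hmem : ∀ a ∈ t, ∃ z : maximalIdeal P, f z = a := by
    intro a ha
    obtain ⟨z, rfl⟩ := hf a
    have h1 : f z ∈ maximalIdeal A := ht ▸ Ideal.subset_span ha
    refine ⟨⟨z, ?_⟩, rfl⟩
    rw [IsLocalRing.mem_maximalIdeal, mem_nonunits_iff] at h1 ⊢
    exact fun h => h1 (h.map f)
  choose! L hL using hmem
  have hm : Ideal.span (Subtype.val '' (T ∪ L '' t)) = maximalIdeal P := by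
    apply le_antisymm
    · rw [Ideal.span_le]
      rintro _ ⟨z, -, rfl⟩
      exact z.2
    · intro z hz
      have h1 : f z ∈ (Ideal.span (Subtype.val '' (L '' (t : Set A)))).map f := by
        have h2 : (t : Set A) ⊆ f '' (Subtype.val '' (L '' (t : Set A))) := by
          intro a ha
          exact ⟨L a, ⟨L a, ⟨a, ha, rfl⟩, rfl⟩, hL a ha⟩
        have h3 : f z ∈ maximalIdeal A := by
          rw [← map_maximalIdeal_of_surjective f hf]
          exact Ideal.mem_map_of_mem f hz
        rw [Ideal.map_span]
        rw [← ht] at h3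
        exact Ideal.span_mono h2 h3
      obtain ⟨w, hw, hwz⟩ := (Ideal.mem_map_iff_of_surjective f hf).mp h1
      have hw2 : w ∈ maximalIdeal P := by
        refine (Ideal.span_le.mpr ?_) hw
        rintro _ ⟨z, -, rfl⟩
        exact z.2
      have h4 : z = (z - w) + w := by ring
      rw [h4]
      refine Ideal.add_mem _ (Ideal.subset_span ⟨⟨z - w, Ideal.sub_mem _ hz hw2⟩, Or.inl ?_, rfl⟩)
        (Ideal.span_mono (Set.image_mono Set.subset_union_right) hw)
      change f (z - w) = 0
      rw [map_sub, hwz, sub_self]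
  have hm2 : Submodule.span P (T ∪ L '' (t : Set A)) = ⊤ := by
    apply Submodule.map_injective_of_injective (f := (maximalIdeal P).subtype)
      Subtype.val_injective
    rw [Submodule.map_span, Submodule.map_top, Submodule.range_subtype]
    exact hm
  have hc1 := (CotangentSpace.span_image_eq_top_iff (R := P)).mpr hm2
  have hc2 : Submodule.span (ResidueField P)
      ((maximalIdeal P).toCotangent '' (s ∪ L '' (t : Set A))) = ⊤ := by
    rw [eq_top_iff, ← hc1, Submodule.span_le, Set.image_union]
    apply Set.union_subset
    · refine hTspan.trans ?_
      exact Submodule.span_mono (Set.image_mono Set.subset_union_left)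
    · refine Set.Subset.trans ?_ Submodule.subset_span
      exact Set.image_mono Set.subset_union_right
  have hm3 := (CotangentSpace.span_image_eq_top_iff (R := P)).mp hc2
  have hm4 : maximalIdeal P = Ideal.span (Subtype.val '' (s ∪ L '' (t : Set A))) := by
    have := congrArg (Submodule.map (maximalIdeal P).subtype) hm3
    rw [Submodule.map_span, Submodule.map_top, Submodule.range_subtype] at this
    exact this.symm
  have hsfin : s.Finite := hbfin.subset hsb
  have hLfin : (L '' (t : Set A)).Finite := t.finite_toSet.image _
  have hLcard : (L '' (t : Set A)).ncard ≤ t.card := by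
    have := Set.ncard_image_le (f := L) t.finite_toSet
    rwa [Set.ncard_coe_finset] at this
  have hbound : b.ncard ≤ s.ncard + t.card := by
    rw [hbcard, ← spanFinrank_maximalIdeal_eq_finrank_cotangentSpace]
    have h1 : (maximalIdeal P).spanFinrank ≤
        (Subtype.val '' (s ∪ L '' (t : Set A)) : Set P).ncard := by
      have h0 := Submodule.spanFinrank_span_le_ncard_of_finite (R := P)
        ((hsfin.union hLfin).image (Subtype.val : maximalIdeal P → P))
      refine le_trans (le_of_eq ?_) h0
      exact congrArg Submodule.spanFinrank hm4
    have h2 := Set.ncard_image_le (f := (Subtype.val : maximalIdeal P → P)) (hsfin.union hLfin)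
    have h3 := Set.ncard_union_le s (L '' (t : Set A))
    omega
  -- the quotient ring
  let J : Ideal P := Ideal.span (Subtype.val '' s)
  have hJker : J ≤ RingHom.ker f := by
    rw [Ideal.span_le]
    rintro _ ⟨z, hz, rfl⟩
    exact hsT hz
  have hJm : J ≤ maximalIdeal P := by
    rw [Ideal.span_le]
    rintro _ ⟨z, hz, rfl⟩
    exact z.2
  haveI : Nontrivial (P ⧸ J) := Ideal.Quotient.nontrivial_iff.mpr (fun h => by
      rw [h, top_le_iff] at hJm
      exact (maximalIdeal.isMaximal P).ne_top hJm)
  haveI : IsLocalRing (P ⧸ J) := .of_surjective' (Ideal.Quotient.mk _) Ideal.Quotient.mk_surjective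
  have hsr := spanFinrank_quotient_le (A := P ⧸ J) hsb hbfin hbspan (Ideal.Quotient.mk J)
      Ideal.Quotient.mk_surjective (fun z hz =>
        Ideal.Quotient.eq_zero_iff_mem.mpr (Ideal.subset_span ⟨z, hz, rfl⟩))
  have hsr2 : (maximalIdeal (P ⧸ J)).spanFinrank ≤ t.card := by omega
  let f' : P ⧸ J →+* A := Ideal.Quotient.lift J f (fun z hz => hJker hz)
  have hf' : Function.Surjective f' := Ideal.Quotient.lift_surjective_of_surjective _ _ hf
  have hd1 : ringKrullDim A ≤ ringKrullDim (P ⧸ J) := ringKrullDim_le_of_surjective f' hf'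
  haveI : IsDomain (P ⧸ J) := regular_isDomain t.card (P ⧸ J) hsr2 (hdim ▸ hd1)
  have hd2 : ringKrullDim (P ⧸ J) ≤ (t.card : WithBot ℕ∞) :=
    (ringKrullDim_le_spanFinrank_maximalIdeal (R := P ⧸ J)).trans (by exact_mod_cast hsr2)
  refine le_antisymm ?_ hJker
  intro z hz
  by_contra hzJ
  have hz0 : Ideal.Quotient.mk J z ≠ 0 := fun h => hzJ (Ideal.Quotient.eq_zero_iff_mem.mp h)
  have hz1 : f' (Ideal.Quotient.mk J z) = 0 := by
    exact (Ideal.Quotient.lift_mk J f _).trans hz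
  have h6 := ringKrullDim_succ_le_of_surjective f' hf' (mem_nonZeroDivisors_of_ne_zero hz0) hz1
  rw [← hdim] at h6
  have h7 := h6.trans hd2
  have h8 : ((t.card + 1 : ℕ) : WithBot ℕ∞) ≤ (t.card : WithBot ℕ∞) := by exact_mod_cast h7
  have h9 : t.card + 1 ≤ t.card := by exact_mod_cast h8
  omega

theorem exists_presentation (k : Type u) [Field k] (A : Type u) [CommRing A] [IsLocalRing A]
    [Algebra k A] [Algebra.EssFiniteType k A] :
    ∃ (P : Type u) (_ : CommRing P) (_ : IsLocalRing P) (_ : Algebra k P) (_ : Algebra P A)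
      (_ : IsScalarTower k P A) (_ : Algebra.EssFiniteType k P) (_ : Algebra.FormallySmooth k P),
      Function.Surjective (algebraMap P A) := by
  obtain ⟨σ, hσ⟩ := (Algebra.essFiniteType_iff k A).mp inferInstance
  let Q := MvPolynomial σ k
  let ae : Q →ₐ[k] A := MvPolynomial.aeval (fun i : σ => (i : A))
  have hrange : ∀ x ∈ Algebra.adjoin k (σ : Set A), ∃ p : Q, ae p = x := by
    intro x hx
    have : Algebra.adjoin k (σ : Set A) = ae.range := by
      rw [← Algebra.adjoin_range_eq_range_aeval]
      simp
    rw [this] at hx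
    exact hx
  let q : Ideal Q := (maximalIdeal A).comap ae.toRingHom
  haveI : q.IsPrime := Ideal.comap_isPrime _ _
  let P := Localization.AtPrime q
  have hunit : ∀ y : q.primeCompl, IsUnit (ae.toRingHom y) := by
    intro y
    by_contra h
    exact y.2 h
  let π : P →+* A := IsLocalization.lift (M := q.primeCompl) hunit
  letI : Algebra P A := π.toAlgebra
  have hπ : ∀ p : Q, algebraMap P A (algebraMap Q P p) = ae p := fun p =>
    IsLocalization.lift_eq hunit p
  haveI : IsScalarTower k P A := IsScalarTower.of_algebraMap_eq fun c => by
    rw [IsScalarTower.algebraMap_apply k Q P, hπ]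
    exact (ae.commutes c).symm
  haveI : Algebra.EssFiniteType Q P := Algebra.EssFiniteType.of_isLocalization P q.primeCompl
  haveI : Algebra.EssFiniteType k P := Algebra.EssFiniteType.comp k Q P
  haveI : Algebra.FormallySmooth Q P := Algebra.FormallySmooth.of_isLocalization q.primeCompl
  haveI : Algebra.FormallySmooth k P := Algebra.FormallySmooth.comp k Q P
  refine ⟨P, inferInstance, inferInstance, inferInstance, inferInstance, inferInstance,
    inferInstance, inferInstance, fun a => ?_⟩
  obtain ⟨t, ht, hu, hat⟩ := hσ a
  obtain ⟨τ, hτ⟩ := hrange t ht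
  obtain ⟨ρ, hρ⟩ := hrange _ hat
  have hτq : τ ∈ q.primeCompl := by
    intro h
    have h2 : ae τ ∈ maximalIdeal A := h
    rw [hτ] at h2
    exact h2 hu
  refine ⟨IsLocalization.mk' P ρ ⟨τ, hτq⟩, ?_⟩
  apply hu.mul_right_cancel
  rw [← hτ, ← hπ τ, ← map_mul]
  have h5 := IsLocalization.mk'_spec P ρ ⟨τ, hτq⟩
  erw [h5]
  rw [hπ, hρ, hπ, hτ]

theorem formallySmooth_of_regular (k : Type u) [Field k] [PerfectField k] (A : Type u) [CommRing A]
    [IsLocalRing A] [Algebra k A] [Algebra.EssFiniteType k A] (hA : IsRegularLocal A) :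
    IsDomain A ∧ Algebra.FormallySmooth k A := by
  obtain ⟨hN, t, ht, hdim⟩ := hA
  refine ⟨regular_isDomain t.card A ?_ hdim.le, ?_⟩
  · rw [← ht]
    refine (Submodule.spanFinrank_span_le_ncard_of_finite t.finite_toSet).trans ?_
    rw [Set.ncard_coe_finset]
  · obtain ⟨P, _, _, _, _, _, _, _, hsurj⟩ := exists_presentation k A
    haveI : IsNoetherianRing P := Algebra.EssFiniteType.isNoetherianRing k P
    obtain ⟨s, hs, hker⟩ := exists_regular_ker (algebraMap P A) hsurj t ht hdim
    exact formallySmooth_of_regular_ker P A hsurj hs hker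

end SmoothReg

section Limit

/-- `L` is a filtered colimit of the `G i`, in elementary terms. -/
structure IsLim {ι : Type v} [Preorder ι] (G : ι → Type u) [∀ i, CommRing (G i)]
    (f : ∀ i j : ι, i ≤ j → G i →+* G j) (L : Type*) [CommRing L] (g : ∀ i, G i →+* L) : Prop where
  comp : ∀ i j l (h : i ≤ j) (h2 : j ≤ l) a, f j l h2 (f i j h a) = f i l (h.trans h2) a
  compat : ∀ i j (h : i ≤ j) a, g j (f i j h a) = g i a
  surj : ∀ x, ∃ i a, g i a = x
  ker : ∀ i a, g i a = 0 → ∃ j, ∃ h : i ≤ j, f i j h a = 0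

variable {ι : Type v} [Preorder ι] [IsDirected ι (· ≤ ·)] [Nonempty ι] {G : ι → Type u}
  [∀ i, CommRing (G i)] {f : ∀ i j : ι, i ≤ j → G i →+* G j} {L : Type*} [CommRing L]
  {g : ∀ i, G i →+* L}

theorem IsLim.exists_lift (H : IsLim G f L g) {κ : Type*} [Finite κ] (x : κ → L) :
    ∃ i, ∃ a : κ → G i, ∀ t, g i (a t) = x t := by
  have h := fun t => H.surj (x t)
  choose i a ha using h
  obtain ⟨M, hM⟩ := Finite.exists_le i
  exact ⟨M, fun t => f _ _ (hM t) (a t), fun t => by rw [H.compat, ha]⟩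

theorem IsLim.exists_kill (H : IsLim G f L g) {κ : Type*} [Finite κ] {i : ι} (a : κ → G i)
    (ha : ∀ t, g i (a t) = 0) : ∃ j, ∃ h : i ≤ j, ∀ t, f i j h (a t) = 0 := by
  have h := fun t => H.ker i (a t) (ha t)
  choose j hj hja using h
  obtain ⟨M, hM⟩ := Finite.exists_le j
  obtain ⟨N, hMN, hiN⟩ := exists_ge_ge M i
  refine ⟨N, hiN, fun t => ?_⟩
  rw [← H.comp i (j t) N (hj t) ((hM t).trans hMN), hja, map_zero]

theorem IsLim.mvPolynomial (H : IsLim G f L g) (τ : Type) :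
    IsLim (fun i => MvPolynomial τ (G i)) (fun i j h => MvPolynomial.map (f i j h))
      (MvPolynomial τ L) (fun i => MvPolynomial.map (g i)) where
  comp i j l h h2 a := by
    ext m
    simp only [MvPolynomial.coeff_map]
    exact H.comp i j l h h2 _
  compat i j h a := by
    ext m
    simp only [MvPolynomial.coeff_map]
    exact H.compat i j h _
  surj p := by
    obtain ⟨i, a, ha⟩ := H.exists_lift (fun m : p.support => p.coeff m)
    refine ⟨i, ∑ m : p.support, MvPolynomial.monomial (m : τ →₀ ℕ) (a m), ?_⟩
    rw [map_sum]
    simp only [MvPolynomial.map_monomial, ha]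
    rw [Finset.univ_eq_attach, Finset.sum_attach p.support
      (fun m => MvPolynomial.monomial m (p.coeff m))]
    exact p.support_sum_monomial_coeff
  ker i p hp := by
    obtain ⟨j, h, hj⟩ := H.exists_kill (fun m : p.support => p.coeff m) (fun m => by
      rw [← MvPolynomial.coeff_map, hp, MvPolynomial.coeff_zero])
    refine ⟨j, h, ?_⟩
    ext m
    rw [MvPolynomial.coeff_map, MvPolynomial.coeff_zero]
    by_cases hm : m ∈ p.support
    · exact hj ⟨m, hm⟩
    · rw [MvPolynomial.notMem_support_iff.mp hm, map_zero]

theorem IsLim.pf (H : IsLim G f L g) (hG : ∀ i, PF (G i)) : PF L := by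
  intro m E hE
  obtain ⟨i, a, ha⟩ := H.exists_lift (fun t : Fin m × Fin m => E t.1 t.2)
  let E1 : Matrix (Fin m) (Fin m) (G i) := Matrix.of fun p q => a (p, q)
  have hE1 : E1.map (g i) = E := by
    ext p q
    exact ha (p, q)
  obtain ⟨j, h, hj⟩ := H.exists_kill (fun t : Fin m × Fin m => (E1 * E1 - E1) t.1 t.2) (fun t => by
    have h1 : (E1 * E1 - E1).map (g i) = 0 := by
      rw [Matrix.map_sub _ (map_sub (g i)), Matrix.map_mul, hE1, hE, sub_self]
    exact congrFun (congrFun h1 t.1) t.2)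
  have h2 : E1.map (f i j h) * E1.map (f i j h) = E1.map (f i j h) := by
    rw [← sub_eq_zero, ← Matrix.map_mul, ← Matrix.map_sub _ (map_sub (f i j h))]
    ext p q
    exact hj (p, q)
  have h3 := ((hG j) m _ h2).map (g j)
  have h4 : (E1.map (f i j h)).map (g j) = E := by
    rw [← hE1]
    ext p q
    exact H.compat i j h _
  rwa [h4] at h3

end Limit

section Final

theorem perfect_of_prime (k : Type u) [Field k] (hk : ∀ s : Subfield k, s = ⊤) :
    PerfectField k := by
  obtain ⟨p, hp⟩ := ExpChar.exists k
  haveI := hp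
  haveI : PerfectRing k p := by
    refine PerfectRing.ofSurjective k p ?_
    intro x
    have h1 : x ∈ (frobenius k p).fieldRange := by
      rw [hk (frobenius k p).fieldRange]; trivial
    exact h1
  exact PerfectRing.toPerfectField k p

theorem pf_of_regular (k : Type u) [Field k] [PerfectField k] (A : Type u) [CommRing A]
    [IsLocalRing A] [Algebra k A] [Algebra.EssFiniteType k A] (hA : IsRegularLocal A)
    (τ : Type) [Finite τ] : PF (MvPolynomial τ A) := by
  obtain ⟨h1, h2⟩ := formallySmooth_of_regular k A hA
  haveI : IsNoetherianRing A := hA.1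
  have hfin : (maximalIdeal A).height ≠ ⊤ := Ideal.height_ne_top (maximalIdeal.isMaximal A).ne_top
  obtain ⟨N, hN⟩ := ENat.ne_top_iff_exists.mp hfin
  refine pf_of_struct (k := k) (fun B _ _ _ _ _ _ hB => structure_thm B hB) (N + 1) A ?_ τ
  rw [← hN]
  exact_mod_cast Nat.lt_succ_self N

theorem isLim_directLimit {ι : Type v} [Preorder ι] [IsDirected ι (· ≤ ·)] [Nonempty ι]
    (k : Type u) [Field k] (G : ι → Type u) [∀ i, CommRing (G i)] [∀ i, Algebra k (G i)]
    (f : ∀ i j : ι, i ≤ j → G i →ₐ[k] G j) [DirectedSystem G fun i j h => f i j h] :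
    IsLim G (fun i j h => (f i j h).toRingHom) (Ring.DirectLimit G fun i j h => f i j h)
      (fun i => Ring.DirectLimit.of G (fun i j h => f i j h) i) where
  comp i j l h h2 a := DirectedSystem.map_map (f := fun i j h => f i j h) h h2 a
  compat i j h a := Ring.DirectLimit.of_f (f := fun i j h => f i j h) h a
  surj x := Ring.DirectLimit.exists_of x
  ker i a h := by
    haveI : DirectedSystem G fun i j h => ((f i j h).toRingHom : G i → G j) :=
      inferInstanceAs (DirectedSystem G fun i j h => f i j h)
    exact Ring.DirectLimit.of.zero_exact (f' := fun i j h => (f i j h).toRingHom) h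

end Final

end BQ

/-- If a regular local ring `R` containing a field is a filtered inductive limit of regular
local rings essentially of finite type over the prime field, then every finitely generated
projective module over `R[T₁,…,T_n]` is free (the Bass–Quillen conjecture for `R`). -/
theorem bass_quillen_of_direct_limit (R : Type u) [CommRing R] [IsLocalRing R]
    (hReg : IsRegularLocal R)
    (k : Type u) [Field k] [Algebra k R] (hk : ∀ s : Subfield k, s = ⊤)
    (ι : Type v) [Preorder ι] [IsDirected ι (· ≤ ·)] [Nonempty ι]
    (G : ι → Type u) [∀ i, CommRing (G i)] [∀ i, IsLocalRing (G i)]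
    (hGreg : ∀ i, IsRegularLocal (G i))
    [∀ i, Algebra k (G i)] (hGess : ∀ i, Algebra.EssFiniteType k (G i))
    (f : ∀ i j : ι, i ≤ j → G i →ₐ[k] G j)
    [DirectedSystem G fun i j h => f i j h]
    (e : R ≃+* Ring.DirectLimit G fun i j h => f i j h)
    (n : ℕ) (P : Type u) [AddCommGroup P] [Module (MvPolynomial (Fin n) R) P]
    (hfin : Module.Finite (MvPolynomial (Fin n) R) P)
    (hproj : Module.Projective (MvPolynomial (Fin n) R) P) :
    Module.Free (MvPolynomial (Fin n) R) P := by
  haveI := BQ.perfect_of_prime k hk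
  have h1 : ∀ i, BQ.PF (MvPolynomial (Fin n) (G i)) := fun i => by
    haveI := hGess i
    exact BQ.pf_of_regular k (G i) (hGreg i) (Fin n)
  have h2 := ((BQ.isLim_directLimit k G f).mvPolynomial (Fin n)).pf h1
  have h3 := h2.of_equiv (MvPolynomial.mapEquiv (Fin n) e.symm)
  exact h3.free P
end
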